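/- arXiv:math/9607207 — 4 statements merged into one kernel-verified Lean document; each statement's English description precedes it below -/
import Mathlib

section
/- Let X be a Banach space with a Schauder basis (e_i) such that ‖s_1 + s_2‖ = 1 whenever (s_n) is a spreading model of any normalized block basis of (e_i). Then for every ε > 0 and every ℓ ∈ ℕ there exists m ∈ ℕ such that: for every a ∈ X with ‖a‖ = 1 whose basis coefficients vanish on {1,…,m}, there exist vectors b_1 < b_2 < ⋯ < b_ℓ in the linear span of e_1,…,e_m with ‖b_i‖ = 1 for i ≤ ℓ, such that for all 1 ≤ q ≤ p ≤ ℓ and δ ∈ {0,1}: |‖Σ_{i=q}^p b_i + δ·a‖ − 1| < ε. -/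
/-!
Argue by contradiction. If the claim fails for some `ε` and `ℓ`, there is for every `m` a bad
norm-one vector `a m` whose first `m` coefficients vanish; truncating and normalizing, one obtains a
normalized block sequence `v (M j)` close to `a (M j)`. By the Brunel–Sucheston theorem
(`exists_fastModel`) a subsequence `z` generates a spreading model `s`, and it suffices to show that
`‖∑ i ∈ T, s i‖ = 1` for all nonempty finite `T`: then far-out `v (M k₀), …, v (M k_{ℓ-1})` serve as
`b 0, …, b (ℓ-1)` for the vector `a (M k_ℓ)`, which is therefore not bad.

* Sums of `N` consecutive terms of `z`, once normalized, form a block basis whose spreading model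
  consists of the sums of `N` consecutive terms of `s`. So the hypothesis gives
  `‖s 0 + ⋯ + s (2 ^ q - 1)‖ = 1` for all `q`, by induction (`FastModel.doubling`).
* The norm of `∑ a i • s i` does not change if the `s i` are spread out. Averaging over `2 ^ q`
  positions of one term replaces that term by a vector of norm at most `2 ^ (-q)`, so deleting a
  term does not increase the norm (`FastModel.norm_erase_le`).
* Hence `‖∑ i ∈ T, s i‖` lies between `‖s j‖ = 1` for a `j ∈ T` and the norm of a sum of the first
  `2 ^ q` terms, which is `1` (`FastModel.norm_sum_eq_one`).

The Brunel–Sucheston theorem is proved with iterated limits along a nonprincipal ultrafilter instead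
of Ramsey's theorem. That the spreading model is a basic sequence follows from Banach's theorem that
a Schauder basis has a finite basis constant.
-/

noncomputable section

/-- A basic sequence: there is a constant `C` dominating all projections onto
initial segments. -/
def IsBasicSeq {S : Type*} [NormedAddCommGroup S] [NormedSpace ℝ S] (s : ℕ → S) : Prop :=
  ∃ C : ℝ, ∀ m n : ℕ, m ≤ n → ∀ a : ℕ → ℝ,
    ‖∑ i ∈ Finset.range m, a i • s i‖ ≤ C * ‖∑ i ∈ Finset.range n, a i • s i‖

/-- `s` is a spreading model of `x`. -/
def IsSpreadingModel {X : Type*} [NormedAddCommGroup X] [NormedSpace ℝ X]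
    {S : Type*} [NormedAddCommGroup S] [NormedSpace ℝ S]
    (x : ℕ → X) (s : ℕ → S) : Prop :=
  IsBasicSeq s ∧
  ∃ ε : ℕ → ℝ, (∀ n, 0 < ε n) ∧ Antitone ε ∧ Filter.Tendsto ε Filter.atTop (nhds 0) ∧
    ∀ (n : ℕ) (a : Fin n → ℝ), (∀ i, |a i| ≤ 1) →
      ∀ k : Fin n → ℕ, StrictMono k → (∀ i, n ≤ k i) →
        |‖∑ i, a i • x (k i)‖ - ‖∑ i, a i • s i‖| < ε n

/-- `e` is a Schauder basis of `X`: every vector has a unique representation as a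
norm-convergent series. -/
def IsSchauderBasis {X : Type*} [NormedAddCommGroup X] [NormedSpace ℝ X] (e : ℕ → X) : Prop :=
  ∀ x : X, ∃! a : ℕ → ℝ,
    Filter.Tendsto (fun n => ∑ i ∈ Finset.range n, a i • e i) Filter.atTop (nhds x)

/-- `y` is a block basis of the basis `e`: `y j = ∑_{i ∈ E j} a i • e i` with the
finite sets `E j` nonempty and successive (`max E j < min E (j+1)`), and `y j ≠ 0`. -/
def IsBlockBasis {X : Type*} [NormedAddCommGroup X] [NormedSpace ℝ X]
    (e : ℕ → X) (y : ℕ → X) : Prop :=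
  ∃ (E : ℕ → Finset ℕ) (a : ℕ → ℝ),
    (∀ j, (E j).Nonempty) ∧
    (∀ j, ∀ p ∈ E j, ∀ q ∈ E (j + 1), p < q) ∧
    (∀ j, y j = ∑ i ∈ E j, a i • e i) ∧
    (∀ j, y j ≠ 0)

open Filter Topology

/-! ### The basis constant -/

/-- Banach's theorem that a Schauder basis is a basic sequence. Convergent sequences of partial sums
form a Banach space (a closed subspace of `C(ℕ ∪ {∞}, X)`), and evaluation at `∞` maps it onto `X`,
so the open mapping theorem bounds all partial sums by the norm of their limit. -/
lemma IsSchauderBasis.isBasicSeq {X : Type*} [NormedAddCommGroup X] [NormedSpace ℝ X]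
    [CompleteSpace X] {e : ℕ → X} (he : IsSchauderBasis e) :
    ∃ C : ℝ, 0 < C ∧ ∀ m n : ℕ, m ≤ n → ∀ a : ℕ → ℝ,
      ‖∑ i ∈ Finset.range m, a i • e i‖ ≤ C * ‖∑ i ∈ Finset.range n, a i • e i‖ := by
  let Y : Submodule ℝ C(OnePoint ℕ, X) :=
    { carrier := {S | S ((0 : ℕ) : OnePoint ℕ) = 0 ∧
        ∀ n : ℕ, S ((n + 1 : ℕ) : OnePoint ℕ) - S (n : OnePoint ℕ) ∈ Submodule.span ℝ {e n}}
      zero_mem' := by simp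
      add_mem' := by
        rintro S T ⟨hS, hS'⟩ ⟨hT, hT'⟩
        refine ⟨by simp [hS, hT], fun n => ?_⟩
        have := Submodule.add_mem _ (hS' n) (hT' n)
        simp only [ContinuousMap.add_apply]
        convert this using 1
        abel
      smul_mem' := by
        rintro r S ⟨hS, hS'⟩
        refine ⟨by simp [hS], fun n => ?_⟩
        have := Submodule.smul_mem _ r (hS' n)
        simpa only [ContinuousMap.smul_apply, smul_sub] using this }
  have hYc : IsClosed (Y : Set C(OnePoint ℕ, X)) := by
    have hev : ∀ p : OnePoint ℕ, Continuous fun S : C(OnePoint ℕ, X) => S p :=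
      fun p => continuous_eval_const p
    have : (Y : Set C(OnePoint ℕ, X)) = {S | S ((0 : ℕ) : OnePoint ℕ) = 0} ∩
        ⋂ n : ℕ, {S | S ((n + 1 : ℕ) : OnePoint ℕ) - S (n : OnePoint ℕ) ∈
          (Submodule.span ℝ {e n} : Set X)} := by
      ext S
      simp [Y]
    rw [this]
    refine (isClosed_eq (hev _) continuous_const).inter (isClosed_iInter fun n => ?_)
    exact (Submodule.closed_of_finiteDimensional _).preimage ((hev _).sub (hev _))
  have : CompleteSpace Y := hYc.completeSpace_coe
  let T : Y →L[ℝ] X := (ContinuousMap.evalCLM ℝ (OnePoint.infty : OnePoint ℕ)).comp Y.subtypeL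
  -- members of `Y` are sequences of partial sums
  have hcoef : ∀ S : Y, ∃ a : ℕ → ℝ,
      ∀ n : ℕ, (S : C(OnePoint ℕ, X)) (n : OnePoint ℕ) = ∑ i ∈ Finset.range n, a i • e i := by
    rintro ⟨S, hS, hS'⟩
    choose a ha using fun n => Submodule.mem_span_singleton.1 (hS' n)
    refine ⟨a, fun n => ?_⟩
    induction n with
    | zero => simpa using hS
    | succ n ih =>
      rw [Finset.sum_range_succ, ← ih, ha]
      simp
  have hlim : ∀ S : Y, Tendsto (fun n : ℕ => (S : C(OnePoint ℕ, X)) (n : OnePoint ℕ)) atTop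
      (𝓝 (T S)) := by
    intro S
    have := (OnePoint.continuous_iff_from_nat (S : C(OnePoint ℕ, X))).1
      (S : C(OnePoint ℕ, X)).continuous
    exact this
  have hsurj : Function.Surjective T := by
    intro x
    obtain ⟨a, ha, -⟩ := he x
    let S : C(OnePoint ℕ, X) := OnePoint.continuousMapMkNat _ x ha
    have hSn : ∀ n : ℕ, S (n : OnePoint ℕ) = ∑ i ∈ Finset.range n, a i • e i := fun n => rfl
    refine ⟨⟨S, ?_, fun n => ?_⟩, rfl⟩
    · rw [hSn]; simp
    · rw [hSn, hSn, Finset.sum_range_succ, add_sub_cancel_left]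
      exact Submodule.smul_mem _ _ (Submodule.mem_span_singleton_self _)
  obtain ⟨C, hC, hpre⟩ := T.exists_preimage_norm_le hsurj
  refine ⟨C, hC, fun m n hmn c => ?_⟩
  set x := ∑ i ∈ Finset.range n, c i • e i with hx
  obtain ⟨S, hSx, hSn⟩ := hpre x
  obtain ⟨a, ha⟩ := hcoef S
  have h1 : Tendsto (fun k => ∑ i ∈ Finset.range k, a i • e i) atTop (𝓝 x) := by
    have := hlim S
    rw [hSx] at this
    exact this.congr ha
  let d : ℕ → ℝ := fun i => if i < n then c i else 0
  have hd : ∀ k ≤ n, ∑ i ∈ Finset.range k, d i • e i = ∑ i ∈ Finset.range k, c i • e i := by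
    intro k hk
    refine Finset.sum_congr rfl fun i hi => ?_
    rw [Finset.mem_range] at hi
    simp [d, hi.trans_le hk]
  have h2 : Tendsto (fun k => ∑ i ∈ Finset.range k, d i • e i) atTop (𝓝 x) := by
    refine tendsto_const_nhds.congr' ?_
    filter_upwards [eventually_ge_atTop n] with k hk
    rw [hx, ← hd n le_rfl]
    refine Finset.sum_subset (Finset.range_mono hk) fun i _ hi => ?_
    simp only [Finset.mem_range] at hi
    simp [d, hi]
  have had : a = d := (he x).unique h1 h2
  rw [← hd m hmn, ← had, ← ha m]
  exact ((S : C(OnePoint ℕ, X)).norm_coe_le_norm _).trans hSn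

/-- The basis inequality for a splitting of a finitely supported vector into a head `u` and
a tail `v`. -/
lemma IsSchauderBasis.norm_head_le {X : Type*} [NormedAddCommGroup X] [NormedSpace ℝ X]
    [CompleteSpace X] {e : ℕ → X} (he : IsSchauderBasis e) :
    ∃ C : ℝ, 0 < C ∧ ∀ M : ℕ, ∀ u ∈ Submodule.span ℝ (e '' Set.Iio M),
      ∀ v ∈ Submodule.span ℝ (e '' Set.Ici M), ‖u‖ ≤ C * ‖u + v‖ := by
  obtain ⟨C, hC, h⟩ := he.isBasicSeq
  refine ⟨C, hC, fun M u hu v hv => ?_⟩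
  obtain ⟨l, hl, rfl⟩ := (Finsupp.mem_span_image_iff_linearCombination ℝ).1 hu
  obtain ⟨r, hr, rfl⟩ := (Finsupp.mem_span_image_iff_linearCombination ℝ).1 hv
  rw [Finsupp.mem_supported] at hl hr
  obtain ⟨N, hN⟩ := (l.support ∪ r.support ∪ {M}).exists_nat_subset_range
  have hMN : M ≤ N := by
    have : M ∈ Finset.range N := hN (by simp)
    exact (Finset.mem_range.1 this).le
  have key := h M N hMN fun i => (l + r) i
  have e1 : ∑ i ∈ Finset.range M, (l + r) i • e i = Finsupp.linearCombination ℝ e l := by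
    rw [Finsupp.linearCombination_apply, Finsupp.sum_of_support_subset l (s := Finset.range M)]
    · refine Finset.sum_congr rfl fun i hi => ?_
      have : r i = 0 := by
        by_contra hne
        have : M ≤ i := hr (by simpa using hne)
        simp at hi
        omega
      simp [this]
    · intro i hi
      have : i < M := hl hi
      simpa using this
    · simp
  have e2 : ∑ i ∈ Finset.range N, (l + r) i • e i =
      Finsupp.linearCombination ℝ e l + Finsupp.linearCombination ℝ e r := by
    rw [← map_add, Finsupp.linearCombination_apply,
      Finsupp.sum_of_support_subset (l + r) (s := Finset.range N)]
    · exact Finsupp.support_add.trans ((Finset.subset_union_left).trans hN)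
    · simp
  rwa [e1, e2] at key

/-! ### Iterated ultrafilter limits -/

/-- The limit of a real sequence along a fixed nonprincipal ultrafilter on `ℕ`. -/
def ulim (f : ℕ → ℝ) : ℝ := limUnder (hyperfilter ℕ : Filter ℕ) f

lemma tendsto_ulim {f : ℕ → ℝ} {C : ℝ} (h : ∀ k, |f k| ≤ C) :
    Tendsto f (hyperfilter ℕ : Filter ℕ) (𝓝 (ulim f)) := by
  refine tendsto_nhds_limUnder ?_
  obtain ⟨x, -, hx⟩ := (isCompact_Icc (a := -C) (b := C)).ultrafilter_le_nhds
    ((hyperfilter ℕ).map f) (by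
      rw [Ultrafilter.coe_map, le_principal_iff, mem_map]
      exact univ_mem' fun k => abs_le.1 (h k))
  exact ⟨x, hx⟩

/-- The iterated ultrafilter limit
`lim_{k₀} ⋯ lim_{k_{n-1}} ‖v + a₀ x_{k₀} + ⋯ + a_{n-1} x_{k_{n-1}}‖`. -/
def iterNorm {X : Type*} [NormedAddCommGroup X] [NormedSpace ℝ X] (x : ℕ → X) :
    ℕ → X → (ℕ → ℝ) → ℝ
  | 0, v, _ => ‖v‖
  | n + 1, v, a => ulim fun k => iterNorm x n (v + a 0 • x k) fun i => a (i + 1)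

section iterNorm

variable {X : Type*} [NormedAddCommGroup X] [NormedSpace ℝ X] {x : ℕ → X}

lemma norm_add_smul_le (hx : ∀ k, ‖x k‖ ≤ 1) (v : X) (r : ℝ) (k : ℕ) :
    ‖v + r • x k‖ ≤ ‖v‖ + |r| := by
  refine (norm_add_le _ _).trans ?_
  gcongr
  rw [norm_smul, Real.norm_eq_abs]
  exact mul_le_of_le_one_right (abs_nonneg _) (hx k)

lemma abs_iterNorm_le (hx : ∀ k, ‖x k‖ ≤ 1) (n : ℕ) :
    ∀ (v : X) (a : ℕ → ℝ), |iterNorm x n v a| ≤ ‖v‖ + ∑ i ∈ Finset.range n, |a i| := by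
  induction n with
  | zero => intro v a; simp [iterNorm]
  | succ n ih =>
    intro v a
    have hb : ∀ k, |iterNorm x n (v + a 0 • x k) fun i => a (i + 1)| ≤
        ‖v‖ + ∑ i ∈ Finset.range (n + 1), |a i| := by
      intro k
      refine (ih _ _).trans ?_
      rw [Finset.sum_range_succ']
      linarith [norm_add_smul_le hx v (a 0) k]
    exact le_of_tendsto (tendsto_ulim hb).abs (Eventually.of_forall hb)

lemma tendsto_iterNorm (hx : ∀ k, ‖x k‖ ≤ 1) (n : ℕ) (v : X) (a : ℕ → ℝ) :
    Tendsto (fun k => iterNorm x n (v + a 0 • x k) fun i => a (i + 1))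
      (hyperfilter ℕ : Filter ℕ) (𝓝 (iterNorm x (n + 1) v a)) := by
  refine tendsto_ulim (C := ‖v‖ + ∑ i ∈ Finset.range (n + 1), |a i|) fun k => ?_
  refine (abs_iterNorm_le hx n _ _).trans ?_
  rw [Finset.sum_range_succ']
  linarith [norm_add_smul_le hx v (a 0) k]

lemma abs_iterNorm_sub_le (hx : ∀ k, ‖x k‖ ≤ 1) (n : ℕ) :
    ∀ (v w : X) (a b : ℕ → ℝ), |iterNorm x n v a - iterNorm x n w b| ≤
      ‖v - w‖ + ∑ i ∈ Finset.range n, |a i - b i| := by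
  induction n with
  | zero => intro v w a b; simpa [iterNorm] using abs_norm_sub_norm_le v w
  | succ n ih =>
    intro v w a b
    refine le_of_tendsto ((tendsto_iterNorm hx n v a).sub (tendsto_iterNorm hx n w b)).abs
      (Eventually.of_forall fun k => ?_)
    refine (ih _ _ _ _).trans ?_
    rw [Finset.sum_range_succ']
    have : v + a 0 • x k - (w + b 0 • x k) = v - w + (a 0 - b 0) • x k := by
      rw [sub_smul]; abel
    rw [this]
    linarith [norm_add_smul_le hx (v - w) (a 0 - b 0) k]

/-- The limit defining `iterNorm` is uniform over compact sets of vectors and over all coefficient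
sequences in the cube `[-1, 1]^ℕ`: the functions involved are equicontinuous. -/
lemma eventually_iterNorm (hx : ∀ k, ‖x k‖ ≤ 1) (n : ℕ) {K : Set X} (hK : IsCompact K) {η : ℝ}
    (hη : 0 < η) :
    ∀ᶠ k in (hyperfilter ℕ : Filter ℕ), ∀ v ∈ K, ∀ a : ℕ → ℝ, (∀ i, |a i| ≤ 1) →
      |(iterNorm x n (v + a 0 • x k) fun i => a (i + 1)) - iterNorm x (n + 1) v a| < η := by
  have hcube : IsCompact (Set.pi Set.univ fun _ : ℕ => Set.Icc (-1 : ℝ) 1) :=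
    isCompact_univ_pi fun _ => isCompact_Icc
  have key := (hK.prod hcube).mem_prod_nhdsSet_of_forall (l := (hyperfilter ℕ : Filter ℕ))
    (s := {q : ℕ × (X × (ℕ → ℝ)) |
      |(iterNorm x n (q.2.1 + q.2.2 0 • x q.1) fun i => q.2.2 (i + 1)) -
        iterNorm x (n + 1) q.2.1 q.2.2| < η}) (by
      rintro ⟨v, a⟩ -
      have h1 : ∀ᶠ k in (hyperfilter ℕ : Filter ℕ),
          |(iterNorm x n (v + a 0 • x k) fun i => a (i + 1)) - iterNorm x (n + 1) v a| < η / 2 := by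
        have := (tendsto_iterNorm hx n v a).eventually (Metric.ball_mem_nhds _ (half_pos hη))
        simpa [Real.dist_eq] using this
      have h2 : ∀ᶠ p : X × (ℕ → ℝ) in 𝓝 (v, a),
          ‖p.1 - v‖ + ∑ i ∈ Finset.range (n + 1), |p.2 i - a i| < η / 4 := by
        have hc : Continuous fun p : X × (ℕ → ℝ) =>
            ‖p.1 - v‖ + ∑ i ∈ Finset.range (n + 1), |p.2 i - a i| := by fun_prop
        refine hc.continuousAt.eventually_lt continuousAt_const ?_
        simpa using hη
      filter_upwards [h1.prod_mk h2] with ⟨k, w, b⟩ ⟨hk, hw⟩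
      simp only at hk hw ⊢
      have e1 := abs_iterNorm_sub_le hx (n + 1) w v b a
      have e2 := abs_iterNorm_sub_le hx n (w + b 0 • x k) (v + a 0 • x k)
        (fun i => b (i + 1)) (fun i => a (i + 1))
      have e3 : w + b 0 • x k - (v + a 0 • x k) = w - v + (b 0 - a 0) • x k := by
        rw [sub_smul]; abel
      have e4 := norm_add_smul_le hx (w - v) (b 0 - a 0) k
      rw [e3] at e2
      rw [Finset.sum_range_succ'] at hw e1
      rw [abs_lt] at hk ⊢
      rw [abs_le] at e1 e2
      constructor <;> linarith [e1.1, e1.2, e2.1, e2.2])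
  filter_upwards [Eventually.curry key] with k hk v hv a ha
  exact hk.self_of_nhdsSet (v, a) ⟨hv, fun i _ => abs_le.1 (ha i)⟩

/-- The subsequence supplied by the Brunel–Sucheston theorem, with an explicit rate: norms of
combinations of `n` far-out terms depend on the coefficients only, up to `4⁻ⁿ`. -/
lemma exists_subseq_iterNorm (hx : ∀ k, ‖x k‖ ≤ 1) :
    ∃ φ : ℕ → ℕ, StrictMono φ ∧ ∀ (n : ℕ) (a : ℕ → ℝ), (∀ i, |a i| ≤ 1) →
      ∀ k : ℕ → ℕ, (∀ i j, i < j → j < n → k i < k j) → (∀ i < n, n ≤ k i) →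
        |‖∑ i ∈ Finset.range n, a i • x (φ (k i))‖ - iterNorm x n 0 a| ≤ (1 / 4) ^ n := by
  -- all combinations of `x 0, …, x M` with coefficients in `[-1, 1]`
  let K : ℕ → Set X := fun M => (fun c : ℕ → ℝ => ∑ i ∈ Finset.range (M + 1), c i • x i) ''
    Set.pi Set.univ fun _ : ℕ => Set.Icc (-1 : ℝ) 1
  have hK : ∀ M, IsCompact (K M) := fun M =>
    (isCompact_univ_pi fun _ => isCompact_Icc).image (by fun_prop)
  have hstep : ∀ M : ℕ, ∃ k, M < k ∧ ∀ n ≤ M, ∀ v ∈ K M, ∀ a : ℕ → ℝ, (∀ i, |a i| ≤ 1) →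
      |(iterNorm x n (v + a 0 • x k) fun i => a (i + 1)) - iterNorm x (n + 1) v a| <
        (1 / 8) ^ (M + 1) := by
    intro M
    have h1 : ∀ᶠ k in (hyperfilter ℕ : Filter ℕ), M < k :=
      (Nat.hyperfilter_le_atTop) (eventually_gt_atTop M)
    have h2 : ∀ᶠ k in (hyperfilter ℕ : Filter ℕ), ∀ n ∈ Set.Iic M, ∀ v ∈ K M, ∀ a : ℕ → ℝ,
        (∀ i, |a i| ≤ 1) →
        |(iterNorm x n (v + a 0 • x k) fun i => a (i + 1)) - iterNorm x (n + 1) v a| <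
          (1 / 8) ^ (M + 1) :=
      (eventually_all_finite (Set.finite_Iic M)).2 fun n _ =>
        eventually_iterNorm hx n (hK M) (by positivity)
    exact (h1.and h2).exists
  choose nxt hnxt hgood using hstep
  let φ : ℕ → ℕ := fun j => nxt^[j] 0
  have hφs : ∀ j, φ (j + 1) = nxt (φ j) := fun j => Function.iterate_succ_apply' nxt j 0
  have hφ : StrictMono φ := strictMono_nat_of_lt_succ fun j => by rw [hφs]; exact hnxt _
  refine ⟨φ, hφ, fun n a ha k hk hkn => ?_⟩
  have tele : ∀ r s, r + s = n →
      |iterNorm x s (∑ i ∈ Finset.range r, a i • x (φ (k i))) (fun i => a (i + r)) -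
        iterNorm x n 0 a| ≤ r * (1 / 8) ^ n := by
    intro r
    induction r with
    | zero => intro s hs; obtain rfl : s = n := by omega
              simp
    | succ r ih =>
      intro s hs
      have ih' := ih (s + 1) (by omega)
      obtain ⟨j, hj⟩ : ∃ j, k r = j + 1 := ⟨k r - 1, by have := hkn r (by omega); omega⟩
      have hjn : n ≤ j + 1 := hj ▸ hkn r (by omega)
      have hjM : j ≤ φ j := hφ.id_le j
      have hmem : (∑ i ∈ Finset.range r, a i • x (φ (k i))) ∈ K (φ j) := by
        -- re-index the coefficients by the positions `φ (k i)`
        let c : ℕ → ℝ := fun q => ∑ i ∈ Finset.range r, if φ (k i) = q then a i else 0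
        have hinj : ∀ i < r, ∀ i' < r, φ (k i) = φ (k i') → i = i' := by
          intro i hi i' hi' h
          have h := hφ.injective h
          rcases lt_trichotomy i i' with h' | h' | h'
          · exact absurd h (hk i i' h' (by omega)).ne
          · exact h'
          · exact absurd h (hk i' i h' (by omega)).ne'
        refine ⟨c, fun q _ => ?_, ?_⟩
        · by_cases hq : ∃ i < r, φ (k i) = q
          · obtain ⟨i, hi, rfl⟩ := hq
            have : c (φ (k i)) = a i := by
              simp only [c]
              rw [Finset.sum_eq_single_of_mem i (Finset.mem_range.2 hi)]
              · simp
              · intro i' hi' hne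
                rw [if_neg]
                exact fun h => hne (hinj i' (Finset.mem_range.1 hi') i hi h)
            rw [this]
            exact abs_le.1 (ha i)
          · have : c q = 0 := by
              refine Finset.sum_eq_zero fun i hi => if_neg fun h => hq ⟨i, Finset.mem_range.1 hi, h⟩
            rw [this]
            simp
        · simp only [c, Finset.sum_smul]
          rw [Finset.sum_comm]
          refine Finset.sum_congr rfl fun i hi => ?_
          rw [Finset.mem_range] at hi
          have h1 : k i ≤ j := by have := hk i r hi (by omega); omega
          rw [Finset.sum_eq_single_of_mem (φ (k i))]
          · simp
          · rw [Finset.mem_range]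
            have := hφ.monotone h1
            omega
          · intro q _ hq
            rw [if_neg hq.symm, zero_smul]
      have h1 := hgood (φ j) s (by omega) _ hmem (fun i => a (i + r)) fun i => ha _
      have h2 : ((1 : ℝ) / 8) ^ (φ j + 1) ≤ (1 / 8) ^ n :=
        pow_le_pow_of_le_one (by norm_num) (by norm_num) (by omega)
      rw [Finset.sum_range_succ, hj, hφs]
      have h3 : (fun i => a (i + (r + 1))) = fun i => a (i + 1 + r) := by
        funext i; congr 1; omega
      rw [h3]
      simp only [zero_add] at h1
      refine (abs_sub_le _ _ _).trans ((add_le_add (h1.le.trans h2) ih').trans_eq ?_)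
      push_cast
      ring
  have h0 := tele n 0 rfl
  simp only [iterNorm] at h0
  refine h0.trans ?_
  have h2 : (n : ℝ) ≤ 2 ^ n := by exact_mod_cast Nat.lt_two_pow_self.le
  calc (n : ℝ) * (1 / 8) ^ n ≤ 2 ^ n * (1 / 8) ^ n := by gcongr
    _ = (1 / 4) ^ n := by rw [← mul_pow]; norm_num

end iterNorm

/-! ### Existence of spreading models -/

section Model

variable {X : Type*} [NormedAddCommGroup X] [NormedSpace ℝ X]

lemma tendsto_ulim_linearCombination (z : ℕ → X) (hz : ∀ k, ‖z k‖ ≤ 1) (f : ℕ →₀ ℝ) :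
    Tendsto (fun j => ‖Finsupp.linearCombination ℝ (fun i => z (j + i)) f‖)
      (hyperfilter ℕ : Filter ℕ)
      (𝓝 (ulim fun j => ‖Finsupp.linearCombination ℝ (fun i => z (j + i)) f‖)) := by
  refine tendsto_ulim (C := ∑ i ∈ f.support, |f i|) fun j => ?_
  rw [abs_norm, Finsupp.linearCombination_apply]
  refine (norm_sum_le _ _).trans (Finset.sum_le_sum fun i _ => ?_)
  rw [norm_smul, Real.norm_eq_abs]
  exact mul_le_of_le_one_right (abs_nonneg _) (hz _)

/-- The seminorm `f ↦ lim_j ‖∑ f i • z (j + i)‖` on finitely supported sequences, the limit being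
along an ultrafilter. -/
def limSeminorm (z : ℕ → X) (hz : ∀ k, ‖z k‖ ≤ 1) : Seminorm ℝ (ℕ →₀ ℝ) :=
  have hb := tendsto_ulim_linearCombination z hz
  Seminorm.ofSMulLE
    (fun f => ulim fun j => ‖Finsupp.linearCombination ℝ (fun i => z (j + i)) f‖)
    (tendsto_nhds_unique (hb 0) (by simp))
    (fun f g => le_of_tendsto_of_tendsto' (hb _) ((hb f).add (hb g)) fun j => by
      rw [map_add]; exact norm_add_le _ _)
    (fun r f => le_of_tendsto_of_tendsto' (hb _) ((hb f).const_mul ‖r‖) fun j => by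
      rw [map_smul]; exact norm_smul_le _ _)

/-- A Banach space in `Type` generated by a sequence `s` on which norms are ultrafilter limits of
norms of shifted combinations of `z`: the completion of the finitely supported sequences. -/
lemma exists_limModel (z : ℕ → X) (hz : ∀ k, ‖z k‖ ≤ 1) :
    ∃ (S : Type) (_ : NormedAddCommGroup S) (_ : NormedSpace ℝ S) (_ : CompleteSpace S)
      (s : ℕ → S), ∀ (n : ℕ) (a : ℕ → ℝ) (k : ℕ → ℕ),
        Tendsto (fun j => ‖∑ i ∈ Finset.range n, a i • z (j + k i)‖) (hyperfilter ℕ : Filter ℕ)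
          (𝓝 ‖∑ i ∈ Finset.range n, a i • s (k i)‖) := by
  let p := limSeminorm z hz
  let _ : SeminormedAddCommGroup (ℕ →₀ ℝ) := p.toAddGroupSeminorm.toSeminormedAddCommGroup
  let _ : NormedSpace ℝ (ℕ →₀ ℝ) := { norm_smul_le := fun r f => (map_smul_eq_mul p r f).le }
  refine ⟨UniformSpace.Completion (ℕ →₀ ℝ), inferInstance, inferInstance, inferInstance,
    fun i => ((Finsupp.single i (1 : ℝ) : ℕ →₀ ℝ) : UniformSpace.Completion (ℕ →₀ ℝ)),
    fun n a k => ?_⟩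
  have h := tendsto_ulim_linearCombination z hz (∑ i ∈ Finset.range n, a i • Finsupp.single (k i) (1 : ℝ))
  have h1 : ‖∑ i ∈ Finset.range n, a i •
      ((Finsupp.single (k i) (1 : ℝ) : ℕ →₀ ℝ) : UniformSpace.Completion (ℕ →₀ ℝ))‖ =
      p (∑ i ∈ Finset.range n, a i • Finsupp.single (k i) (1 : ℝ)) := by
    have h2 : ∑ i ∈ Finset.range n, a i •
      ((Finsupp.single (k i) (1 : ℝ) : ℕ →₀ ℝ) : UniformSpace.Completion (ℕ →₀ ℝ)) =
      (UniformSpace.Completion.toComplₗᵢ (𝕜 := ℝ) (E := ℕ →₀ ℝ))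
        (∑ i ∈ Finset.range n, a i • Finsupp.single (k i) (1 : ℝ)) := by
      rw [map_sum]
      refine Finset.sum_congr rfl fun i _ => ?_
      rw [map_smul]
      rfl
    rw [h2, LinearIsometry.norm_map]
    rfl
  rw [h1]
  refine h.congr fun j => ?_
  rw [map_sum]
  congr 1
  refine Finset.sum_congr rfl fun i _ => ?_
  rw [map_smul, Finsupp.linearCombination_single, one_smul]

/-- The data of a spreading model with an explicit rate. The limit clause identifies every norm in
the span of `s`; the second clause is the approximation required of a spreading model, in which `N`
may exceed the number `n` of terms. -/
structure FastModel {S : Type} [NormedAddCommGroup S] [NormedSpace ℝ S] (z : ℕ → X) (s : ℕ → S) :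
    Prop where
  lim : ∀ (n : ℕ) (a : ℕ → ℝ) (k : ℕ → ℕ),
    Tendsto (fun j => ‖∑ i ∈ Finset.range n, a i • z (j + k i)‖) (hyperfilter ℕ : Filter ℕ)
      (𝓝 ‖∑ i ∈ Finset.range n, a i • s (k i)‖)
  approx : ∀ n N : ℕ, n ≤ N → ∀ a : ℕ → ℝ, (∀ i, |a i| ≤ 1) →
    ∀ k : ℕ → ℕ, (∀ i j, i < j → j < n → k i < k j) → (∀ i < n, N ≤ k i) →
      |‖∑ i ∈ Finset.range n, a i • z (k i)‖ - ‖∑ i ∈ Finset.range n, a i • s i‖| ≤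
        2 * (1 / 4) ^ N

/-- The Brunel–Sucheston theorem: every bounded sequence has a subsequence generating a
spreading model. -/
lemma exists_fastModel (x : ℕ → X) (hx : ∀ k, ‖x k‖ ≤ 1) :
    ∃ φ : ℕ → ℕ, StrictMono φ ∧
      ∃ (S : Type) (_ : NormedAddCommGroup S) (_ : NormedSpace ℝ S) (_ : CompleteSpace S)
        (s : ℕ → S), FastModel (fun j => x (φ j)) s := by
  obtain ⟨φ, hφ, happ⟩ := exists_subseq_iterNorm hx
  obtain ⟨S, i1, i2, i3, s, hs⟩ := exists_limModel (fun j => x (φ j)) fun _ => hx _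
  refine ⟨φ, hφ, S, i1, i2, i3, s, hs, fun n N hnN a ha k hk hkN => ?_⟩
  -- pad with zero coefficients to length `N`
  let a' : ℕ → ℝ := fun i => if i < n then a i else 0
  have ha' : ∀ i, |a' i| ≤ 1 := fun i => by
    simp only [a']
    split_ifs
    · exact ha i
    · simp
  have main : ∀ k : ℕ → ℕ, (∀ i j, i < j → j < n → k i < k j) → (∀ i < n, N ≤ k i) →
      |‖∑ i ∈ Finset.range n, a i • x (φ (k i))‖ - iterNorm x N 0 a'| ≤ (1 / 4) ^ N := by
    intro k hk hkN
    let k' : ℕ → ℕ := fun i => if i < n then k i else k (n - 1) + N + 1 + i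
    have hlast : ∀ i < n, k i ≤ k (n - 1) := by
      intro i hi
      rcases (show i ≤ n - 1 by omega).eq_or_lt with h | h
      · rw [h]
      · exact (hk i (n - 1) h (by omega)).le
    have := happ N a' ha' k' (fun i j hij hj => by
        simp only [k']
        split_ifs with h1 h2 h2
        · exact hk i j hij h2
        · have := hlast i h1; omega
        · omega
        · omega) (fun i hi => by
        simp only [k']
        split_ifs with h1
        · exact hkN i h1
        · omega)
    have hsum : ∑ i ∈ Finset.range N, a' i • x (φ (k' i)) =
        ∑ i ∈ Finset.range n, a i • x (φ (k i)) := by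
      symm
      rw [← Finset.sum_subset (Finset.range_mono hnN)]
      · refine Finset.sum_congr rfl fun i hi => ?_
        rw [Finset.mem_range] at hi
        simp [a', k', hi]
      · intro i _ hi
        rw [Finset.mem_range] at hi
        simp [a', hi]
    rwa [hsum] at this
  have h1 := main k hk hkN
  have h2 : |‖∑ i ∈ Finset.range n, a i • s i‖ - iterNorm x N 0 a'| ≤ (1 / 4) ^ N := by
    refine le_of_tendsto ((hs n a fun i => i).sub_const _).abs ?_
    have : ∀ᶠ j in (hyperfilter ℕ : Filter ℕ), N ≤ j :=
      Nat.hyperfilter_le_atTop (eventually_ge_atTop N)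
    filter_upwards [this] with j hj
    exact main (fun i => j + i) (fun i i' h _ => by omega) fun i _ => by omega
  rw [abs_le] at *
  constructor <;> linarith [h1.1, h1.2, h2.1, h2.2]

end Model

/-! ### Block sequences -/

/-- `y` is a block sequence of `e` along the successive intervals `[M j, M (j + 1))`. -/
def IsBlk {X : Type*} [NormedAddCommGroup X] [NormedSpace ℝ X] (e : ℕ → X) (M : ℕ → ℕ)
    (y : ℕ → X) : Prop :=
  StrictMono M ∧ ∀ j, y j ∈ Submodule.span ℝ (e '' Set.Ico (M j) (M (j + 1)))

section Blocks

variable {X : Type*} [NormedAddCommGroup X] [NormedSpace ℝ X] {e : ℕ → X} {M : ℕ → ℕ} {y : ℕ → X}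

lemma IsBlk.mem_span_Ico (hy : IsBlk e M y) {j p q : ℕ} (hp : p ≤ j) (hq : j < q) :
    y j ∈ Submodule.span ℝ (e '' Set.Ico (M p) (M q)) :=
  Submodule.span_mono (Set.image_mono (Set.Ico_subset_Ico (hy.1.monotone hp) (hy.1.monotone hq)))
    (hy.2 j)

lemma IsBlk.exists_coeff (hy : IsBlk e M y) :
    ∃ α : ℕ → ℝ, ∀ j, y j = ∑ i ∈ Finset.Ico (M j) (M (j + 1)), α i • e i := by
  choose l hl hly using fun j => (Finsupp.mem_span_image_iff_linearCombination ℝ).1 (hy.2 j)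
  classical
  -- the intervals are disjoint, so the coefficients of all blocks fit into one sequence
  let α : ℕ → ℝ := fun i => if h : ∃ j, i ∈ Set.Ico (M j) (M (j + 1)) then l h.choose i else 0
  have huniq : ∀ i j j', i ∈ Set.Ico (M j) (M (j + 1)) → i ∈ Set.Ico (M j') (M (j' + 1)) →
      j = j' := by
    intro i j j' h h'
    have h1 := hy.1.lt_iff_lt.1 (h.1.trans_lt h'.2)
    have h2 := hy.1.lt_iff_lt.1 (h'.1.trans_lt h.2)
    omega
  have hα : ∀ j, ∀ i ∈ Set.Ico (M j) (M (j + 1)), α i = l j i := by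
    intro j i hi
    have h : ∃ j, i ∈ Set.Ico (M j) (M (j + 1)) := ⟨j, hi⟩
    simp only [α, dif_pos h]
    rw [huniq i _ j h.choose_spec hi]
  refine ⟨α, fun j => ?_⟩
  rw [← hly j, Finsupp.linearCombination_apply,
    Finsupp.sum_of_support_subset (l j) (s := Finset.Ico (M j) (M (j + 1)))]
  · refine Finset.sum_congr rfl fun i hi => ?_
    rw [hα j i (by simpa using hi)]
  · intro i hi
    have := (Finsupp.mem_supported ℝ _).1 (hl j) hi
    simpa using this
  · simp

lemma IsBlk.isBlockBasis (hy : IsBlk e M y) (hne : ∀ j, y j ≠ 0) : IsBlockBasis e y := by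
  obtain ⟨α, hα⟩ := hy.exists_coeff
  refine ⟨fun j => Finset.Ico (M j) (M (j + 1)), α, fun j => ?_, fun j p hp q hq => ?_, hα, hne⟩
  · rw [Finset.nonempty_Ico]
    exact hy.1 (Nat.lt_succ_self j)
  · rw [Finset.mem_Ico] at hp hq
    exact hp.2.trans_le hq.1

lemma IsBlk.comp (hy : IsBlk e M y) {φ : ℕ → ℕ} (hφ : StrictMono φ) :
    IsBlk e (fun j => M (φ j)) fun j => y (φ j) :=
  ⟨hy.1.comp hφ, fun _ => hy.mem_span_Ico le_rfl (hφ (Nat.lt_succ_self _))⟩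

lemma IsBlk.norm_sum_le (hy : IsBlk e M y) {C : ℝ}
    (hC : ∀ M : ℕ, ∀ u ∈ Submodule.span ℝ (e '' Set.Iio M),
      ∀ v ∈ Submodule.span ℝ (e '' Set.Ici M), ‖u‖ ≤ C * ‖u + v‖)
    {m n : ℕ} (hmn : m ≤ n) (a : ℕ → ℝ) (k : ℕ) :
    ‖∑ i ∈ Finset.range m, a i • y (k + i)‖ ≤ C * ‖∑ i ∈ Finset.range n, a i • y (k + i)‖ := by
  rw [← Finset.sum_range_add_sum_Ico _ hmn]
  refine hC (M (k + m)) _ (Submodule.sum_mem _ fun i hi => Submodule.smul_mem _ _ ?_) _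
    (Submodule.sum_mem _ fun i hi => Submodule.smul_mem _ _ ?_)
  · rw [Finset.mem_range] at hi
    exact Submodule.span_mono (Set.image_mono fun q hq => hq.2)
      (hy.mem_span_Ico (le_refl (k + i)) (by omega : k + i < k + m))
  · rw [Finset.mem_Ico] at hi
    exact Submodule.span_mono (Set.image_mono fun q hq => hq.1)
      (hy.mem_span_Ico (by omega : k + m ≤ k + i) (Nat.lt_succ_self _))

end Blocks

/-! ### Spreading models of block sequences -/

section SpreadingModels

variable {X : Type*} [NormedAddCommGroup X] [NormedSpace ℝ X]
  {S : Type} [NormedAddCommGroup S] [NormedSpace ℝ S] {z : ℕ → X} {s : ℕ → S}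

lemma isSpreadingModel_of_range {y : ℕ → X} (hb : IsBasicSeq s) (ε : ℕ → ℝ) (h0 : ∀ n, 0 < ε n)
    (hanti : Antitone ε) (hlim : Tendsto ε atTop (𝓝 0))
    (h : ∀ (n : ℕ) (a : ℕ → ℝ), (∀ i, |a i| ≤ 1) → ∀ k : ℕ → ℕ,
      (∀ i j, i < j → j < n → k i < k j) → (∀ i < n, n ≤ k i) →
      |‖∑ i ∈ Finset.range n, a i • y (k i)‖ - ‖∑ i ∈ Finset.range n, a i • s i‖| < ε n) :
    IsSpreadingModel y s := by
  refine ⟨hb, ε, h0, hanti, hlim, fun n a ha k hk hkn => ?_⟩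
  have := h n (fun i => if hi : i < n then a ⟨i, hi⟩ else 0) (fun i => by
      split_ifs
      · exact ha _
      · simp)
    (fun i => if hi : i < n then k ⟨i, hi⟩ else 0)
    (fun i j hij hj => by
      have hi := hij.trans hj
      simp only [hi, hj, dif_pos]
      exact hk hij)
    (fun i hi => by
      simp only [hi, dif_pos]
      exact hkn _)
  simpa [Finset.sum_range] using this

lemma sum_range_block {V : Type*} [AddCommGroup V] [Module ℝ V] {N : ℕ} (hN : 0 < N) (a : ℕ → ℝ)
    (g : ℕ → ℕ → V) (n : ℕ) :
    ∑ i ∈ Finset.range n, a i • ∑ l ∈ Finset.range N, g i l =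
      ∑ q ∈ Finset.range (N * n), a (q / N) • g (q / N) (q % N) := by
  induction n with
  | zero => simp
  | succ n ih =>
    rw [Finset.sum_range_succ, ih, Nat.mul_succ, Finset.sum_range_add, Finset.smul_sum]
    congr 1
    refine Finset.sum_congr rfl fun l hl => ?_
    rw [Finset.mem_range] at hl
    rw [Nat.mul_add_div hN, Nat.div_eq_of_lt hl, Nat.mul_add_mod, Nat.mod_eq_of_lt hl, add_zero]

lemma sum_range_block_eq {N : ℕ} (hN : 0 < N) (a : ℕ → ℝ) (n : ℕ) :
    ∑ i ∈ Finset.range n, a i • ∑ l ∈ Finset.range N, s (N * i + l) =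
      ∑ q ∈ Finset.range (N * n), a (q / N) • s q := by
  rw [sum_range_block hN a (fun i l => s (N * i + l))]
  refine Finset.sum_congr rfl fun q _ => ?_
  rw [Nat.div_add_mod]

/-- If `f N = ‖s 0 + ⋯ + s (N - 1)‖` is `1`, then so is `f (2 * N)`: the sums of `N` consecutive
terms of `z`, normalized, have the corresponding sums of `s` as a spreading model. -/
lemma FastModel.doubling [CompleteSpace S] {e : ℕ → X} {M : ℕ → ℕ} (hz : IsBlk e M z)
    (hm : FastModel z s) (hs : IsBasicSeq s)
    (h : ∀ y : ℕ → X, IsBlockBasis e y → (∀ j, ‖y j‖ = 1) →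
      ∀ (S : Type) [NormedAddCommGroup S] [NormedSpace ℝ S] [CompleteSpace S]
        (s : ℕ → S), IsSpreadingModel y s → ‖s 0 + s 1‖ = 1)
    {N : ℕ} (hN : 0 < N) (h1 : ‖∑ l ∈ Finset.range N, s l‖ = 1) :
    ‖∑ l ∈ Finset.range (2 * N), s l‖ = 1 := by
  -- the shift by one block makes the rate applicable to every `u j`
  let u : ℕ → X := fun j => ∑ l ∈ Finset.range N, z (N * (j + 1) + l)
  have hu : ∀ j, |‖u j‖ - 1| ≤ 2 * (1 / 4) ^ (j + 1) := by
    intro j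
    have := hm.approx N (N * (j + 1)) (Nat.le_mul_of_pos_right _ (by omega)) (fun _ => 1)
      (by simp) (fun l => N * (j + 1) + l) (fun i i' h _ => by omega) (fun i _ => by omega)
    simp only [one_smul, h1] at this
    refine this.trans ?_
    have h2 : ((1 : ℝ) / 4) ^ (N * (j + 1)) ≤ (1 / 4) ^ (j + 1) :=
      pow_le_pow_of_le_one (by norm_num) (by norm_num) (Nat.le_mul_of_pos_left _ hN)
    linarith
  have hu0 : ∀ j, 0 < ‖u j‖ := by
    intro j
    have h2 := (abs_le.1 (hu j)).1
    have h3 : ((1 : ℝ) / 4) ^ (j + 1) ≤ (1 / 4) ^ 1 :=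
      pow_le_pow_of_le_one (by norm_num) (by norm_num) (by omega)
    norm_num at h3
    linarith
  let y : ℕ → X := fun j => ‖u j‖⁻¹ • u j
  have hy1 : ∀ j, ‖y j‖ = 1 := fun j => by
    simp only [y]
    rw [norm_smul, norm_inv, norm_norm, inv_mul_cancel₀ (hu0 j).ne']
  have hyu : ∀ j, ‖y j - u j‖ ≤ 2 * (1 / 4) ^ (j + 1) := by
    intro j
    have : y j - u j = (1 - ‖u j‖) • y j := by
      simp only [y]
      rw [sub_smul, one_smul, smul_smul, mul_inv_cancel₀ (hu0 j).ne', one_smul]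
    rw [this, norm_smul, hy1, mul_one, Real.norm_eq_abs, abs_sub_comm]
    exact hu j
  have hyblk : IsBlk e (fun j => M (N * (j + 1))) y := by
    refine ⟨hz.1.comp fun i j hij => ?_, fun j => Submodule.smul_mem _ _ (Submodule.sum_mem _
      fun l hl => hz.mem_span_Ico (by omega) ?_)⟩
    · exact Nat.mul_lt_mul_of_pos_left (by omega) hN
    · rw [Finset.mem_range] at hl
      rw [Nat.mul_succ N (j + 1)]
      omega
  let t : ℕ → S := fun i => ∑ l ∈ Finset.range N, s (N * i + l)
  have ht : ∀ (n : ℕ) (a : ℕ → ℝ), ∑ i ∈ Finset.range n, a i • t i =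
      ∑ q ∈ Finset.range (N * n), a (q / N) • s q := fun n a => sum_range_block_eq hN a n
  have hsp : IsSpreadingModel y t := by
    refine isSpreadingModel_of_range ?_ (fun n => 3 * (1 / 2) ^ n) (fun n => by positivity)
      ?_ ?_ ?_
    · obtain ⟨C, hC⟩ := hs
      refine ⟨C, fun m n hmn a => ?_⟩
      rw [ht, ht]
      exact hC _ _ (Nat.mul_le_mul_left _ hmn) _
    · intro m n hmn
      have := pow_le_pow_of_le_one (by norm_num : (0 : ℝ) ≤ 1 / 2) (by norm_num) hmn
      dsimp only
      linarith
    · simpa using (tendsto_pow_atTop_nhds_zero_of_lt_one (by norm_num : (0 : ℝ) ≤ 1 / 2)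
        (by norm_num)).const_mul 3
    · intro n a ha k hk hkn
      have e1 : ∑ i ∈ Finset.range n, a i • u (k i) = ∑ q ∈ Finset.range (N * n),
          a (q / N) • z (N * (k (q / N) + 1) + q % N) :=
        sum_range_block hN a (fun i l => z (N * (k i + 1) + l)) n
      have hdiv : ∀ q < N * n, q / N < n := fun q hq => Nat.div_lt_of_lt_mul hq
      have h2 := hm.approx (N * n) (N * n) le_rfl (fun q => a (q / N)) (fun q => ha _)
        (fun q => N * (k (q / N) + 1) + q % N) (fun i j hij hj => by
          have hle : i / N ≤ j / N := Nat.div_le_div_right hij.le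
          rcases hle.eq_or_lt with he | hlt
          · have h3 := Nat.div_add_mod i N
            have h4 := Nat.div_add_mod j N
            rw [he] at h3 ⊢
            omega
          · have h3 := hk _ _ hlt (hdiv j hj)
            have h4 : N * (k (i / N) + 1 + 1) ≤ N * (k (j / N) + 1) :=
              Nat.mul_le_mul_left _ (by omega)
            have h5 := Nat.mod_lt i hN
            rw [Nat.mul_succ] at h4
            omega) (fun q hq => by
          have h3 := hkn _ (hdiv q hq)
          have h4 : N * n ≤ N * (k (q / N) + 1) := Nat.mul_le_mul_left _ (by omega)
          omega)
      rw [← ht, ← e1] at h2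
      have h3 : ‖∑ i ∈ Finset.range n, a i • y (k i) - ∑ i ∈ Finset.range n, a i • u (k i)‖ ≤
          n * (2 * (1 / 4) ^ n) := by
        rw [← Finset.sum_sub_distrib]
        refine (norm_sum_le_of_le (f := fun i => a i • y (k i) - a i • u (k i)) _
          (n := fun _ => 2 * (1 / 4) ^ n) fun i hi => ?_).trans (by simp)
        rw [Finset.mem_range] at hi
        rw [← smul_sub, norm_smul, Real.norm_eq_abs]
        have h4 : ((1 : ℝ) / 4) ^ (k i + 1) ≤ (1 / 4) ^ n :=
          pow_le_pow_of_le_one (by norm_num) (by norm_num) (by have := hkn i hi; omega)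
        have h5 := hyu (k i)
        have h6 := mul_le_of_le_one_left (norm_nonneg (y (k i) - u (k i))) (ha i)
        linarith
      have h4 : ((1 : ℝ) / 4) ^ (N * n) ≤ (1 / 4) ^ n :=
        pow_le_pow_of_le_one (by norm_num) (by norm_num) (Nat.le_mul_of_pos_left _ hN)
      have h5 := (abs_norm_sub_norm_le (∑ i ∈ Finset.range n, a i • y (k i))
        (∑ i ∈ Finset.range n, a i • u (k i))).trans h3
      have h6 : ((n : ℝ) + 1) * (1 / 4) ^ n ≤ (1 / 2) ^ n := by
        have h7 : ((n : ℝ) + 1) ≤ 2 ^ n := by exact_mod_cast Nat.lt_two_pow_self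
        calc ((n : ℝ) + 1) * (1 / 4) ^ n ≤ 2 ^ n * (1 / 4) ^ n := by gcongr
          _ = (1 / 2) ^ n := by rw [← mul_pow]; norm_num
      have h8 : (0 : ℝ) < (1 / 2) ^ n := by positivity
      rw [abs_le] at h2 h5
      rw [abs_lt]
      constructor <;> nlinarith [h2.1, h2.2, h5.1, h5.2]
  have hfin := h y (hyblk.isBlockBasis fun j hj => by
    have := hy1 j
    rw [hj, norm_zero] at this
    exact zero_ne_one this) hy1 S t hsp
  have h2 := ht 2 fun _ => 1
  simp only [one_smul, Finset.sum_range_succ, Finset.sum_range_zero, zero_add] at h2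
  rwa [mul_comm, ← h2]

lemma FastModel.norm_spread (hm : FastModel z s) {k : ℕ → ℕ} (hk : StrictMono k) (n : ℕ)
    {a : ℕ → ℝ} (ha : ∀ i, |a i| ≤ 1) :
    ‖∑ i ∈ Finset.range n, a i • s (k i)‖ = ‖∑ i ∈ Finset.range n, a i • s i‖ := by
  refine tendsto_nhds_unique (hm.lim n a k) ?_
  rw [tendsto_iff_norm_sub_tendsto_zero]
  have h0 : Tendsto (fun j : ℕ => 2 * ((1 : ℝ) / 4) ^ j) atTop (𝓝 0) := by
    simpa using (tendsto_pow_atTop_nhds_zero_of_lt_one (by norm_num : (0 : ℝ) ≤ 1 / 4)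
      (by norm_num)).const_mul 2
  refine squeeze_zero' (Eventually.of_forall fun _ => norm_nonneg _) ?_
    (h0.mono_left Nat.hyperfilter_le_atTop)
  refine Nat.hyperfilter_le_atTop ?_
  filter_upwards [eventually_ge_atTop n] with j hj
  exact hm.approx n j hj a ha (fun i => j + k i)
    (fun i i' h _ => Nat.add_lt_add_left (hk h) j) fun i _ => Nat.le_add_right _ _

/-- Deleting one coefficient does not increase the norm. The term `s j` may be spread to any of
`R = 2 ^ q` consecutive positions; averaging over them replaces it by
`R⁻¹ • (s j + ⋯ + s (j + R - 1))`, a vector of norm `R⁻¹`. -/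
lemma FastModel.norm_erase_le (hm : FastModel z s)
    (hpow : ∀ q : ℕ, ‖∑ l ∈ Finset.range (2 ^ q), s l‖ = 1) (n : ℕ)
    {a : ℕ → ℝ} (ha : ∀ i, |a i| ≤ 1) (j : ℕ) :
    ‖∑ i ∈ Finset.range n, (if i = j then 0 else a i) • s i‖ ≤
      ‖∑ i ∈ Finset.range n, a i • s i‖ := by
  have hb : ∀ i, |if i = j then 0 else a i| ≤ 1 := fun i => by
    split_ifs
    · simp
    · exact ha i
  rcases le_or_gt n j with hnj | hjn
  · refine le_of_eq (congrArg _ (Finset.sum_congr rfl fun i hi => ?_))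
    rw [Finset.mem_range] at hi
    rw [if_neg (by omega)]
  set A := ‖∑ i ∈ Finset.range n, a i • s i‖ with hA
  have main : ∀ q : ℕ, ‖∑ i ∈ Finset.range n, (if i = j then 0 else a i) • s i‖ ≤
      A + (1 / 2) ^ q := by
    intro q
    set R := 2 ^ q with hR
    have hRpos : 0 < R := by positivity
    let κ : ℕ → ℕ → ℕ := fun r i => if i < j then i else if i = j then j + r else i + R
    have hκ : ∀ r < R, StrictMono (κ r) := by
      intro r hr i i' hii'
      simp only [κ]
      split_ifs <;> omega
    set w := ∑ i ∈ Finset.range n, (if i = j then 0 else a i) • s (κ 0 i) with hw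
    have hwn : ‖w‖ = ‖∑ i ∈ Finset.range n, (if i = j then 0 else a i) • s i‖ :=
      hm.norm_spread (hκ 0 hRpos) n hb
    rw [← hwn]
    have hr : ∀ r < R, ‖w + a j • s (j + r)‖ = A := by
      intro r hrR
      rw [hA, ← hm.norm_spread (hκ r hrR) n ha]
      congr 1
      have e1 : a j • s (j + r) =
          ∑ i ∈ Finset.range n, (if i = j then a j • s (j + r) else 0) := by
        rw [Finset.sum_ite_eq', if_pos (Finset.mem_range.2 hjn)]
      rw [e1, hw, ← Finset.sum_add_distrib]
      refine Finset.sum_congr rfl fun i _ => ?_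
      by_cases hij : i = j
      · simp [hij, κ]
      · simp [hij, κ]
    have hf : ‖∑ r ∈ Finset.range R, s (j + r)‖ = 1 := by
      have := hm.norm_spread (k := fun r => j + r) (fun _ _ h => Nat.add_lt_add_left h j) R
        (a := fun _ => 1) (by simp)
      simp only [one_smul] at this
      rw [this, hR, hpow q]
    have hsum : ∑ r ∈ Finset.range R, (w + a j • s (j + r)) =
        (R : ℝ) • w + a j • ∑ r ∈ Finset.range R, s (j + r) := by
      rw [Finset.sum_add_distrib, ← Finset.smul_sum, Finset.sum_const, Finset.card_range,
        Nat.cast_smul_eq_nsmul]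
    have h1 : ‖∑ r ∈ Finset.range R, (w + a j • s (j + r))‖ ≤ R * A := by
      refine (norm_sum_le_of_le _ (n := fun _ => A) fun r hr' => ?_).trans (by simp)
      exact (hr r (Finset.mem_range.1 hr')).le
    have h2 : ‖(R : ℝ) • w‖ ≤ R * A + 1 := by
      have h3 : (R : ℝ) • w = ∑ r ∈ Finset.range R, (w + a j • s (j + r)) -
          a j • ∑ r ∈ Finset.range R, s (j + r) := by rw [hsum]; abel
      rw [h3]
      refine (norm_sub_le _ _).trans (add_le_add h1 ?_)
      rw [norm_smul, hf, mul_one]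
      exact ha j
    have hR0 : (0 : ℝ) < R := by exact_mod_cast hRpos
    rw [norm_smul, Real.norm_of_nonneg hR0.le] at h2
    have h4 : ((1 : ℝ) / 2) ^ q = 1 / R := by rw [hR]; push_cast; rw [one_div_pow]
    rw [h4]
    have h5 : (R : ℝ) * ‖w‖ ≤ R * (A + 1 / R) := by
      rw [mul_add, mul_one_div_cancel hR0.ne']
      exact h2
    exact le_of_mul_le_mul_left h5 hR0
  refine ge_of_tendsto' (f := fun q : ℕ => A + (1 / 2) ^ q) (x := atTop) ?_ main
  simpa using (tendsto_pow_atTop_nhds_zero_of_lt_one (by norm_num : (0 : ℝ) ≤ 1 / 2)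
    (by norm_num)).const_add A

lemma FastModel.norm_delete_le (hm : FastModel z s)
    (hpow : ∀ q : ℕ, ‖∑ l ∈ Finset.range (2 ^ q), s l‖ = 1) (n : ℕ)
    {a : ℕ → ℝ} (ha : ∀ i, |a i| ≤ 1) (D : Finset ℕ) :
    ‖∑ i ∈ Finset.range n, (if i ∈ D then 0 else a i) • s i‖ ≤
      ‖∑ i ∈ Finset.range n, a i • s i‖ := by
  induction D using Finset.induction_on with
  | empty => simp
  | insert j D _ ih =>
    refine le_trans (le_of_eq ?_) ((hm.norm_erase_le hpow n
      (a := fun i => if i ∈ D then 0 else a i) (fun i => ?_) j).trans ih)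
    · refine congrArg _ (Finset.sum_congr rfl fun i _ => ?_)
      by_cases h1 : i = j <;> by_cases h2 : i ∈ D <;> simp [h1, h2]
    · split_ifs
      · simp
      · exact ha i

lemma sum_range_ite {T : Finset ℕ} {n : ℕ} (hT : T ⊆ Finset.range n) {V : Type*} [AddCommGroup V]
    [Module ℝ V] (v : ℕ → V) :
    ∑ i ∈ Finset.range n, (if i ∈ T then (1 : ℝ) else 0) • v i = ∑ i ∈ T, v i := by
  simp only [ite_smul, one_smul, zero_smul]
  rw [← Finset.sum_filter, Finset.filter_mem_eq_inter, Finset.inter_eq_right.2 hT]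

lemma FastModel.norm_sum_eq_one (hm : FastModel z s)
    (hpow : ∀ q : ℕ, ‖∑ l ∈ Finset.range (2 ^ q), s l‖ = 1) {T : Finset ℕ} (hT : T.Nonempty) :
    ‖∑ i ∈ T, s i‖ = 1 := by
  obtain ⟨n, hn⟩ := T.exists_nat_subset_range
  have hn' : T ⊆ Finset.range (2 ^ n) := hn.trans (Finset.range_mono Nat.lt_two_pow_self.le)
  apply le_antisymm
  · rw [← hpow n]
    have := hm.norm_delete_le hpow (2 ^ n) (a := fun _ => 1) (by simp)
      (Finset.range (2 ^ n) \ T)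
    simp only [one_smul] at this
    refine le_trans (le_of_eq ?_) this
    rw [← sum_range_ite hn']
    refine congrArg _ (Finset.sum_congr rfl fun i hi => ?_)
    by_cases h : i ∈ T
    · simp [h]
    · simp [h, Finset.mem_range.1 hi]
  · obtain ⟨j, hj⟩ := hT
    have h1 : ‖s j‖ = 1 := by
      have h2 := hm.norm_spread (k := fun i => j + i) (fun _ _ h => Nat.add_lt_add_left h j) 1
        (a := fun _ => 1) (by simp)
      have h3 := hpow 0
      simp only [pow_zero, Finset.sum_range_one, one_smul, add_zero] at h2 h3
      rw [h2, h3]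
    rw [← h1, ← sum_range_ite hn]
    have := hm.norm_delete_le hpow n (a := fun i => if i ∈ T then (1 : ℝ) else 0)
      (fun i => by split_ifs <;> simp) (T.erase j)
    refine le_trans (le_of_eq ?_) this
    have h4 := sum_range_ite (T := {j}) (by simpa using hn hj) s
    rw [Finset.sum_singleton] at h4
    rw [← h4]
    refine congrArg _ (Finset.sum_congr rfl fun i hi => ?_)
    by_cases h : i = j
    · simp [h, hj]
    · by_cases h' : i ∈ T <;> simp [h, h']

end SpreadingModels

/-! ### Sums along subsequences of block sequences -/

/-- Under the hypothesis of the theorem every normalized block sequence has a subsequence in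
which every nonempty subset of the first `L` terms has a sum of norm close to `1`. -/
lemma exists_subseq_sum {X : Type*} [NormedAddCommGroup X] [NormedSpace ℝ X] [CompleteSpace X]
    {e : ℕ → X} (he : IsSchauderBasis e)
    (h : ∀ y : ℕ → X, IsBlockBasis e y → (∀ j, ‖y j‖ = 1) →
      ∀ (S : Type) [NormedAddCommGroup S] [NormedSpace ℝ S] [CompleteSpace S]
        (s : ℕ → S), IsSpreadingModel y s → ‖s 0 + s 1‖ = 1)
    {M : ℕ → ℕ} {y : ℕ → X} (hy : IsBlk e M y) (hy1 : ∀ j, ‖y j‖ = 1) (L : ℕ) {η : ℝ}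
    (hη : 0 < η) :
    ∃ k : ℕ → ℕ, StrictMono k ∧ ∀ T : Finset ℕ, T ⊆ Finset.range L → T.Nonempty →
      |‖∑ i ∈ T, y (k i)‖ - 1| < η := by
  obtain ⟨C, -, hC⟩ := he.norm_head_le
  obtain ⟨φ, hφ, S, _, _, _, s, hm⟩ := exists_fastModel y fun k => (hy1 k).le
  have hz := hy.comp hφ
  have hs : IsBasicSeq s := ⟨C, fun m n hmn a => le_of_tendsto_of_tendsto' (hm.lim m a fun i => i)
    ((hm.lim n a fun i => i).const_mul C) fun j => hz.norm_sum_le hC hmn a j⟩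
  have hpow : ∀ q : ℕ, ‖∑ l ∈ Finset.range (2 ^ q), s l‖ = 1 := by
    intro q
    induction q with
    | zero =>
      have := hm.lim 1 (fun _ => 1) fun i => i
      simp only [Finset.sum_range_one, one_smul, hy1] at this
      simpa using (tendsto_nhds_unique this tendsto_const_nhds)
    | succ q ih =>
      rw [pow_succ']
      exact hm.doubling hz hs h (by positivity) ih
  obtain ⟨N₀, hN₀⟩ := exists_pow_lt_of_lt_one (half_pos hη) (by norm_num : (1 : ℝ) / 4 < 1)
  let N := max N₀ L
  have hN : 2 * ((1 : ℝ) / 4) ^ N < η := by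
    have : ((1 : ℝ) / 4) ^ N ≤ (1 / 4) ^ N₀ :=
      pow_le_pow_of_le_one (by norm_num) (by norm_num) (le_max_left _ _)
    linarith
  refine ⟨fun i => φ (N + i), hφ.comp fun _ _ h => Nat.add_lt_add_left h N, fun T hT hTne => ?_⟩
  have := hm.approx L N (le_max_right _ _) (fun i => if i ∈ T then (1 : ℝ) else 0)
    (fun i => by split_ifs <;> simp) (fun i => N + i) (fun i i' h _ => by omega)
    fun i _ => by omega
  rw [sum_range_ite hT (fun i => y (φ (N + i))), sum_range_ite hT,
    hm.norm_sum_eq_one hpow hTne] at this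
  exact this.trans_lt hN

/-- A norm-one vector whose first `m` coefficients vanish is approximated by finitely supported
norm-one vectors with the same property. -/
lemma exists_finite_approx {X : Type*} [NormedAddCommGroup X] [NormedSpace ℝ X] {e : ℕ → X} {a : X}
    (ha : ‖a‖ = 1) {c : ℕ → ℝ}
    (hc : Tendsto (fun n => ∑ i ∈ Finset.range n, c i • e i) atTop (𝓝 a)) {m : ℕ}
    (hm : ∀ i < m, c i = 0) {η : ℝ} (hη : 0 < η) :
    ∃ N, m < N ∧ ∃ v ∈ Submodule.span ℝ (e '' Set.Ico m N), ‖v‖ = 1 ∧ ‖v - a‖ < η := by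
  have hnorm : Tendsto (fun n => ‖∑ i ∈ Finset.range n, c i • e i‖) atTop (𝓝 1) := ha ▸ hc.norm
  have hlim : Tendsto (fun n => ‖∑ i ∈ Finset.range n, c i • e i‖⁻¹ •
      ∑ i ∈ Finset.range n, c i • e i) atTop (𝓝 a) := by
    simpa using (hnorm.inv₀ one_ne_zero).smul hc
  have h1 := hlim.eventually (Metric.ball_mem_nhds a hη)
  have h2 := hnorm.eventually_const_lt one_half_lt_one
  obtain ⟨N, hN1, hN2, hN3⟩ := (h1.and (h2.and (eventually_gt_atTop m))).exists
  refine ⟨N, hN3, _, Submodule.smul_mem _ _ (Submodule.sum_mem _ fun i hi => ?_), ?_,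
    by simpa [dist_eq_norm] using hN1⟩
  · rcases lt_or_ge i m with h | h
    · rw [hm i h, zero_smul]
      exact Submodule.zero_mem _
    · exact Submodule.smul_mem _ _ (Submodule.subset_span ⟨i, ⟨h, Finset.mem_range.1 hi⟩, rfl⟩)
  · rw [norm_smul, norm_inv, norm_norm, inv_mul_cancel₀]
    linarith

/-- Suppose every spreading model `(s_n)` (in any Banach space) of every normalized
block basis of a Schauder basis `(e_i)` of a Banach space `X` satisfies
`‖s 0 + s 1‖ = 1`.  Then for all `ε > 0` and `ℓ ∈ ℕ` there is `m` such that for every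
norm-one `a ∈ X` whose basis coefficients vanish on the first `m` coordinates, there
are successive norm-one vectors `b 0 < b 1 < ⋯ < b (ℓ-1)` in the span of the first
`m` basis vectors with `|‖∑_{i=q}^p b i + δ • a‖ - 1| < ε` for all `q ≤ p < ℓ` and
`δ ∈ {0, 1}`. -/
theorem stmt6 {X : Type*} [NormedAddCommGroup X] [NormedSpace ℝ X] [CompleteSpace X]
    (e : ℕ → X) (he : IsSchauderBasis e)
    (h : ∀ y : ℕ → X, IsBlockBasis e y → (∀ j, ‖y j‖ = 1) →
      ∀ (S : Type) [NormedAddCommGroup S] [NormedSpace ℝ S] [CompleteSpace S]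
        (s : ℕ → S), IsSpreadingModel y s → ‖s 0 + s 1‖ = 1) :
    ∀ ε : ℝ, 0 < ε → ∀ ℓ : ℕ, ∃ m : ℕ, ∀ a : X, ‖a‖ = 1 →
      (∃ c : ℕ → ℝ,
        Filter.Tendsto (fun n => ∑ i ∈ Finset.range n, c i • e i) Filter.atTop (nhds a) ∧
        ∀ i < m, c i = 0) →
      ∃ (b : Fin ℓ → X) (F : Fin ℓ → Finset ℕ) (c' : ℕ → ℝ),
        (∀ i, (F i).Nonempty) ∧
        (∀ i, ∀ j ∈ F i, j < m) ∧
        (∀ i i' : Fin ℓ, i < i' → ∀ p ∈ F i, ∀ q ∈ F i', p < q) ∧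
        (∀ i, b i = ∑ j ∈ F i, c' j • e j) ∧
        (∀ i, ‖b i‖ = 1) ∧
        ∀ q p : Fin ℓ, q ≤ p → ∀ δ : ℝ, (δ = 0 ∨ δ = 1) →
          |‖(∑ i ∈ Finset.Icc q p, b i) + δ • a‖ - 1| < ε := by
  intro ε hε ℓ
  by_contra hcon
  push Not at hcon
  choose a ha hc hbad using hcon
  choose c hc hc0 using hc
  choose nxt hnxt v hv hv1 hva using fun m =>
    exists_finite_approx (ha m) (hc m) (hc0 m) (half_pos hε)
  let M : ℕ → ℕ := fun j => nxt^[j] 0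
  have hMs : ∀ j, M (j + 1) = nxt (M j) := fun j => Function.iterate_succ_apply' nxt j 0
  have hM : StrictMono M := strictMono_nat_of_lt_succ fun j => by rw [hMs]; exact hnxt _
  have hy : IsBlk e M fun j => v (M j) := ⟨hM, fun j => by rw [hMs]; exact hv _⟩
  obtain ⟨k, hk, hsum⟩ := exists_subseq_sum he h hy (fun j => hv1 _) (ℓ + 1) (half_pos hε)
  obtain ⟨α, hα⟩ := hy.exists_coeff
  -- the bad vector far out, `a (M (k ℓ))`, is tested against earlier blocks
  obtain ⟨q, p, hqp, δ, hδ, hlarge⟩ := hbad (M (k ℓ)) (fun i : Fin ℓ => v (M (k i)))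
    (fun i => Finset.Ico (M (k i)) (M (k i + 1))) α
    (fun i => Finset.nonempty_Ico.2 (hM (Nat.lt_succ_self _)))
    (fun i j hj => (Finset.mem_Ico.1 hj).2.trans_le (hM.monotone (hk i.2)))
    (fun i i' hii' p hp q hq => ((Finset.mem_Ico.1 hp).2.trans_le
      (hM.monotone (hk (Fin.lt_def.1 hii')))).trans_le (Finset.mem_Ico.1 hq).1)
    (fun i => hα _) (fun i => hv1 _)
  have hF : ∑ i ∈ Finset.Icc q p, v (M (k i)) = ∑ i ∈ Finset.Icc (q : ℕ) p, v (M (k i)) := by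
    rw [← Fin.map_valEmbedding_Icc, Finset.sum_map]
    rfl
  rw [hF] at hlarge
  have hsub : Finset.Icc (q : ℕ) p ⊆ Finset.range (ℓ + 1) := fun i hi => by
    have := (Finset.mem_Icc.1 hi).2
    have := p.2
    rw [Finset.mem_range]
    omega
  have hqp' : (q : ℕ) ≤ p := hqp
  rcases hδ with rfl | rfl
  · have := hsum _ hsub (Finset.nonempty_Icc.2 hqp')
    rw [zero_smul, add_zero] at hlarge
    linarith
  · have hnot : ℓ ∉ Finset.Icc (q : ℕ) p := fun hi => by
      have := (Finset.mem_Icc.1 hi).2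
      have := p.2
      omega
    have h1 := hsum (insert ℓ (Finset.Icc (q : ℕ) p))
      (Finset.insert_subset (by simp) hsub) (Finset.insert_nonempty _ _)
    rw [Finset.sum_insert hnot, add_comm] at h1
    have h2 := hva (M (k ℓ))
    rw [one_smul] at hlarge
    set B := ∑ i ∈ Finset.Icc (q : ℕ) p, v (M (k i))
    have h3 := abs_norm_sub_norm_le (B + a (M (k ℓ))) (B + v (M (k ℓ)))
    rw [add_sub_add_left_eq_sub, norm_sub_rev] at h3
    have h4 := abs_sub_le ‖B + a (M (k ℓ))‖ ‖B + v (M (k ℓ))‖ 1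
    linarith
end
end

section
/- Let X be a Banach space with a Schauder basis (e_i) such that ‖s_1 + s_2‖ = 1 whenever (s_n) is a spreading model of any normalized block basis of (e_i), and let ε_i ↓ 0 be positive reals with Σ_{i=1}^∞ ε_i < 1. Then there exist natural numbers 1 = m_0 < m_1 < m_2 < ⋯ such that for every k ∈ ℕ and every a ∈ X with ‖a‖ = 1 whose basis coefficients vanish on {1,…,m_k}, there exist finitely supported vectors x_1 < y_1 ≤ e_{m_1} < x_2 < y_2 ≤ e_{m_2} < ⋯ < x_k < y_k ≤ e_{m_k} (meaning the supports are increasing and max supp(y_i) ≤ m_i) satisfying |‖x_i‖ − 1| < ε_i and |‖y_i‖ − 1| < ε_i for i ≤ k, and for every subset F ⊆ {1,…,k}: ‖Σ_{i∈F} x_i + Σ_{i=1}^k y_i + a‖ ≤ 1 + Σ_{i=1}^k ε_i. -/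
/-!
The proof rests on one consequence of the hypothesis: every normalized block sequence has a
subsequence in which the norm of a sum of any fixed number `p ≥ 1` of late terms tends to `1`
(`exists_subseq_sums`).

To obtain it, a subsequence generating a spreading model `s` is extracted by a Ramsey argument
(`exists_spreadingModel`); the basis constant needed for `s` to be basic comes from the closed graph
theorem (`IsSchauderBasis.exists_proj_bound`). Let `c p = ‖s 0 + ⋯ + s (p - 1)‖`. If `c p = 1`, the
normalized sums of `p` consecutive terms form another normalized block sequence, whose spreading
models also satisfy `‖s 0 + s 1‖ = 1`, so `c (2 * p) = 1` (`limit_double`). Hence `c (2 ^ n) = 1` for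
all `n`. Averaging the last term of a sum of `p + 1` terms over `2 ^ n` positions moves the sum of the
others by at most `O(2 ^ (-n))`, so `c p ≤ c (p + 1)` (`limit_mono`). Both facts give `c p = 1` for all
`p ≥ 1`.

The numbers `m k` are chosen one after the other (`exists_step`). Suppose that `m 0, …, m k` serve all
norm-one vectors supported beyond `m k`, but that no choice `M` of `m (k + 1)` works. Then every `M`
has a bad norm-one vector supported beyond `M`, close to a block `b M`; choosing the `M` successively,
these blocks form a normalized block sequence. By the above, sums of a fixed number of late blocks are
almost of norm one, so each of them has a `k`-tuple of pairs `(x i, y i)`. These tuples lie in a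
compact set, so after colouring them finitely and passing to a Ramsey subsequence, the tuple depends,
up to a small error, only on the number of summands, and two numbers `s + 1 < q + s + 1` of summands
share the same tuple. Taking `q + s + 1` consecutive blocks, the sum of the first `q` is the new `x k`,
the sum of the next `s` is the new `y k`, and the last one approximates a bad vector `a`. Since
`y k + a` and `x k + y k + a` are almost sums of `s + 1` and of `q + s + 1` blocks, the common tuple
serves both, so `a` is not bad.
-/

noncomputable section

open Filter Topology

/-! ### The basis constant and block sequences -/

/-- The partial sum projections of a Schauder basis are uniformly bounded. The map sending `x` to
the bounded sequence of its partial sums is everywhere defined and has closed graph. -/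
theorem IsSchauderBasis.exists_proj_bound {X : Type*} [NormedAddCommGroup X] [NormedSpace ℝ X]
    [CompleteSpace X] {e : ℕ → X} (he : IsSchauderBasis e) :
    ∃ C : ℝ, ∀ (x : X) (a : ℕ → ℝ),
      Tendsto (fun n => ∑ i ∈ Finset.range n, a i • e i) atTop (𝓝 x) →
      ∀ n, ‖∑ i ∈ Finset.range n, a i • e i‖ ≤ C * ‖x‖ := by
  choose κ hκ huniq using he
  have hadd : ∀ x y, κ (x + y) = κ x + κ y := fun x y => by
    refine (huniq _ _ ?_).symm
    simpa [add_smul, Finset.sum_add_distrib] using (hκ x).add (hκ y)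
  have hsmul : ∀ (t : ℝ) x, κ (t • x) = t • κ x := fun t x => by
    refine (huniq _ _ ?_).symm
    simpa [mul_smul, Finset.smul_sum] using (hκ x).const_smul t
  have hbdd : ∀ x, ∃ M, ∀ n, ‖∑ i ∈ Finset.range n, κ x i • e i‖ ≤ M := fun x => by
    obtain ⟨M, hM⟩ := (Metric.isBounded_range_of_tendsto _ (hκ x)).exists_norm_le
    exact ⟨M, fun n => hM _ ⟨n, rfl⟩⟩
  choose M hM using hbdd
  let G : X →ₗ[ℝ] BoundedContinuousFunction ℕ X :=
    { toFun := fun x => BoundedContinuousFunction.ofNormedAddCommGroupDiscrete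
        (fun n => ∑ i ∈ Finset.range n, κ x i • e i) (M x) (hM x)
      map_add' := fun x y => by
        ext n
        simp [hadd, add_smul, Finset.sum_add_distrib]
      map_smul' := fun t x => by
        ext n
        simp [hsmul, mul_smul, Finset.smul_sum] }
  have hG : ∀ x n, G x n = ∑ i ∈ Finset.range n, κ x i • e i := fun x n => rfl
  have hcont : Continuous G := by
    refine G.continuous_of_seq_closed_graph fun u x g hu hg => ?_
    have hgn : ∀ n, Tendsto (fun k => G (u k) n) atTop (𝓝 (g n)) := fun n =>
      (BoundedContinuousFunction.tendsto_iff_tendstoUniformly.1 hg).tendsto_at n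
    -- increments of the limit stay on the line spanned by the corresponding basis vector
    have hb : ∀ n, ∃ b : ℝ, b • e n = g (n + 1) - g n := fun n => by
      have hcl : IsClosed ((Submodule.span ℝ {e n} : Submodule ℝ X) : Set X) :=
        Submodule.closed_of_finiteDimensional _
      have : g (n + 1) - g n ∈ Submodule.span ℝ {e n} := by
        refine hcl.mem_of_tendsto ((hgn (n + 1)).sub (hgn n)) (Eventually.of_forall fun k => ?_)
        refine Submodule.mem_span_singleton.2 ⟨κ (u k) n, ?_⟩
        simp [hG, Finset.sum_range_succ]
      exact Submodule.mem_span_singleton.1 this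
    choose b hb using hb
    have hg0 : g 0 = 0 := tendsto_nhds_unique (hgn 0) (by simp [hG])
    have hgsum : ∀ n, g n = ∑ i ∈ Finset.range n, b i • e i := fun n => by
      induction n with
      | zero => simpa using hg0
      | succ n ih => rw [Finset.sum_range_succ, ← ih, hb]; abel
    have hgx : Tendsto (fun n => ∑ i ∈ Finset.range n, b i • e i) atTop (𝓝 x) := by
      simp_rw [← hgsum]
      rw [Metric.tendsto_atTop]
      intro δ hδ
      obtain ⟨k, hk1, hk2⟩ := ((Metric.tendsto_nhds.1 hu (δ / 3) (by positivity)).and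
        (Metric.tendsto_nhds.1 hg (δ / 3) (by positivity))).exists
      obtain ⟨N, hN⟩ := Metric.tendsto_atTop.1 (hκ (u k)) (δ / 3) (by positivity)
      refine ⟨N, fun n hn => ?_⟩
      have h1 : dist (g n) (G (u k) n) < δ / 3 := by
        rw [dist_comm]
        exact lt_of_le_of_lt (BoundedContinuousFunction.dist_coe_le_dist n) hk2
      have h2 : dist (G (u k) n) (u k) < δ / 3 := hN n hn
      have := dist_triangle4 (g n) (G (u k) n) (u k) x
      linarith
    have : b = κ x := huniq _ _ hgx
    ext n
    rw [hgsum, hG, this]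
  let G' : X →L[ℝ] BoundedContinuousFunction ℕ X := ⟨G, hcont⟩
  refine ⟨‖G'‖, fun x a ha n => ?_⟩
  have : a = κ x := huniq _ _ ha
  rw [this, ← hG]
  exact ((G x).norm_coe_le_norm n).trans (G'.le_opNorm x)

/-- The span of the basis vectors with indices in `(p, q]`. -/
def blockSpan {X : Type*} [NormedAddCommGroup X] [NormedSpace ℝ X] (e : ℕ → X) (p q : ℕ) :
    Submodule ℝ X :=
  Submodule.span ℝ (e '' (Finset.Ioc p q : Finset ℕ))

section blocks

variable {X : Type*} [NormedAddCommGroup X] [NormedSpace ℝ X] {e : ℕ → X}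

theorem mem_blockSpan {p q : ℕ} {v : X} :
    v ∈ blockSpan e p q ↔ ∃ c : ℕ → ℝ, ∑ i ∈ Finset.Ioc p q, c i • e i = v := by
  refine (Submodule.mem_span_image_finset_iff_exists_fun ℝ).trans ⟨?_, ?_⟩
  · rintro ⟨c, rfl⟩
    refine ⟨fun i => if h : i ∈ Finset.Ioc p q then c ⟨i, h⟩ else 0, ?_⟩
    rw [← Finset.sum_coe_sort]
    exact Finset.sum_congr rfl fun i _ => by beta_reduce; rw [dif_pos i.2]
  · rintro ⟨c, rfl⟩
    exact ⟨fun i => c i, Finset.sum_coe_sort (Finset.Ioc p q) fun i => c i • e i⟩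

theorem blockSpan_mono {p q p' q' : ℕ} (hp : p' ≤ p) (hq : q ≤ q') :
    blockSpan e p q ≤ blockSpan e p' q' := by
  refine Submodule.span_mono (Set.image_mono ?_)
  intro i hi
  simp only [Finset.coe_Ioc, Set.mem_Ioc] at *
  omega

theorem tendsto_of_mem_blockSpan {p q : ℕ} {v : X} (hv : v ∈ blockSpan e p q) :
    ∃ c : ℕ → ℝ, Tendsto (fun n => ∑ i ∈ Finset.range n, c i • e i) atTop (𝓝 v) ∧
      (∀ i ≤ p, c i = 0) ∧ (∀ i > q, c i = 0) ∧
      ∀ n > q, ∑ i ∈ Finset.range n, c i • e i = v := by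
  obtain ⟨c, rfl⟩ := mem_blockSpan.1 hv
  have key : ∀ n > q, ∑ i ∈ Finset.range n, (if i ∈ Finset.Ioc p q then c i else 0) • e i
      = ∑ i ∈ Finset.Ioc p q, c i • e i := by
    intro n hn
    have hsub : Finset.Ioc p q ⊆ Finset.range n := fun i hi => by
      simp only [Finset.mem_Ioc, Finset.mem_range] at *
      omega
    rw [← Finset.sum_subset hsub]
    · exact Finset.sum_congr rfl fun i hi => by rw [if_pos hi]
    · intro i _ hi
      rw [if_neg hi, zero_smul]
  refine ⟨fun i => if i ∈ Finset.Ioc p q then c i else 0, ?_, ?_, ?_, key⟩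
  · refine tendsto_const_nhds.congr' ?_
    filter_upwards [eventually_gt_atTop q] with n hn using (key n hn).symm
  · intro i hi
    simp only [Finset.mem_Ioc]
    rw [if_neg]
    omega
  · intro i hi
    simp only [Finset.mem_Ioc]
    rw [if_neg]
    omega

/-- A norm-one vector with coefficients vanishing up to `M` is approximated by norm-one vectors
with finite support beyond `M`. -/
theorem exists_block_approx {a : X} (ha : ‖a‖ = 1) {c : ℕ → ℝ}
    (hc : Tendsto (fun n => ∑ i ∈ Finset.range n, c i • e i) atTop (𝓝 a)) {M : ℕ}
    (hM : ∀ i ≤ M, c i = 0) {δ : ℝ} (hδ : 0 < δ) :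
    ∃ L > M, ∃ b ∈ blockSpan e M L, ‖b‖ = 1 ∧ ‖a - b‖ < δ := by
  set t : ℕ → X := fun n => ∑ i ∈ Finset.range n, c i • e i with ht
  have h1 : Tendsto (fun n => ‖t n‖⁻¹ • t n) atTop (𝓝 a) := by
    have := (hc.norm.inv₀ (by rw [ha]; norm_num)).smul hc
    simpa [ha] using this
  have h2 : ∀ᶠ n in atTop, 0 < ‖t n‖ := hc.norm.eventually_const_lt (by rw [ha]; norm_num)
  obtain ⟨n, hn1, hn2, hn3⟩ := ((Metric.tendsto_nhds.1 h1 δ hδ).and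
    (h2.and (eventually_gt_atTop M))).exists
  refine ⟨n, hn3, ‖t n‖⁻¹ • t n, Submodule.smul_mem _ _ ?_, ?_, ?_⟩
  · refine Submodule.sum_mem _ fun i hi => ?_
    by_cases hi' : i ≤ M
    · simp [hM i hi']
    · refine Submodule.smul_mem _ _ (Submodule.subset_span ⟨i, ?_, rfl⟩)
      simp only [Finset.coe_Ioc, Set.mem_Ioc, Finset.mem_range] at *
      omega
  · rw [norm_smul, norm_inv, norm_norm, inv_mul_cancel₀ hn2.ne']
  · rwa [dist_comm, dist_eq_norm] at hn1

/-- Coefficients prescribed separately on disjoint sets come from a single sequence. -/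
theorem exists_glue {ι : Type*} (D : ι → Finset ℕ)
    (hD : ∀ i j n, n ∈ D i → n ∈ D j → i = j) (c : ι → ℕ → ℝ) :
    ∃ a : ℕ → ℝ, ∀ i, ∀ n ∈ D i, a n = c i n := by
  classical
  refine ⟨fun n => if h : ∃ i, n ∈ D i then c h.choose n else 0, fun i n hn => ?_⟩
  have h : ∃ i, n ∈ D i := ⟨i, hn⟩
  simp only [dif_pos h]
  rw [hD _ _ n h.choose_spec hn]

/-- `y` is a sequence of norm-one vectors supported on the consecutive intervals
`(ψ j, ψ (j + 1)]` for some strictly increasing `ψ`. -/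
def IsNormalizedBlock (e y : ℕ → X) : Prop :=
  (∀ j, ‖y j‖ = 1) ∧ ∃ ψ : ℕ → ℕ, StrictMono ψ ∧ ∀ j, y j ∈ blockSpan e (ψ j) (ψ (j + 1))

theorem IsNormalizedBlock.isBlockBasis {y : ℕ → X} (hy : IsNormalizedBlock e y) :
    IsBlockBasis e y := by
  obtain ⟨h1, ψ, hψ, hmem⟩ := hy
  choose c hc using fun j => mem_blockSpan.1 (hmem j)
  have hdisj : ∀ i j n, n ∈ Finset.Ioc (ψ i) (ψ (i + 1)) → n ∈ Finset.Ioc (ψ j) (ψ (j + 1)) →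
      i = j := by
    intro i j n hi hj
    simp only [Finset.mem_Ioc] at hi hj
    have h1 := hψ.lt_iff_lt.1 (hi.1.trans_le hj.2)
    have h2 := hψ.lt_iff_lt.1 (hj.1.trans_le hi.2)
    omega
  obtain ⟨a, ha⟩ := exists_glue _ hdisj c
  refine ⟨fun j => Finset.Ioc (ψ j) (ψ (j + 1)), a, fun j => ?_, fun j p hp q hq => ?_,
    fun j => ?_, fun j hj => ?_⟩
  · exact Finset.nonempty_Ioc.2 (hψ j.lt_succ_self)
  · simp only [Finset.mem_Ioc] at hp hq
    omega
  · rw [← hc j]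
    exact Finset.sum_congr rfl fun i hi => by rw [ha j i hi]
  · have := h1 j
    simp [hj] at this

theorem IsNormalizedBlock.comp {y : ℕ → X} (hy : IsNormalizedBlock e y) {φ : ℕ → ℕ}
    (hφ : StrictMono φ) : IsNormalizedBlock e (y ∘ φ) := by
  obtain ⟨h1, ψ, hψ, hmem⟩ := hy
  refine ⟨fun j => h1 _, ψ ∘ φ, hψ.comp hφ, fun j => blockSpan_mono le_rfl ?_ (hmem (φ j))⟩
  exact hψ.monotone (hφ j.lt_succ_self)

theorem sum_range_mem_blockSpan {y : ℕ → X} {ψ : ℕ → ℕ} (hψ : StrictMono ψ)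
    (hmem : ∀ j, y j ∈ blockSpan e (ψ j) (ψ (j + 1))) (a : ℕ → ℝ) {p q : ℕ} (S : Finset ℕ)
    (hS : ∀ i ∈ S, p ≤ i ∧ i < q) :
    ∑ i ∈ S, a i • y i ∈ blockSpan e (ψ p) (ψ q) :=
  Submodule.sum_mem _ fun i hi => Submodule.smul_mem _ _
    (blockSpan_mono (hψ.monotone (hS i hi).1) (hψ.monotone (hS i hi).2) (hmem i))

/-- Normalized blocks of a Schauder basis form a basic sequence, with a constant that depends
only on the basis. -/
theorem IsSchauderBasis.exists_block_bound [CompleteSpace X] (he : IsSchauderBasis e) :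
    ∃ C : ℝ, ∀ y : ℕ → X, IsNormalizedBlock e y → ∀ m n : ℕ, m ≤ n → ∀ a : ℕ → ℝ,
      ‖∑ i ∈ Finset.range m, a i • y i‖ ≤ C * ‖∑ i ∈ Finset.range n, a i • y i‖ := by
  obtain ⟨C, hC⟩ := he.exists_proj_bound
  refine ⟨C, fun y hy m n hmn a => ?_⟩
  obtain ⟨-, ψ, hψ, hmem⟩ := hy
  obtain ⟨c, hc, -, hc2, hc3⟩ := tendsto_of_mem_blockSpan
    (sum_range_mem_blockSpan hψ hmem a (p := 0) (q := m) (Finset.range m) (by simp))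
  obtain ⟨d, hd, hd1, -⟩ := tendsto_of_mem_blockSpan
    (sum_range_mem_blockSpan hψ hmem a (p := m) (q := n) (Finset.Ico m n) (by simp))
  have h1 : Tendsto (fun n => ∑ i ∈ Finset.range n, (c i + d i) • e i) atTop
      (𝓝 (∑ i ∈ Finset.range n, a i • y i)) := by
    rw [← Finset.sum_range_add_sum_Ico _ hmn]
    simpa [add_smul, Finset.sum_add_distrib] using hc.add hd
  have h2 := hC _ _ h1 (ψ m + 1)
  simp_rw [add_smul, Finset.sum_add_distrib] at h2
  rw [hc3 _ (Nat.lt_succ_self _), Finset.sum_eq_zero (s := Finset.range (ψ m + 1))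
    (f := fun i => d i • e i), add_zero] at h2
  · exact h2
  · intro i hi
    rw [hd1 i (by simpa [Nat.lt_succ_iff] using hi), zero_smul]

end blocks

/-! ### Ramsey theorem and finite colourings -/

section ramsey

/-- A colour taken by `f` along a fixed nonprincipal ultrafilter. -/
theorem exists_ultra_colour {κ : Type*} [Finite κ] (f : ℕ → κ) :
    ∃ k, ∀ᶠ i in (hyperfilter ℕ : Filter ℕ), f i = k := by
  obtain ⟨k, hk⟩ := Ultrafilter.eq_pure_of_finite ((hyperfilter ℕ).map f)
  refine ⟨k, ?_⟩
  have : ({k} : Set κ) ∈ (hyperfilter ℕ).map f := by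
    rw [hk]
    exact Ultrafilter.mem_pure.2 rfl
  exact this

/-- Diagonal infinite Ramsey theorem: given finite colourings `c n` of the finite subsets of `ℕ`,
along a suitable subsequence the `c n`-colour of a set with at most `n` elements, all of them
`≥ n`, depends only on its cardinality. -/
theorem exists_ramsey {κ : ℕ → Type*} [∀ n, Finite (κ n)] (c : ∀ n, Finset ℕ → κ n) :
    ∃ φ : ℕ → ℕ, StrictMono φ ∧ ∃ C : ∀ n, ℕ → κ n, ∀ n (B : Finset ℕ), B.card ≤ n →
      (∀ b ∈ B, n ≤ b) → c n (B.image φ) = C n B.card := by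
  choose lim hlim using fun (n : ℕ) (f : ℕ → κ n) => exists_ultra_colour f
  -- `d n j A` is the `j`-fold iterated ultrafilter limit of the colour of `A` with `j` points added
  let d : ∀ n, ℕ → Finset ℕ → κ n := fun n j =>
    Nat.rec (c n) (fun _ g A => lim n fun i => g (insert i A)) j
  have hd : ∀ n j A, ∀ᶠ i in (hyperfilter ℕ : Filter ℕ), d n j (insert i A) = d n (j + 1) A :=
    fun n j A => hlim n fun i => d n j (insert i A)
  have hstep : ∀ x : ℕ, ∃ y, x < y ∧ ∀ A ∈ (Finset.range (x + 1)).powerset,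
      ∀ n ∈ Finset.range (x + 2), ∀ j ∈ Finset.range (x + 2),
        d n j (insert y A) = d n (j + 1) A := by
    intro x
    have h1 : ∀ᶠ y in (hyperfilter ℕ : Filter ℕ), x < y := by
      have := eventually_gt_atTop x
      rw [← Nat.cofinite_eq_atTop] at this
      exact hyperfilter_le_cofinite this
    have h2 : ∀ᶠ y in (hyperfilter ℕ : Filter ℕ), ∀ A ∈ (Finset.range (x + 1)).powerset,
        ∀ n ∈ Finset.range (x + 2), ∀ j ∈ Finset.range (x + 2),
          d n j (insert y A) = d n (j + 1) A := by
      simp only [Filter.eventually_all_finset]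
      intro A _ n _ j _
      exact hd n j A
    exact (h1.and h2).exists
  choose nxt hlt hnxt using hstep
  let φ : ℕ → ℕ := fun n => Nat.rec 0 (fun _ x => nxt x) n
  have hφ : StrictMono φ := strictMono_nat_of_lt_succ fun n => hlt (φ n)
  refine ⟨φ, hφ, fun n t => d n t ∅, fun n B hB hBn => ?_⟩
  have key : ∀ B : Finset ℕ, ∀ j, j + B.card ≤ n → (∀ b ∈ B, n ≤ b) →
      d n j (B.image φ) = d n (j + B.card) ∅ := by
    intro B
    induction B using Finset.induction_on_max with
    | empty => intro j _ _; simp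
    | insert a s hs ih =>
      intro j hj hb
      have ha : a ∉ s := fun h => lt_irrefl _ (hs a h)
      rw [Finset.card_insert_of_notMem ha] at hj ⊢
      have han : n ≤ a := hb a (Finset.mem_insert_self _ _)
      obtain ⟨b, rfl⟩ : ∃ b, a = b + 1 := ⟨a - 1, by omega⟩
      have hbφ : b ≤ φ b := hφ.id_le b
      rw [Finset.image_insert]
      have := hnxt (φ b) (s.image φ) (by
        rw [Finset.mem_powerset, Finset.image_subset_iff]
        intro x hx
        rw [Finset.mem_range]
        have := hφ.monotone (Nat.lt_succ_iff.1 (hs x hx))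
        omega) n (by rw [Finset.mem_range]; omega) j (by rw [Finset.mem_range]; omega)
      refine this.trans ?_
      rw [ih (j + 1) (by omega) fun x hx => hb x (Finset.mem_insert_of_mem hx)]
      rw [show j + 1 + s.card = j + (s.card + 1) by omega]
  have := key B 0 (by omega) hBn
  rw [zero_add] at this
  exact this

/-- A totally bounded set has a finite colouring in which points of equal colour are close. -/
theorem exists_finite_colouring {M : Type*} [PseudoMetricSpace M] {K : Set M}
    (hK : TotallyBounded K) {δ : ℝ} (hδ : 0 < δ) :
    ∃ (κ : Type) (_ : Finite κ) (col : M → κ), ∀ a ∈ K, ∀ b ∈ K, col a = col b → dist a b < δ := by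
  obtain ⟨t, ht, hcov⟩ := Metric.totallyBounded_iff.1 hK (δ / 2) (by positivity)
  obtain ⟨N, f, rfl⟩ : ∃ (N : ℕ) (f : Fin N → M), Set.range f = t := by
    obtain ⟨N, g, hg⟩ := ht.fin_param
    exact ⟨N, g, hg.2⟩
  have : ∀ a : M, ∃ i : Option (Fin N), a ∈ K → ∃ j, i = some j ∧ dist a (f j) < δ / 2 := by
    intro a
    by_cases ha : a ∈ K
    · obtain ⟨j, hj⟩ : ∃ j, dist a (f j) < δ / 2 := by simpa using hcov ha
      exact ⟨some j, fun _ => ⟨j, rfl, hj⟩⟩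
    · exact ⟨none, fun h => absurd h ha⟩
  choose col hcol using this
  refine ⟨Option (Fin N), inferInstance, col, fun a ha b hb hab => ?_⟩
  obtain ⟨i, hi, hi'⟩ := hcol a ha
  obtain ⟨j, hj, hj'⟩ := hcol b hb
  have : i = j := by
    rw [hi, hj] at hab
    exact Option.some_injective _ hab
  subst this
  have := dist_triangle_right a b (f i)
  linarith

end ramsey

/-! ### Existence of spreading models -/

section spreading

variable {X : Type*} [NormedAddCommGroup X] [NormedSpace ℝ X]

/-- The linear combination of `y` over `B` in which the `i`-th smallest element of `B` gets
coefficient `a i`. -/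
def rankSum (y : ℕ → X) (a : ℕ → ℝ) (B : Finset ℕ) : X :=
  ∑ b ∈ B, a (B.filter (· < b)).card • y b

theorem rankSum_image (y : ℕ → X) (a : ℕ → ℝ) {p : ℕ} {k : Fin p → ℕ} (hk : StrictMono k) :
    rankSum y a (Finset.univ.image k) = ∑ i : Fin p, a i • y (k i) := by
  rw [rankSum, Finset.sum_image (fun _ _ _ _ h => hk.injective h)]
  refine Finset.sum_congr rfl fun i _ => ?_
  have : (Finset.univ.image k).filter (· < k i) = (Finset.Iio i).image k := by
    ext x
    simp only [Finset.mem_filter, Finset.mem_image, Finset.mem_univ, true_and, Finset.mem_Iio]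
    constructor
    · rintro ⟨⟨j, rfl⟩, hj⟩
      exact ⟨j, hk.lt_iff_lt.1 hj, rfl⟩
    · rintro ⟨j, hj, rfl⟩
      exact ⟨⟨j, rfl⟩, hk hj⟩
  rw [this, Finset.card_image_of_injective _ hk.injective, Fin.card_Iio]

theorem norm_rankSum_le {y : ℕ → X} (hy : ∀ j, ‖y j‖ = 1) {a : ℕ → ℝ} {n : ℕ} {r : ℝ}
    (hr : 0 ≤ r) (ha : ∀ i < n, |a i| ≤ r) {B : Finset ℕ} (hB : B.card ≤ n) :
    ‖rankSum y a B‖ ≤ n * r := by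
  refine (norm_sum_le _ _).trans ?_
  have : ∀ b ∈ B, ‖a (B.filter (· < b)).card • y b‖ ≤ r := fun b hb => by
    rw [norm_smul, hy, mul_one]
    refine ha _ (lt_of_lt_of_le (Finset.card_lt_card ?_) hB)
    exact Finset.filter_ssubset.2 ⟨b, hb, lt_irrefl _⟩
  refine (Finset.sum_le_card_nsmul _ _ _ this).trans ?_
  rw [nsmul_eq_mul]
  gcongr

theorem rankSum_sub (y : ℕ → X) (a a' : ℕ → ℝ) (B : Finset ℕ) :
    rankSum y a B - rankSum y a' B = rankSum y (a - a') B := by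
  simp [rankSum, sub_smul]

/-- A subsequence along which the norms of linear combinations with few, late terms and
coefficients in `[-1, 1]` are nearly independent of the position of the terms. -/
theorem exists_subseq_stable {y : ℕ → X} (hy : ∀ j, ‖y j‖ = 1) :
    ∃ φ : ℕ → ℕ, StrictMono φ ∧ ∀ n p : ℕ, p ≤ n → ∀ a : ℕ → ℝ, (∀ i, |a i| ≤ 1) →
      ∀ k k' : Fin p → ℕ, StrictMono k → StrictMono k' → (∀ i, n ≤ k i) → (∀ i, n ≤ k' i) →
        |‖∑ i : Fin p, a i • y (φ (k i))‖ - ‖∑ i : Fin p, a i • y (φ (k' i))‖| < 1 / (n + 1) := by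
  classical
  let ext : ∀ n : ℕ, (Fin n → ℝ) → ℕ → ℝ := fun n a i => if h : i < n then a ⟨i, h⟩ else 0
  have hext : ∀ n : ℕ, ∃ (κ : Type) (_ : Finite κ) (c : Finset ℕ → κ), ∀ B B' : Finset ℕ,
      B.card ≤ n → B'.card ≤ n → c B = c B' → ∀ a : ℕ → ℝ, (∀ i, |a i| ≤ 1) →
        |‖rankSum y a B‖ - ‖rankSum y a B'‖| < 1 / (n + 1) := by
    intro n
    set δ : ℝ := 1 / (n + 1) ^ 2 / 4 with hδ
    have hδ0 : 0 < δ := by positivity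
    obtain ⟨t, ht, hcov⟩ := Metric.totallyBounded_iff.1
      (isCompact_closedBall (0 : Fin n → ℝ) 1).totallyBounded δ hδ0
    have : Fintype t := ht.fintype
    let v : Finset ℕ → (t → ℝ) := fun B a => ‖rankSum y (ext n a) B‖
    obtain ⟨κ, hκ, col, hcol⟩ := exists_finite_colouring (K := Set.pi Set.univ
      fun a : t => Set.Icc (0 : ℝ) (n * ‖(a : Fin n → ℝ)‖))
      (isCompact_univ_pi fun _ => isCompact_Icc).totallyBounded hδ0
    have hv : ∀ B : Finset ℕ, B.card ≤ n → v B ∈ Set.pi Set.univ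
        fun a : t => Set.Icc (0 : ℝ) (n * ‖(a : Fin n → ℝ)‖) := by
      intro B hB a _
      refine ⟨norm_nonneg _, norm_rankSum_le hy (norm_nonneg _) (fun i hi => ?_) hB⟩
      simp only [ext, dif_pos hi]
      exact norm_le_pi_norm (a : Fin n → ℝ) ⟨i, hi⟩
    refine ⟨κ, hκ, fun B => col (v B), fun B B' hB hB' hc a ha => ?_⟩
    have hd := hcol _ (hv B hB) _ (hv B' hB') hc
    have hmem : (fun i : Fin n => a i) ∈ Metric.closedBall (0 : Fin n → ℝ) 1 := by
      rw [mem_closedBall_zero_iff]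
      exact (pi_norm_le_iff_of_nonneg zero_le_one).2 fun i => ha i
    obtain ⟨b, hbt, hb⟩ : ∃ b ∈ t, dist (fun i : Fin n => a i) b < δ := by simpa using hcov hmem
    have h1 : |‖rankSum y (ext n b) B‖ - ‖rankSum y (ext n b) B'‖| < δ :=
      lt_of_le_of_lt (dist_le_pi_dist (v B) (v B') ⟨b, hbt⟩) hd
    have h2 : ∀ B : Finset ℕ, B.card ≤ n →
        |‖rankSum y a B‖ - ‖rankSum y (ext n b) B‖| ≤ n * δ := by
      intro B hB
      refine (abs_norm_sub_norm_le _ _).trans ?_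
      rw [rankSum_sub]
      refine norm_rankSum_le hy hδ0.le (fun i hi => ?_) hB
      simp only [ext, Pi.sub_apply, dif_pos hi]
      exact (dist_le_pi_dist (fun i : Fin n => a i) b ⟨i, hi⟩).trans hb.le
    have h3 := h2 B hB
    have h4 := h2 B' hB'
    have h5 : 2 * (n * δ) + δ < 1 / (n + 1) := by
      rw [hδ, div_div, lt_div_iff₀ (by positivity)]
      have : (2 * (n * (1 / ((n + 1) ^ 2 * 4))) + 1 / ((n + 1) ^ 2 * 4)) * ((n : ℝ) + 1)
        = (2 * n + 1) / (4 * (n + 1)) := by field_simp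
      rw [this, div_lt_one (by positivity)]
      have : (0 : ℝ) ≤ n := n.cast_nonneg
      linarith
    rw [abs_le] at h3 h4
    rw [abs_lt] at h1 ⊢
    constructor <;> linarith [h1.1, h1.2, h3.1, h3.2, h4.1, h4.2]
  choose κ hκ c hc using hext
  obtain ⟨φ, hφ, C, hC⟩ := exists_ramsey c
  refine ⟨φ, hφ, fun n p hp a ha k k' hk hk' hkn hkn' => ?_⟩
  have hcard : ∀ k : Fin p → ℕ, StrictMono k → (Finset.univ.image k).card = p := fun k hk => by
    rw [Finset.card_image_of_injective _ hk.injective, Finset.card_univ, Fintype.card_fin]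
  have hcol : ∀ k : Fin p → ℕ, StrictMono k → (∀ i, n ≤ k i) →
      c n (Finset.univ.image (φ ∘ k)) = C n p := fun k hk hkn => by
    rw [← Finset.image_image, hC n _ (by rw [hcard k hk]; exact hp) (by simpa using hkn),
      hcard k hk]
  have := hc n (Finset.univ.image (φ ∘ k)) (Finset.univ.image (φ ∘ k'))
    (by rw [hcard _ (hφ.comp hk)]; exact hp) (by rw [hcard _ (hφ.comp hk')]; exact hp)
    ((hcol k hk hkn).trans (hcol k' hk' hkn').symm) a ha
  rwa [rankSum_image _ _ (hφ.comp hk), rankSum_image _ _ (hφ.comp hk')] at this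

/-- A seminorm on the finitely supported sequences is realised by a sequence in a Banach space
(living in the lowest universe). -/
theorem exists_space_of_seminorm (p : Seminorm ℝ (ℕ →₀ ℝ)) :
    ∃ (S : Type) (_ : NormedAddCommGroup S) (_ : NormedSpace ℝ S) (_ : CompleteSpace S)
      (s : ℕ → S), ∀ f : ℕ →₀ ℝ, ‖Finsupp.linearCombination ℝ s f‖ = p f := by
  let _ : SeminormedAddCommGroup (ℕ →₀ ℝ) := p.toAddGroupSeminorm.toSeminormedAddCommGroup
  let _ : NormedSpace ℝ (ℕ →₀ ℝ) := { norm_smul_le := fun t f => (map_smul_eq_mul p t f).le }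
  refine ⟨UniformSpace.Completion (ℕ →₀ ℝ), inferInstance, inferInstance, inferInstance,
    fun i => UniformSpace.Completion.toComplₗᵢ (𝕜 := ℝ) (Finsupp.single i 1), fun f => ?_⟩
  have : Finsupp.linearCombination ℝ
      (fun i => UniformSpace.Completion.toComplₗᵢ (𝕜 := ℝ) (Finsupp.single i (1 : ℝ))) f
      = UniformSpace.Completion.toComplₗᵢ (𝕜 := ℝ) f := by
    induction f using Finsupp.induction_linear with
    | zero => rw [map_zero, map_zero]
    | add f g hf hg => rw [map_add, map_add, hf, hg]
    | single i t =>
      rw [Finsupp.linearCombination_single, ← map_smul, Finsupp.smul_single_one]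
  rw [this, LinearIsometry.norm_map]
  rfl

/-- Every normalized block sequence of a Schauder basis has a subsequence generating a spreading
model. The last clause is the convergence of norms of sums, with the number of summands
decoupled from the starting index. -/
theorem exists_spreadingModel [CompleteSpace X] {e : ℕ → X} (he : IsSchauderBasis e) {y : ℕ → X}
    (hy : IsNormalizedBlock e y) :
    ∃ φ : ℕ → ℕ, StrictMono φ ∧
      ∃ (S : Type) (_ : NormedAddCommGroup S) (_ : NormedSpace ℝ S) (_ : CompleteSpace S)
        (s : ℕ → S), IsSpreadingModel (y ∘ φ) s ∧
        ∀ (p : ℕ) (δ : ℝ), 0 < δ → ∃ N, ∀ B : Finset ℕ, B.card = p → (∀ b ∈ B, N ≤ b) →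
          |‖∑ b ∈ B, y (φ b)‖ - ‖∑ i ∈ Finset.range p, s i‖| < δ := by
  obtain ⟨φ, hφ, hst⟩ := exists_subseq_stable hy.1
  obtain ⟨C, hC⟩ := he.exists_block_bound
  have hshift : ∀ (t p : ℕ), StrictMono (fun i : Fin p => t + (i : ℕ)) := fun t p i j hij =>
    Nat.add_lt_add_left hij t
  let L : ℕ → (ℕ →₀ ℝ) → ℝ := fun t f =>
    ‖Finsupp.linearCombination ℝ (fun i => y (φ (t + i))) f‖
  have hcauchy : ∀ f, CauchySeq fun t => L t f := by
    intro f
    obtain ⟨p, hp⟩ : ∃ p, f.support ⊆ Finset.range p := f.support.exists_nat_subset_range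
    obtain ⟨A, hA0, hA⟩ : ∃ A : ℝ, 0 < A ∧ ∀ i, |f i| ≤ A := by
      refine ⟨1 + ∑ i ∈ f.support, |f i|, by positivity, fun i => ?_⟩
      by_cases hi : i ∈ f.support
      · have := Finset.single_le_sum (f := fun i => |f i|) (fun i _ => abs_nonneg _) hi
        linarith
      · have : f i = 0 := by simpa using hi
        rw [this, abs_zero]
        positivity
    have hL : ∀ t, L t f = A * ‖∑ i : Fin p, (f i / A) • y (φ (t + i))‖ := fun t => by
      have : Finsupp.linearCombination ℝ (fun i => y (φ (t + i))) f
          = A • ∑ i : Fin p, (f i / A) • y (φ (t + i)) := by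
        rw [Finsupp.linearCombination_apply, Finsupp.sum_of_support_subset f hp _ (by simp),
          Finset.smul_sum, ← Fin.sum_univ_eq_sum_range (fun i => f i • y (φ (t + i)))]
        refine Finset.sum_congr rfl fun i _ => ?_
        rw [smul_smul, mul_div_cancel₀ _ hA0.ne']
      simp only [L]
      rw [this, norm_smul, Real.norm_of_nonneg hA0.le]
    rw [Metric.cauchySeq_iff]
    intro δ hδ
    obtain ⟨n, hn⟩ := exists_nat_one_div_lt (div_pos hδ hA0)
    refine ⟨max n p, fun t ht t' ht' => ?_⟩
    have h1 := hst (max n p) p (le_max_right _ _) (fun i => f i / A) (fun i => by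
      rw [abs_div, abs_of_pos hA0, div_le_one hA0]
      exact hA i) _ _ (hshift t p) (hshift t' p) (fun i => by omega) (fun i => by omega)
    have h2 : (1 : ℝ) / ((max n p : ℕ) + 1) ≤ 1 / (n + 1) := by
      gcongr
      exact le_max_left _ _
    rw [Real.dist_eq, hL, hL, ← mul_sub, abs_mul, abs_of_pos hA0, ← lt_div_iff₀' hA0]
    linarith
  choose N hN using fun f => cauchySeq_tendsto_of_complete (hcauchy f)
  let P : Seminorm ℝ (ℕ →₀ ℝ) := Seminorm.of N
    (fun f g => le_of_tendsto_of_tendsto' (hN (f + g)) ((hN f).add (hN g)) fun t => by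
      simp only [L, map_add]
      exact norm_add_le _ _)
    (fun r f => tendsto_nhds_unique (hN (r • f)) (by
      simpa only [L, map_smul, norm_smul] using (hN f).const_mul ‖r‖))
  obtain ⟨S, i1, i2, i3, s, hs⟩ := exists_space_of_seminorm P
  have hlim : ∀ (a : ℕ → ℝ) (p : ℕ), Tendsto
      (fun t => ‖∑ i ∈ Finset.range p, a i • y (φ (t + i))‖) atTop
      (𝓝 ‖∑ i ∈ Finset.range p, a i • s i‖) := fun a p => by
    have h1 := hN (∑ i ∈ Finset.range p, Finsupp.single i (a i))
    have h2 := hs (∑ i ∈ Finset.range p, Finsupp.single i (a i))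
    change _ = N _ at h2
    rw [← h2] at h1
    simpa only [L, map_sum, Finsupp.linearCombination_single] using h1
  have happrox : ∀ n p : ℕ, p ≤ n → ∀ a : ℕ → ℝ, (∀ i, |a i| ≤ 1) →
      ∀ k : Fin p → ℕ, StrictMono k → (∀ i, n ≤ k i) →
        |‖∑ i : Fin p, a i • y (φ (k i))‖ - ‖∑ i ∈ Finset.range p, a i • s i‖| ≤ 1 / (n + 1) := by
    intro n p hp a ha k hk hkn
    refine le_of_tendsto (((hlim a p).const_sub _).abs) ?_
    filter_upwards [eventually_ge_atTop n] with t ht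
    rw [← Fin.sum_univ_eq_sum_range (fun i => a i • y (φ (t + i)))]
    exact (hst n p hp a ha k _ hk (hshift t p) hkn fun i => by omega).le
  refine ⟨φ, hφ, S, i1, i2, i3, s, ⟨⟨C, fun m n hmn a => ?_⟩, ?_⟩, fun p δ hδ => ?_⟩
  · refine le_of_tendsto_of_tendsto' (hlim a m) ((hlim a n).const_mul C) fun t => ?_
    have := hC _ (hy.comp (hφ.comp (show StrictMono fun i => t + i from
      fun i j hij => Nat.add_lt_add_left hij t))) m n hmn a
    exact this
  · refine ⟨fun n => 2 * (1 / (n + 1)), fun n => by positivity, fun n m hnm => ?_, ?_, ?_⟩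
    · have : (n : ℝ) ≤ m := by exact_mod_cast hnm
      dsimp only
      gcongr
    · simpa using (tendsto_one_div_add_atTop_nhds_zero_nat (𝕜 := ℝ)).const_mul 2
    · intro n a ha k hk hkn
      have h1 := happrox n n le_rfl (fun i => if h : i < n then a ⟨i, h⟩ else 0) (fun i => by
        split_ifs
        · exact ha _
        · simp) k hk hkn
      rw [← Fin.sum_univ_eq_sum_range
        (fun i => (if h : i < n then a ⟨i, h⟩ else 0) • s i)] at h1
      simp only [Fin.is_lt, dite_true, Fin.eta] at h1
      have h2 : (0 : ℝ) < 1 / (n + 1) := by positivity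
      exact lt_of_le_of_lt h1 (by linarith)
  · obtain ⟨n, hn⟩ := exists_nat_one_div_lt hδ
    refine ⟨max n p, fun B hB hBn => ?_⟩
    have h1 := happrox (max n p) p (le_max_right _ _) (fun _ => 1) (fun _ => by simp)
      (B.orderEmbOfFin hB) (B.orderEmbOfFin hB).strictMono
      (fun i => hBn _ (B.orderEmbOfFin_mem hB i))
    have h2 : (1 : ℝ) / ((max n p : ℕ) + 1) ≤ 1 / (n + 1) := by
      gcongr
      exact le_max_left _ _
    simp only [one_smul] at h1
    have h3 : ∑ i : Fin p, y (φ (B.orderEmbOfFin hB i)) = ∑ b ∈ B, y (φ b) := by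
      conv_rhs => rw [← B.image_orderEmbOfFin_univ hB]
      rw [Finset.sum_image fun _ _ _ _ h => (B.orderEmbOfFin hB).injective h]
    rw [h3] at h1
    linarith

end spreading

/-! ### Norms of sums of blocks -/

section sums

variable {X : Type*} [NormedAddCommGroup X]

/-- The norms of the sums of `p` late terms of `z` converge to `c`. -/
def SumsTendTo (z : ℕ → X) (p : ℕ) (c : ℝ) : Prop :=
  ∀ δ : ℝ, 0 < δ → ∃ N, ∀ B : Finset ℕ, B.card = p → (∀ b ∈ B, N ≤ b) →
    |‖∑ b ∈ B, z b‖ - c| < δ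

theorem SumsTendTo.eventually {z : ℕ → X} {p : ℕ} {c : ℝ} (hz : SumsTendTo z p c) {δ : ℝ}
    (hδ : 0 < δ) : ∀ᶠ N in atTop, ∀ B : Finset ℕ, B.card = p → (∀ b ∈ B, N ≤ b) →
      |‖∑ b ∈ B, z b‖ - c| < δ := by
  obtain ⟨N, hN⟩ := hz δ hδ
  filter_upwards [eventually_ge_atTop N] with n hn B hB hBn
  exact hN B hB fun b hb => hn.trans (hBn b hb)

variable [NormedSpace ℝ X] {e : ℕ → X}

theorem norm_sub_normalize {u : X} (hu : 0 < ‖u‖) : ‖u - ‖u‖⁻¹ • u‖ = |‖u‖ - 1| := by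
  have : u - ‖u‖⁻¹ • u = (1 - ‖u‖⁻¹) • u := by rw [sub_smul, one_smul]
  rw [this, norm_smul, Real.norm_eq_abs]
  nth_rw 2 [← abs_of_pos hu]
  rw [← abs_mul, sub_mul, one_mul, inv_mul_cancel₀ hu.ne']

theorem norm_normalize {u : X} (hu : 0 < ‖u‖) : ‖‖u‖⁻¹ • u‖ = 1 := by
  rw [norm_smul, norm_inv, norm_norm, inv_mul_cancel₀ hu.ne']

/-- If sums of `p` terms have norms tending to `1`, the same holds for sums of `2 * p` terms:
normalized sums of `p` terms form another block sequence, to which the hypothesis on pairs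
applies. -/
theorem limit_double
    (H : ∀ y : ℕ → X, IsNormalizedBlock e y → ∃ φ : ℕ → ℕ, StrictMono φ ∧ ∃ c : ℕ → ℝ,
      c 1 = 1 ∧ c 2 = 1 ∧ ∀ p, SumsTendTo (y ∘ φ) p (c p))
    {z : ℕ → X} (hz : IsNormalizedBlock e z) {p : ℕ} (hp : 1 ≤ p) {c : ℝ}
    (h1 : SumsTendTo z p 1) (h2 : SumsTendTo z (2 * p) c) : c = 1 := by
  obtain ⟨N₀, hN₀⟩ := h1 (1 / 2) (by norm_num)
  obtain ⟨-, ψ, hψ, hmem⟩ := hz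
  let I : ℕ → Finset ℕ := fun j => Finset.Ico (N₀ + p * j) (N₀ + p * (j + 1))
  have hIcard : ∀ j, (I j).card = p := fun j => by
    simp only [I, Nat.card_Ico, mul_add]
    omega
  have hIge : ∀ j, ∀ b ∈ I j, N₀ ≤ b ∧ j ≤ b := fun j b hb => by
    simp only [I, Finset.mem_Ico] at hb
    have := Nat.le_mul_of_pos_left j hp
    omega
  let u : ℕ → X := fun j => ∑ b ∈ I j, z b
  have hu0 : ∀ j, 0 < ‖u j‖ := fun j => by
    have := (abs_lt.1 (hN₀ (I j) (hIcard j) fun b hb => (hIge j b hb).1)).1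
    change _ < ‖u j‖ - 1 at this
    linarith
  have hblock : IsNormalizedBlock e fun j => ‖u j‖⁻¹ • u j := by
    refine ⟨fun j => norm_normalize (hu0 j), fun j => ψ (N₀ + p * j),
      fun i j hij => hψ (Nat.add_lt_add_left (Nat.mul_lt_mul_of_pos_left hij hp) _),
      fun j => Submodule.smul_mem _ _ ?_⟩
    have := sum_range_mem_blockSpan hψ hmem (fun _ => 1) (p := N₀ + p * j)
      (q := N₀ + p * (j + 1)) (I j) (fun i hi => Finset.mem_Ico.1 hi)
    simpa only [one_smul] using this
  obtain ⟨θ, hθ, d, -, hd2, hd⟩ := H _ hblock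
  have key : ∀ η : ℝ, 0 < η → |c - 1| ≤ 4 * η := by
    intro η hη
    have hd := hd 2
    rw [hd2] at hd
    obtain ⟨i, hi1, hi2, hi3⟩ := ((h1.eventually hη).and
      ((h2.eventually hη).and (hd.eventually hη))).exists
    have hge : ∀ j ≥ i, ∀ b ∈ I (θ j), i ≤ b := fun j hj b hb =>
      (hj.trans (hθ.id_le j)).trans (hIge _ b hb).2
    have hdisj : Disjoint (I (θ i)) (I (θ (i + 1))) := by
      rw [Finset.disjoint_left]
      intro b hb hb'
      simp only [I, Finset.mem_Ico] at hb hb'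
      have := Nat.mul_le_mul_left p (Nat.succ_le_of_lt (hθ i.lt_succ_self))
      simp only [Nat.succ_eq_add_one] at this
      omega
    have e1 : ∀ j ≥ i, |‖u (θ j)‖ - 1| < η := fun j hj => hi1 _ (hIcard _) (hge j hj)
    have e2 : |‖u (θ i) + u (θ (i + 1))‖ - c| < η := by
      have := hi2 (I (θ i) ∪ I (θ (i + 1)))
        (by rw [Finset.card_union_of_disjoint hdisj, hIcard, hIcard]; omega)
        (fun b hb => by
          rcases Finset.mem_union.1 hb with hb | hb
          · exact hge i le_rfl b hb
          · exact hge (i + 1) (by omega) b hb)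
      rwa [Finset.sum_union hdisj] at this
    have e3 : |‖‖u (θ i)‖⁻¹ • u (θ i) + ‖u (θ (i + 1))‖⁻¹ • u (θ (i + 1))‖ - 1| < η := by
      have := hi3 {i, i + 1} (Finset.card_pair (by omega)) (by simp)
      rwa [Finset.sum_pair (by omega)] at this
    have e4 := norm_sub_normalize (hu0 (θ i))
    have e5 := norm_sub_normalize (hu0 (θ (i + 1)))
    have e6 := e1 i le_rfl
    have e7 := e1 (i + 1) (by omega)
    have e8 : |‖u (θ i) + u (θ (i + 1))‖
        - ‖‖u (θ i)‖⁻¹ • u (θ i) + ‖u (θ (i + 1))‖⁻¹ • u (θ (i + 1))‖| ≤ η + η := by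
      refine (abs_norm_sub_norm_le _ _).trans ?_
      rw [add_sub_add_comm]
      refine (norm_add_le _ _).trans ?_
      rw [e4, e5]
      linarith
    rw [abs_le] at e8 ⊢
    rw [abs_lt] at e2 e3
    constructor <;> linarith [e8.1, e8.2, e2.1, e2.2, e3.1, e3.2]
  have : |c - 1| ≤ 0 := le_of_forall_pos_le_add fun η hη => by
    have := key (η / 4) (by positivity)
    linarith
  exact sub_eq_zero.1 (abs_nonpos_iff.1 this)

/-- Averaging the last summand over many positions shows that the limit norms increase with the
number of summands. -/
theorem limit_mono {z : ℕ → X} {c : ℕ → ℝ} (hc : ∀ p, SumsTendTo z p (c p))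
    (hpow : ∀ n, c (2 ^ n) = 1) (p : ℕ) : c p ≤ c (p + 1) := by
  refine le_of_forall_pos_le_add fun η' hη' => ?_
  obtain ⟨η, hη, rfl⟩ : ∃ η : ℝ, 0 < η ∧ η' = 4 * η := ⟨η' / 4, by positivity, by ring⟩
  obtain ⟨n, hn⟩ := pow_unbounded_of_one_lt (1 / η) (one_lt_two)
  obtain ⟨N, h1, h2, h3⟩ := (((hc p).eventually hη).and (((hc (p + 1)).eventually hη).and
    ((hc (2 ^ n)).eventually one_pos))).exists
  set B := Finset.Ico N (N + p) with hB
  set J := Finset.Ico (N + p) (N + p + 2 ^ n) with hJ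
  have hJcard : J.card = 2 ^ n := by simp [hJ]
  have e1 := h1 B (by simp [hB]) (fun b hb => (Finset.mem_Ico.1 hb).1)
  have e3 := h3 J hJcard (fun b hb => by have := Finset.mem_Ico.1 hb; omega)
  rw [hpow] at e3
  have e2 : ∀ j ∈ J, ‖∑ b ∈ B, z b + z j‖ ≤ c (p + 1) + η := fun j hj => by
    have hjB : j ∉ B := fun h => by
      have h1 := Finset.mem_Ico.1 h
      have h2 := Finset.mem_Ico.1 hj
      omega
    have := h2 (insert j B) (by rw [Finset.card_insert_of_notMem hjB]; simp [hB]) (fun b hb => by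
      rcases Finset.mem_insert.1 hb with rfl | hb
      · have := Finset.mem_Ico.1 hj
        omega
      · exact (Finset.mem_Ico.1 hb).1)
    rw [Finset.sum_insert hjB, add_comm] at this
    linarith [(abs_lt.1 this).2]
  have e4 : ‖((2 : ℝ) ^ n) • ∑ b ∈ B, z b + ∑ j ∈ J, z j‖ ≤ 2 ^ n * (c (p + 1) + η) := by
    have : ((2 : ℝ) ^ n) • ∑ b ∈ B, z b + ∑ j ∈ J, z j = ∑ j ∈ J, (∑ b ∈ B, z b + z j) := by
      rw [Finset.sum_add_distrib, Finset.sum_const, hJcard, ← Nat.cast_smul_eq_nsmul ℝ]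
      push_cast
      rfl
    rw [this]
    refine (norm_sum_le_of_le _ e2).trans ?_
    rw [Finset.sum_const, hJcard, nsmul_eq_mul]
    push_cast
    rfl
  have e5 : (2 : ℝ) ^ n * ‖∑ b ∈ B, z b‖ ≤ 2 ^ n * (c (p + 1) + η) + 2 := by
    have h := norm_sub_le (((2 : ℝ) ^ n) • ∑ b ∈ B, z b + ∑ j ∈ J, z j) (∑ j ∈ J, z j)
    rw [add_sub_cancel_right, norm_smul, Real.norm_of_nonneg (by positivity)] at h
    linarith [(abs_lt.1 e3).2]
  have e6 : (2 : ℝ) ≤ 2 ^ n * (2 * η) := by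
    rw [div_lt_iff₀ hη] at hn
    linarith
  have e7 : ‖∑ b ∈ B, z b‖ ≤ c (p + 1) + 3 * η := by
    refine le_of_mul_le_mul_left (a := (2 : ℝ) ^ n) ?_ (by positivity)
    linarith
  linarith [(abs_lt.1 e1).1]

/-- Along a subsequence, sums of any fixed number of late blocks have norm close to `1`. -/
theorem exists_subseq_sums
    (H : ∀ y : ℕ → X, IsNormalizedBlock e y → ∃ φ : ℕ → ℕ, StrictMono φ ∧ ∃ c : ℕ → ℝ,
      c 1 = 1 ∧ c 2 = 1 ∧ ∀ p, SumsTendTo (y ∘ φ) p (c p))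
    {y : ℕ → X} (hy : IsNormalizedBlock e y) :
    ∃ φ : ℕ → ℕ, StrictMono φ ∧ ∀ p, 1 ≤ p → SumsTendTo (y ∘ φ) p 1 := by
  obtain ⟨φ, hφ, c, hc1, -, hc⟩ := H y hy
  have hpow : ∀ n, c (2 ^ n) = 1 := fun n => by
    induction n with
    | zero => simpa using hc1
    | succ n ih =>
      have h1 := hc (2 ^ n)
      rw [ih] at h1
      rw [pow_succ, mul_comm]
      exact limit_double H (hy.comp hφ) Nat.one_le_two_pow h1 (hc _)
  have hmono : Monotone c := monotone_nat_of_le_succ (limit_mono hc hpow)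
  refine ⟨φ, hφ, fun p hp => ?_⟩
  have : c p = 1 := le_antisymm ((hmono Nat.lt_two_pow_self.le).trans (hpow p).le)
    (hc1.symm.le.trans (hmono hp))
  exact this ▸ hc p

/-- The limit norms of sums of late terms are those of a spreading model, so the hypothesis on
spreading models fixes the limit for two summands. -/
theorem exists_limits [CompleteSpace X] (he : IsSchauderBasis e)
    (h : ∀ y : ℕ → X, IsBlockBasis e y → (∀ j, ‖y j‖ = 1) →
      ∀ (S : Type) [NormedAddCommGroup S] [NormedSpace ℝ S] [CompleteSpace S]
        (s : ℕ → S), IsSpreadingModel y s → ‖s 0 + s 1‖ = 1)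
    (y : ℕ → X) (hy : IsNormalizedBlock e y) :
    ∃ φ : ℕ → ℕ, StrictMono φ ∧ ∃ c : ℕ → ℝ,
      c 1 = 1 ∧ c 2 = 1 ∧ ∀ p, SumsTendTo (y ∘ φ) p (c p) := by
  obtain ⟨φ, hφ, S, i1, i2, i3, s, hs, hlim⟩ := exists_spreadingModel he hy
  refine ⟨φ, hφ, fun p => ‖∑ i ∈ Finset.range p, s i‖, ?_, ?_, hlim⟩
  · have : |1 - ‖∑ i ∈ Finset.range 1, s i‖| ≤ 0 := le_of_forall_pos_le_add fun η hη => by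
      obtain ⟨N, hN⟩ := hlim 1 η hη
      have := hN {N} (by simp) (by simp)
      rw [Finset.sum_singleton, hy.1] at this
      linarith
    exact (sub_eq_zero.1 (abs_nonpos_iff.1 this)).symm
  · have := h _ (hy.comp hφ).isBlockBasis (hy.comp hφ).1 S s hs
    simpa [Finset.sum_range_succ] using this

end sums

/-! ### Choosing the next index -/

section induction_step

variable {X : Type*} [NormedAddCommGroup X] [NormedSpace ℝ X]

/-- The coefficients of `a` vanish at all indices `≤ M`. -/
def VanishesUpTo (e : ℕ → X) (M : ℕ) (a : X) : Prop :=
  ∃ c : ℕ → ℝ, Tendsto (fun n => ∑ i ∈ Finset.range n, c i • e i) atTop (𝓝 a) ∧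
    ∀ i ≤ M, c i = 0

/-- `x` and `y` are the first `k` pairs of blocks required for the vector `a`; only the values at
indices `< k` matter. -/
structure IsTuple (e : ℕ → X) (ε : ℕ → ℝ) (m : ℕ → ℕ) (k : ℕ) (a : X) (x y : ℕ → X) : Prop where
  mem : ∀ i < k, ∃ n ≤ m (i + 1), x i ∈ blockSpan e (m i) n ∧ y i ∈ blockSpan e n (m (i + 1))
  norm_x : ∀ i < k, |‖x i‖ - 1| < ε i
  norm_y : ∀ i < k, |‖y i‖ - 1| < ε i
  bound : ∀ F ⊆ Finset.range k,
    ‖∑ i ∈ F, x i + ∑ i ∈ Finset.range k, y i + a‖ ≤ 1 + ∑ i ∈ Finset.range k, ε i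

/-- The first `k` terms of `m` serve every norm-one vector supported beyond `m k`. -/
def Good (e : ℕ → X) (ε : ℕ → ℝ) (k : ℕ) (m : ℕ → ℕ) : Prop :=
  ∀ a : X, ‖a‖ = 1 → VanishesUpTo e (m k) a → ∃ x y : ℕ → X, IsTuple e ε m k a x y

theorem Good.congr {e : ℕ → X} {ε : ℕ → ℝ} {k : ℕ} {m m' : ℕ → ℕ} (hG : Good e ε k m)
    (hm : ∀ i ≤ k, m i = m' i) : Good e ε k m' := by
  intro a ha hv
  rw [← hm k le_rfl] at hv
  obtain ⟨x, y, h⟩ := hG a ha hv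
  refine ⟨x, y, fun i hi => ?_, h.norm_x, h.norm_y, h.bound⟩
  rw [← hm i (by omega), ← hm (i + 1) (by omega)]
  exact h.mem i hi

variable {e : ℕ → X} {ε : ℕ → ℝ}

/-- The set in which all tuples lie, by `IsTuple.mem_compact`, is compact. -/
theorem isCompact_tuples (k M : ℕ) : IsCompact (Set.pi Set.univ fun _ : Fin k =>
    {v : X | v ∈ blockSpan e 0 M ∧ ‖v‖ ≤ 2} ×ˢ {v : X | v ∈ blockSpan e 0 M ∧ ‖v‖ ≤ 2}) := by
  have hK : IsCompact {v : X | v ∈ blockSpan e 0 M ∧ ‖v‖ ≤ 2} := by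
    have : FiniteDimensional ℝ (blockSpan e 0 M) :=
      FiniteDimensional.span_of_finite ℝ ((Finset.finite_toSet _).image _)
    have : ProperSpace (blockSpan e 0 M) := FiniteDimensional.proper ℝ _
    have h := (isCompact_closedBall (0 : blockSpan e 0 M) 2).image continuous_subtype_val
    convert h using 1
    ext v
    simp only [Set.mem_ofPred_eq, Set.mem_image, mem_closedBall_zero_iff]
    constructor
    · rintro ⟨h1, h2⟩
      exact ⟨⟨v, h1⟩, h2, rfl⟩
    · rintro ⟨w, hw, rfl⟩
      exact ⟨w.2, hw⟩
  exact isCompact_univ_pi fun _ => hK.prod hK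

theorem IsTuple.mem_compact {m : ℕ → ℕ} {k : ℕ} {a : X} {x y : ℕ → X}
    (h : IsTuple e ε m k a x y) (hm : ∀ i < k, m (i + 1) ≤ m k) (hε1 : ∀ i, ε i < 1) :
    (fun i : Fin k => (x i, y i)) ∈ Set.pi Set.univ fun _ : Fin k =>
      {v : X | v ∈ blockSpan e 0 (m k) ∧ ‖v‖ ≤ 2} ×ˢ
        {v : X | v ∈ blockSpan e 0 (m k) ∧ ‖v‖ ≤ 2} := by
  intro i _
  obtain ⟨n, hn, h1, h2⟩ := h.mem i i.2
  have h3 := (abs_lt.1 (h.norm_x i i.2)).2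
  have h4 := (abs_lt.1 (h.norm_y i i.2)).2
  have h5 := hε1 i
  exact ⟨⟨blockSpan_mono (Nat.zero_le _) (hn.trans (hm i i.2)) h1, by linarith⟩,
    ⟨blockSpan_mono (Nat.zero_le _) (hm i i.2) h2, by linarith⟩⟩

/-- Replacing the tuple by a nearby one and normalizing the tail cost at most
`(2 * k + 1) * δ`. -/
theorem IsTuple.perturb {m : ℕ → ℕ} {k : ℕ} {u : X} {x y x₀ y₀ : ℕ → X} {δ : ℝ} (hδ : 0 ≤ δ)
    (hu : 0 < ‖u‖) (hu1 : |‖u‖ - 1| < δ) (h : IsTuple e ε m k (‖u‖⁻¹ • u) x y)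
    (hx : ∀ i < k, ‖x₀ i - x i‖ ≤ δ) (hy : ∀ i < k, ‖y₀ i - y i‖ ≤ δ)
    {F : Finset ℕ} (hF : F ⊆ Finset.range k) :
    ‖∑ i ∈ F, x₀ i + ∑ i ∈ Finset.range k, y₀ i + u‖
      ≤ 1 + ∑ i ∈ Finset.range k, ε i + (2 * k + 1) * δ := by
  have h1 := h.bound F hF
  have h2 : ‖∑ i ∈ F, (x₀ i - x i)‖ ≤ k * δ := by
    refine (norm_sum_le_of_le F fun i hi => hx i (Finset.mem_range.1 (hF hi))).trans ?_
    rw [Finset.sum_const, nsmul_eq_mul]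
    gcongr
    simpa using Finset.card_le_card hF
  have h3 : ‖∑ i ∈ Finset.range k, (y₀ i - y i)‖ ≤ k * δ := by
    refine (norm_sum_le_of_le _ fun i hi => hy i (Finset.mem_range.1 hi)).trans ?_
    rw [Finset.sum_const, nsmul_eq_mul, Finset.card_range]
  have h4 := norm_sub_normalize hu
  have h5 : ∑ i ∈ F, x₀ i + ∑ i ∈ Finset.range k, y₀ i + u
      = (∑ i ∈ F, x i + ∑ i ∈ Finset.range k, y i + ‖u‖⁻¹ • u)
        + ∑ i ∈ F, (x₀ i - x i) + ∑ i ∈ Finset.range k, (y₀ i - y i) + (u - ‖u‖⁻¹ • u) := by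
    rw [Finset.sum_sub_distrib, Finset.sum_sub_distrib]
    abel
  rw [h5]
  refine norm_add₄_le.trans ?_
  linarith

/-- If `m 0, …, m k` serve all norm-one vectors supported beyond `m k`, then `m (k + 1)` can be
chosen. Otherwise the blocks approximating counterexamples have sums that, for two different
numbers of summands, share almost the same tuple; grouping such a sum into `x k`, `y k` and a last
block gives a tuple for a counterexample. -/
theorem exists_step
    (D : ∀ y : ℕ → X, IsNormalizedBlock e y →
      ∃ φ : ℕ → ℕ, StrictMono φ ∧ ∀ p, 1 ≤ p → SumsTendTo (y ∘ φ) p 1)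
    (hε : ∀ i, 0 < ε i) (hε1 : ∀ i, ε i < 1) {k : ℕ} {m : ℕ → ℕ}
    (hm : ∀ i < k, m (i + 1) ≤ m k) (hG : Good e ε k m) :
    ∃ M > m k, Good e ε (k + 1) (Function.update m (k + 1) M) := by
  by_contra! hcon
  set δ : ℝ := ε k / (2 * k + 2) with hδ
  have hδ0 : 0 < δ := div_pos (hε k) (by positivity)
  have hδε : (2 * k + 2) * δ = ε k := mul_div_cancel₀ _ (by positivity)
  have hδle : δ ≤ ε k := by
    rw [← hδε]
    have : (0 : ℝ) ≤ k := k.cast_nonneg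
    nlinarith
  -- counterexamples `a M` and their finitely supported approximations `b M`
  have hbad : ∀ M, ∃ L > M, ∃ a b : X, m k < M → ‖b‖ = 1 ∧ b ∈ blockSpan e M L ∧ ‖a - b‖ < δ ∧
      ∀ x y, ¬ IsTuple e ε (Function.update m (k + 1) M) (k + 1) a x y := by
    intro M
    by_cases hM : m k < M
    · have := hcon M hM
      simp only [Good, not_forall, not_exists] at this
      obtain ⟨a, ha, ⟨c, hc, hv⟩, hno⟩ := this
      rw [Function.update_self] at hv
      obtain ⟨L, hL, b, hb, hb1, hab⟩ := exists_block_approx ha hc hv hδ0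
      exact ⟨L, hL, a, b, fun _ => ⟨hb1, hb, hab, hno⟩⟩
    · exact ⟨M + 1, by omega, 0, 0, fun h => absurd h hM⟩
  choose L hL a b hab using hbad
  let ψ : ℕ → ℕ := fun j => Nat.rec (m k + 1) (fun _ M => L M) j
  have hψ : StrictMono ψ := strictMono_nat_of_lt_succ fun j => hL (ψ j)
  have hψm : ∀ j, m k < ψ j := fun j =>
    lt_of_lt_of_le (Nat.lt_succ_self _) (hψ.monotone (Nat.zero_le j))
  have hblock : IsNormalizedBlock e (b ∘ ψ) :=
    ⟨fun j => (hab _ (hψm j)).1, ψ, hψ, fun j => (hab _ (hψm j)).2.1⟩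
  obtain ⟨φ, hφ, hsums⟩ := D _ hblock
  -- a tuple for every admissible vector, and a finite colouring of the tuples
  have htup : ∀ v : X, ∃ x y : ℕ → X, ‖v‖ = 1 → VanishesUpTo e (m k) v →
      IsTuple e ε m k v x y := by
    intro v
    by_cases h : ‖v‖ = 1 ∧ VanishesUpTo e (m k) v
    · obtain ⟨x, y, hxy⟩ := hG v h.1 h.2
      exact ⟨x, y, fun _ _ => hxy⟩
    · exact ⟨0, 0, fun h1 h2 => absurd ⟨h1, h2⟩ h⟩
  choose x y hxy using htup
  obtain ⟨κ, _, col, hcol⟩ := exists_finite_colouring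
    (isCompact_tuples (e := e) k (m k)).totallyBounded hδ0
  let nrm : X → X := fun u => ‖u‖⁻¹ • u
  let tup : X → (Fin k → X × X) := fun u i => (x (nrm u) i, y (nrm u) i)
  obtain ⟨θ, hθ, C, hC⟩ := exists_ramsey (κ := fun _ => κ)
    (fun _ E => col (tup (∑ j ∈ E, b (ψ (φ j)))))
  let Ψ : ℕ → ℕ := fun j => ψ (φ (θ j))
  have hΨ : StrictMono Ψ := hψ.comp (hφ.comp hθ)
  have hw : ∀ j, b (Ψ j) ∈ blockSpan e (Ψ j) (Ψ (j + 1)) :=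
    fun j => blockSpan_mono le_rfl (hψ.monotone (hφ (hθ j.lt_succ_self)))
      (hab _ (hψm (φ (θ j)))).2.1
  let U : Finset ℕ → X := fun B => ∑ j ∈ B, b (Ψ j)
  have hUmem : ∀ (B : Finset ℕ) (p q : ℕ), (∀ i ∈ B, p ≤ i ∧ i < q) →
      U B ∈ blockSpan e (Ψ p) (Ψ q) := fun B p q hB => by
    simpa only [one_smul] using sum_range_mem_blockSpan hΨ hw (fun _ => 1) B hB
  have hUnorm : ∀ p, 1 ≤ p → ∀ᶠ N in atTop, ∀ B : Finset ℕ, B.card = p → (∀ i ∈ B, N ≤ i) →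
      |‖U B‖ - 1| < δ := by
    intro p hp
    filter_upwards [(hsums p hp).eventually hδ0] with N hN B hB hBN
    have := hN (B.image θ) (by rw [Finset.card_image_of_injective _ hθ.injective, hB])
      (by
        intro i hi
        obtain ⟨j, hj, rfl⟩ := Finset.mem_image.1 hi
        exact (hBN j hj).trans (hθ.id_le j))
    rwa [Finset.sum_image fun _ _ _ _ h => hθ.injective h] at this
  have hUcol : ∀ B : Finset ℕ, (∀ i ∈ B, B.card ≤ i) → col (tup (U B)) = C B.card B.card := by
    intro B hB
    have := hC B.card B le_rfl hB
    rwa [Finset.sum_image fun _ _ _ _ h => hθ.injective h] at this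
  have hUpos : ∀ B : Finset ℕ, |‖U B‖ - 1| < δ → 0 < ‖U B‖ := fun B hB => by
    have := (abs_lt.1 hB).1
    have := hε1 k
    linarith
  have hUtup : ∀ B : Finset ℕ, |‖U B‖ - 1| < δ →
      IsTuple e ε m k (nrm (U B)) (x (nrm (U B))) (y (nrm (U B))) := by
    intro B hB
    refine hxy _ (norm_normalize (hUpos B hB)) ?_
    have hmem : nrm (U B) ∈ blockSpan e (Ψ 0) (Ψ (B.sup id + 1)) :=
      Submodule.smul_mem _ _ (hUmem B _ _ fun i hi =>
        ⟨Nat.zero_le _, Nat.lt_succ_of_le (Finset.le_sup (f := id) hi)⟩)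
    obtain ⟨c, hc, hc0, -⟩ := tendsto_of_mem_blockSpan hmem
    exact ⟨c, hc, fun i hi => hc0 i (hi.trans (hψm _).le)⟩
  -- two set sizes `s + 1 < q + s + 1` whose sums receive the same colour
  obtain ⟨s, q, hs, hq, hcolour⟩ : ∃ s q : ℕ, 1 ≤ s ∧ 1 ≤ q ∧
      C (s + 1) (s + 1) = C (q + s + 1) (q + s + 1) := by
    obtain ⟨i, j, hij, hC'⟩ := Finite.exists_ne_map_eq_of_infinite fun n => C (n + 2) (n + 2)
    rcases lt_or_gt_of_ne hij with hlt | hlt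
    · refine ⟨i + 1, j - i, by omega, by omega, hC'.trans ?_⟩
      rw [show j - i + (i + 1) + 1 = j + 2 by omega]
    · refine ⟨j + 1, i - j, by omega, by omega, hC'.symm.trans ?_⟩
      rw [show i - j + (j + 1) + 1 = i + 2 by omega]
  obtain ⟨N, hNq, hNs, hNs1, hNqs, hN⟩ := ((hUnorm q hq).and ((hUnorm s hs).and
    ((hUnorm (s + 1) (by omega)).and ((hUnorm (q + s + 1) (by omega)).and
      (eventually_ge_atTop (q + s + 1)))))).exists
  set l := N + q + s with hl
  set Bx := Finset.Ico N (N + q) with hBx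
  set By := Finset.Ico (N + q) l with hBy
  set B := Finset.Ico (N + q) (l + 1) with hBdef
  set B' := Finset.Ico N (l + 1) with hB'def
  have hBcard : B.card = s + 1 := by simp only [hBdef, Nat.card_Ico]; omega
  have hBcard' : B'.card = q + s + 1 := by simp only [hB'def, Nat.card_Ico]; omega
  have hUB : U B = U By + b (Ψ l) := Finset.sum_Ico_succ_top (by omega) _
  have hUB' : U B' = U Bx + U By + b (Ψ l) := by
    rw [add_assoc, ← hUB]
    exact (Finset.sum_Ico_consecutive _ (by omega) (by omega)).symm
  have nx := hNq Bx (by simp [hBx]) (fun i hi => (Finset.mem_Ico.1 hi).1)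
  have ny := hNs By (by simp only [hBy, Nat.card_Ico]; omega)
    (fun i hi => by have := Finset.mem_Ico.1 hi; omega)
  have nB := hNs1 B hBcard (fun i hi => by have := Finset.mem_Ico.1 hi; omega)
  have nB' := hNqs B' hBcard' (fun i hi => (Finset.mem_Ico.1 hi).1)
  have tB := hUtup B nB
  have tB' := hUtup B' nB'
  have hdist : dist (tup (U B)) (tup (U B')) < δ := by
    refine hcol _ (tB.mem_compact hm hε1) _ (tB'.mem_compact hm hε1) ?_
    rw [hUcol B fun i hi => by have := Finset.mem_Ico.1 hi; omega,
      hUcol B' fun i hi => by have := Finset.mem_Ico.1 hi; omega, hBcard, hBcard', hcolour]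
  have hd : ∀ i < k, ‖x (nrm (U B)) i - x (nrm (U B')) i‖ ≤ δ ∧
      ‖y (nrm (U B)) i - y (nrm (U B')) i‖ ≤ δ := by
    intro i hi
    have h1 : dist (tup (U B) ⟨i, hi⟩) (tup (U B') ⟨i, hi⟩) ≤ δ :=
      (dist_le_pi_dist _ _ _).trans hdist.le
    rw [Prod.dist_eq, max_le_iff, dist_eq_norm, dist_eq_norm] at h1
    exact h1
  set x₀ := x (nrm (U B)) with hx₀
  set y₀ := y (nrm (U B)) with hy₀
  have hfinal := (hab (Ψ l) (hψm _)).2.2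
  refine hfinal.2 (Function.update x₀ k (U Bx)) (Function.update y₀ k (U By)) ⟨?_, ?_, ?_, ?_⟩
  · intro i hi
    rcases Nat.lt_succ_iff_lt_or_eq.1 hi with hi | rfl
    · rw [Function.update_of_ne hi.ne, Function.update_of_ne hi.ne,
        Function.update_of_ne (by omega), Function.update_of_ne (by omega)]
      exact tB.mem i hi
    · rw [Function.update_self, Function.update_self, Function.update_self,
        Function.update_of_ne (by omega)]
      refine ⟨Ψ (N + q), hΨ.monotone (by omega), ?_, ?_⟩
      · exact blockSpan_mono (hψm _).le le_rfl (hUmem Bx N (N + q) fun i hi => Finset.mem_Ico.1 hi)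
      · exact hUmem By (N + q) l fun i hi => Finset.mem_Ico.1 hi
  · intro i hi
    rcases Nat.lt_succ_iff_lt_or_eq.1 hi with hi | rfl
    · rw [Function.update_of_ne hi.ne]
      exact tB.norm_x i hi
    · rw [Function.update_self]
      exact nx.trans_le hδle
  · intro i hi
    rcases Nat.lt_succ_iff_lt_or_eq.1 hi with hi | rfl
    · rw [Function.update_of_ne hi.ne]
      exact tB.norm_y i hi
    · rw [Function.update_self]
      exact ny.trans_le hδle
  · intro F hF
    have hy' : ∑ i ∈ Finset.range (k + 1), Function.update y₀ k (U By) i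
        = ∑ i ∈ Finset.range k, y₀ i + U By := by
      rw [Finset.sum_range_succ, Function.update_self]
      congr 1
      exact Finset.sum_congr rfl fun i hi =>
        Function.update_of_ne (Finset.mem_range.1 hi).ne _ _
    have hFe : F.erase k ⊆ Finset.range k := fun i hi => by
      have h1 := Finset.mem_erase.1 hi
      have h2 := Finset.mem_range.1 (hF h1.2)
      rw [Finset.mem_range]
      omega
    have hx' : ∑ i ∈ F.erase k, Function.update x₀ k (U Bx) i = ∑ i ∈ F.erase k, x₀ i :=
      Finset.sum_congr rfl fun i hi => Function.update_of_ne (Finset.ne_of_mem_erase hi) _ _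
    have e1 := tB.perturb (x₀ := x₀) (y₀ := y₀) hδ0.le (hUpos B nB) nB
      (fun i _ => by simpa using hδ0.le) (fun i _ => by simpa using hδ0.le) hFe
    have e2 := tB'.perturb (x₀ := x₀) (y₀ := y₀) hδ0.le (hUpos B' nB') nB'
      (fun i hi => (hd i hi).1) (fun i hi => (hd i hi).2) hFe
    rw [hUB] at e1
    rw [hUB'] at e2
    rw [hy', Finset.sum_range_succ]
    have e3 : ‖a (Ψ l) - b (Ψ l)‖ < δ := hfinal.1
    by_cases hk : k ∈ F
    · rw [← Finset.sum_erase_add F _ hk, hx', Function.update_self]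
      have : ∑ i ∈ F.erase k, x₀ i + U Bx + (∑ i ∈ Finset.range k, y₀ i + U By) + a (Ψ l)
          = (∑ i ∈ F.erase k, x₀ i + ∑ i ∈ Finset.range k, y₀ i + (U Bx + U By + b (Ψ l)))
            + (a (Ψ l) - b (Ψ l)) := by abel
      rw [this]
      refine (norm_add_le _ _).trans ?_
      linarith
    · rw [Finset.erase_eq_of_notMem hk] at e1 hx'
      rw [hx']
      have : ∑ i ∈ F, x₀ i + (∑ i ∈ Finset.range k, y₀ i + U By) + a (Ψ l)
          = (∑ i ∈ F, x₀ i + ∑ i ∈ Finset.range k, y₀ i + (U By + b (Ψ l)))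
            + (a (Ψ l) - b (Ψ l)) := by abel
      rw [this]
      refine (norm_add_le _ _).trans ?_
      linarith

/-- Iterating the step produces one sequence `m` that is good for all `k`. -/
theorem exists_seq
    (D : ∀ y : ℕ → X, IsNormalizedBlock e y →
      ∃ φ : ℕ → ℕ, StrictMono φ ∧ ∀ p, 1 ≤ p → SumsTendTo (y ∘ φ) p 1)
    (hε : ∀ i, 0 < ε i) (hε1 : ∀ i, ε i < 1) :
    ∃ m : ℕ → ℕ, m 0 = 1 ∧ StrictMono m ∧ ∀ k, Good e ε k m := by
  let P : ℕ → (ℕ → ℕ) → Prop := fun k m =>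
    m 0 = 1 ∧ (∀ i < k, m i < m (i + 1)) ∧ Good e ε k m
  have h0 : P 0 fun _ => 1 :=
    ⟨rfl, by simp, fun a ha _ => ⟨0, 0, by simp, by simp, by simp, fun F hF => by
      have : F = ∅ := by simpa using hF
      simp [this, ha]⟩⟩
  have hstep : ∀ k m, P k m → ∃ M, P (k + 1) (Function.update m (k + 1) M) := by
    rintro k m ⟨h1, h2, h3⟩
    have hle : ∀ i ≤ k, m i ≤ m k := fun i hi => by
      induction hi using Nat.decreasingInduction with
      | self => exact le_rfl
      | of_succ j hj ih => exact (h2 j hj).le.trans ih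
    obtain ⟨M, hM, hMG⟩ := exists_step D hε hε1 (fun i hi => hle (i + 1) hi) h3
    refine ⟨M, ?_, fun i hi => ?_, hMG⟩
    · rwa [Function.update_of_ne (by omega)]
    · rcases Nat.lt_succ_iff_lt_or_eq.1 hi with hi | rfl
      · rw [Function.update_of_ne (by omega), Function.update_of_ne (by omega)]
        exact h2 i hi
      · rwa [Function.update_self, Function.update_of_ne (by omega)]
  choose! nxt hnxt using hstep
  let g : ℕ → ℕ → ℕ := fun k =>
    Nat.rec (fun _ => 1) (fun k m => Function.update m (k + 1) (nxt k m)) k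
  have hg : ∀ k, P k (g k) := fun k => by
    induction k with
    | zero => exact h0
    | succ k ih => exact hnxt k _ ih
  have hagree : ∀ k i, i ≤ k → g k i = g i i := fun k i hi => by
    induction k, hi using Nat.le_induction with
    | base => rfl
    | succ k hk ih =>
      rw [← ih]
      exact Function.update_of_ne (by omega) _ _
  refine ⟨fun k => g k k, rfl, strictMono_nat_of_lt_succ fun k => ?_, fun k => ?_⟩
  · have := (hg (k + 1)).2.1 k k.lt_succ_self
    rwa [hagree (k + 1) k (by omega)] at this
  · exact (hg k).2.2.congr fun i hi => hagree k i hi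

end induction_step

/-! ### The theorem -/

/-- Suppose every spreading model of every normalized block basis of a Schauder basis
`(e_i)` of a Banach space `X` satisfies `‖s 0 + s 1‖ = 1`, and let `ε_i ↓ 0` be
positive with `∑ ε_i < 1`.  Then there are `1 = m 0 < m 1 < ⋯` such that for every
`k` and every norm-one `a` whose coefficients vanish on `{0, 1, …, m k}` there are
successive vectors `x 0 < y 0 ≤ e (m 1) < x 1 < y 1 ≤ e (m 2) < ⋯ < x (k-1) < y (k-1)
≤ e (m k)` with `|‖x i‖ - 1| < ε i`, `|‖y i‖ - 1| < ε i` and, for every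
`F ⊆ {0, …, k-1}`, `‖∑_{i ∈ F} x i + ∑ i, y i + a‖ ≤ 1 + ∑_{i<k} ε i`. -/
theorem stmt7 {X : Type*} [NormedAddCommGroup X] [NormedSpace ℝ X] [CompleteSpace X]
    (e : ℕ → X) (he : IsSchauderBasis e)
    (h : ∀ y : ℕ → X, IsBlockBasis e y → (∀ j, ‖y j‖ = 1) →
      ∀ (S : Type) [NormedAddCommGroup S] [NormedSpace ℝ S] [CompleteSpace S]
        (s : ℕ → S), IsSpreadingModel y s → ‖s 0 + s 1‖ = 1)
    (ε : ℕ → ℝ) (hε : ∀ i, 0 < ε i) (hmono : Antitone ε)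
    (hlim : Filter.Tendsto ε Filter.atTop (nhds 0))
    (hsummable : Summable ε) (hsum : ∑' i, ε i < 1) :
    ∃ m : ℕ → ℕ, m 0 = 1 ∧ StrictMono m ∧
      ∀ k : ℕ, ∀ a : X, ‖a‖ = 1 →
      (∃ c : ℕ → ℝ,
        Filter.Tendsto (fun n => ∑ i ∈ Finset.range n, c i • e i) Filter.atTop (nhds a) ∧
        ∀ i ≤ m k, c i = 0) →
      ∃ (x y : Fin k → X) (A B : Fin k → Finset ℕ) (c d : ℕ → ℝ),
        (∀ i, (A i).Nonempty) ∧ (∀ i, (B i).Nonempty) ∧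
        (∀ i : Fin k, ∀ j ∈ A i, m i.val < j) ∧
        (∀ i : Fin k, ∀ p ∈ A i, ∀ q ∈ B i, p < q) ∧
        (∀ i : Fin k, ∀ j ∈ B i, j ≤ m (i.val + 1)) ∧
        (∀ i, x i = ∑ j ∈ A i, c j • e j) ∧
        (∀ i, y i = ∑ j ∈ B i, d j • e j) ∧
        (∀ i : Fin k, |‖x i‖ - 1| < ε i.val) ∧
        (∀ i : Fin k, |‖y i‖ - 1| < ε i.val) ∧
        ∀ F : Finset (Fin k),
          ‖(∑ i ∈ F, x i) + (∑ i, y i) + a‖ ≤ 1 + ∑ i ∈ Finset.range k, ε i := by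
  have hε1 : ∀ i, ε i < 1 := fun i =>
    (hsummable.le_tsum i fun j _ => (hε j).le).trans_lt hsum
  obtain ⟨m, hm0, hm, hG⟩ := exists_seq
    (fun y hy => exists_subseq_sums (exists_limits he h) hy) hε hε1
  refine ⟨m, hm0, hm, fun k a ha hv => ?_⟩
  obtain ⟨x, y, hxy⟩ := hG k a ha hv
  -- the blocks are nonzero since `ε i < 1`, so their intervals of support are nonempty
  have hne : ∀ {i : ℕ} {v : X}, |‖v‖ - 1| < ε i → v ≠ 0 := by
    rintro i v hv rfl
    have := hε1 i
    norm_num at hv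
    linarith
  choose n hn hx hy using fun i : Fin k => hxy.mem i i.2
  choose c' hc' using fun i => mem_blockSpan.1 (hx i)
  choose d' hd' using fun i => mem_blockSpan.1 (hy i)
  have hA : ∀ i : Fin k, (Finset.Ioc (m i) (n i)).Nonempty := fun i =>
    Finset.nonempty_of_sum_ne_zero ((hc' i).trans_ne (hne (hxy.norm_x i i.2)))
  have hB : ∀ i : Fin k, (Finset.Ioc (n i) (m (i + 1))).Nonempty := fun i =>
    Finset.nonempty_of_sum_ne_zero ((hd' i).trans_ne (hne (hxy.norm_y i i.2)))
  have hmn : ∀ i : Fin k, m i < n i := fun i => Finset.nonempty_Ioc.1 (hA i)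
  have hdisj : ∀ (i j : Fin k) (p : ℕ), m i < p → p ≤ m (i + 1) → m j < p → p ≤ m (j + 1) →
      i = j := by
    intro i j p h1 h2 h3 h4
    have h5 := hm.lt_iff_lt.1 (h1.trans_le h4)
    have h6 := hm.lt_iff_lt.1 (h3.trans_le h2)
    omega
  obtain ⟨c, hc⟩ := exists_glue (fun i : Fin k => Finset.Ioc (m i) (n i))
    (fun i j p hi hj => by
      rw [Finset.mem_Ioc] at hi hj
      exact hdisj i j p hi.1 (hi.2.trans (hn i)) hj.1 (hj.2.trans (hn j))) c'
  obtain ⟨d, hd⟩ := exists_glue (fun i : Fin k => Finset.Ioc (n i) (m (i + 1)))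
    (fun i j p hi hj => by
      rw [Finset.mem_Ioc] at hi hj
      exact hdisj i j p ((hmn i).trans hi.1) hi.2 ((hmn j).trans hj.1) hj.2) d'
  refine ⟨fun i => x i, fun i => y i, _, _, c, d, hA, hB, ?_, ?_, ?_, ?_, ?_,
    fun i => hxy.norm_x i i.2, fun i => hxy.norm_y i i.2, fun F => ?_⟩
  · exact fun i j hj => (Finset.mem_Ioc.1 hj).1
  · exact fun i p hp q hq => (Finset.mem_Ioc.1 hp).2.trans_lt (Finset.mem_Ioc.1 hq).1
  · exact fun i j hj => (Finset.mem_Ioc.1 hj).2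
  · exact fun i => (hc' i).symm.trans (Finset.sum_congr rfl fun j hj => by rw [hc i j hj])
  · exact fun i => (hd' i).symm.trans (Finset.sum_congr rfl fun j hj => by rw [hd i j hj])
  · have hF : F.map Fin.valEmbedding ⊆ Finset.range k := fun j hj => by
      obtain ⟨i, -, rfl⟩ := Finset.mem_map.1 hj
      exact Finset.mem_range.2 i.2
    have := hxy.bound _ hF
    rw [Finset.sum_map, ← Fin.sum_univ_eq_sum_range y k] at this
    exact this
end
end

section
/- On the vector space of finitely supported sequences a : ℕ → ℝ define ‖a‖ = sup{|a(i) − a(j)| : i, j ∈ ℕ, i < j}, let X be the completion under this norm, and let (e_i) denote the unit vectors. Then: (1) every spreading model (s_n) of every normalized block basis of (e_i) satisfies ‖s_1 + s_2‖ = 1; (2) (e_i) is 1-spreading, i.e. ‖Σ_{i=1}^n a_i e_{k_i}‖ = ‖Σ_{i=1}^n a_i e_i‖ for all scalars and all k_1 < ⋯ < k_n (so (e_i) is its own spreading model); but (3) (e_i) is not 1-equivalent to the unit vector basis of c₀, i.e. it is not the case that ‖Σ_i a_i e_i‖ = max_i |a_i| for all finitely supported scalars. -/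
/-!
Write `U x = sup_i x i` (`topVal` below) for the top of a finitely supported sequence.
Since `x` vanishes at some
index, `U x ≥ 0`, and the norm is the oscillation: `dNorm x = U x + U (-x)` (`dNorm_eq`).

(1) On disjointly supported vectors `U (x + y) = max (U x) (U y)`. If `x` and `y` are moreover
normalized, then `U (-x) = 1 - U x` and likewise for `y`, so `dNorm (x + y) = 1 + |U x - U y|`.
For a normalized block sequence `y`, the numbers `U (y n)` lie in `[0, 1]`, so by compactness there
are arbitrarily late pairs `i < j` with `|U (y i) - U (y j)|` as small as desired. The norms
`dNorm (y i + y j)` of late pairs converge to `‖s 0 + s 1‖`, which is therefore `1`.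

(2) `U (∑ a i • e (k i))` is the maximum of `0` and the `a i` for every injective `k`, hence does
not depend on `k`.

(3) The vector `e 0 - e 1` has norm at least `2`, while its coordinates are at most `1` in absolute
value.
-/

noncomputable section

/-- `s` is a spreading model of the sequence `x` of finitely supported sequences,
with respect to the norm (function) `N`. -/
def IsSpreadingModelWith (N : (ℕ →₀ ℝ) → ℝ)
    {S : Type*} [NormedAddCommGroup S] [NormedSpace ℝ S]
    (x : ℕ → (ℕ →₀ ℝ)) (s : ℕ → S) : Prop :=
  IsBasicSeq s ∧
  ∃ ε : ℕ → ℝ, (∀ n, 0 < ε n) ∧ Antitone ε ∧ Filter.Tendsto ε Filter.atTop (nhds 0) ∧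
    ∀ (n : ℕ) (a : Fin n → ℝ), (∀ i, |a i| ≤ 1) →
      ∀ k : Fin n → ℕ, StrictMono k → (∀ i, n ≤ k i) →
        |N (∑ i, a i • x (k i)) - ‖∑ i, a i • s i‖| < ε n

/-- a block sequence of the unit vector basis of `c₀₀`. -/
def IsBlockSeq (x : ℕ → (ℕ →₀ ℝ)) : Prop :=
  (∀ n, x n ≠ 0) ∧ ∀ n, ∀ p ∈ (x n).support, ∀ q ∈ (x (n + 1)).support, p < q

/-- the norm `‖a‖ = sup {|a i - a j| : i < j}` on finitely supported sequences. -/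
def dNorm (x : ℕ →₀ ℝ) : ℝ := ⨆ p : ℕ × ℕ, if p.1 < p.2 then |x p.1 - x p.2| else 0

/-- The supremum of the coordinates of a finitely supported sequence. -/
def topVal (x : ℕ →₀ ℝ) : ℝ := ⨆ i, x i

lemma bddAbove_coord (x : ℕ →₀ ℝ) : BddAbove (Set.range fun i => x i) :=
  (Finsupp.finite_range x).bddAbove

lemma le_topVal (x : ℕ →₀ ℝ) (i : ℕ) : x i ≤ topVal x := le_ciSup (bddAbove_coord x) i

lemma topVal_nonneg (x : ℕ →₀ ℝ) : 0 ≤ topVal x := by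
  obtain ⟨i, hi⟩ := Infinite.exists_notMem_finset x.support
  rw [Finsupp.notMem_support_iff] at hi
  exact hi ▸ le_topVal x i

lemma neg_le_topVal_neg (x : ℕ →₀ ℝ) (i : ℕ) : -x i ≤ topVal (-x) := le_topVal (-x) i

lemma dNorm_term_le (x : ℕ →₀ ℝ) (p : ℕ × ℕ) :
    (if p.1 < p.2 then |x p.1 - x p.2| else 0) ≤ topVal x + topVal (-x) := by
  have h1 := le_topVal x p.1
  have h2 := le_topVal x p.2
  have h3 := neg_le_topVal_neg x p.1
  have h4 := neg_le_topVal_neg x p.2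
  split_ifs
  · rw [abs_le]
    constructor <;> linarith
  · exact add_nonneg (topVal_nonneg _) (topVal_nonneg _)

lemma bddAbove_dNorm_term (x : ℕ →₀ ℝ) :
    BddAbove (Set.range fun p : ℕ × ℕ => if p.1 < p.2 then |x p.1 - x p.2| else 0) :=
  ⟨_, by rintro _ ⟨p, rfl⟩; exact dNorm_term_le x p⟩

lemma sub_le_dNorm (x : ℕ →₀ ℝ) (i j : ℕ) : x i - x j ≤ dNorm x := by
  rcases lt_trichotomy i j with h | rfl | h
  · have := le_ciSup (bddAbove_dNorm_term x) (i, j)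
    simp only [h, if_true] at this
    exact (le_abs_self _).trans this
  · have := le_ciSup (bddAbove_dNorm_term x) (i, i)
    simpa [dNorm] using this
  · have := le_ciSup (bddAbove_dNorm_term x) (j, i)
    simp only [h, if_true] at this
    rw [abs_sub_comm] at this
    exact (le_abs_self _).trans this

/-- The norm is the oscillation of the sequence. -/
lemma dNorm_eq (x : ℕ →₀ ℝ) : dNorm x = topVal x + topVal (-x) := by
  apply le_antisymm
  · exact ciSup_le (dNorm_term_le x)
  · apply ciSup_add_ciSup_le
    intro i j
    simpa [sub_eq_add_neg] using sub_le_dNorm x i j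

lemma topVal_add {x y : ℕ →₀ ℝ} (h : ∀ i, x i = 0 ∨ y i = 0) :
    topVal (x + y) = max (topVal x) (topVal y) := by
  have h0 := topVal_nonneg (x + y)
  apply le_antisymm
  · refine ciSup_le fun i => ?_
    rcases h i with hi | hi
    · simpa [hi] using Or.inr (le_topVal y i)
    · simpa [hi] using Or.inl (le_topVal x i)
  · -- A coordinate of one summand either survives in `x + y`, or is `0 ≤ topVal (x + y)`.
    refine max_le (ciSup_le fun i => ?_) (ciSup_le fun i => ?_) <;>
    · have := le_topVal (x + y) i
      rcases h i with hi | hi <;> simp only [Finsupp.add_apply, hi] at this ⊢ <;> linarith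

/-- Disjointly supported normalized vectors: the norm of the sum measures the difference of the
tops. -/
lemma dNorm_add {x y : ℕ →₀ ℝ} (h : ∀ i, x i = 0 ∨ y i = 0) (hx : dNorm x = 1)
    (hy : dNorm y = 1) : dNorm (x + y) = 1 + |topVal x - topVal y| := by
  have h' : ∀ i, (-x) i = 0 ∨ (-y) i = 0 := by simpa using h
  rw [dNorm_eq] at hx hy ⊢
  rw [neg_add, topVal_add h, topVal_add h']
  rcases le_total (topVal x) (topVal y) with hle | hle
  · rw [max_eq_right hle, max_eq_left (by linarith), abs_of_nonpos (by linarith)]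
    linarith
  · rw [max_eq_left hle, max_eq_right (by linarith), abs_of_nonneg (by linarith)]
    linarith

lemma IsBlockSeq.lt {y : ℕ → (ℕ →₀ ℝ)} (hy : IsBlockSeq y) {i j : ℕ} (hij : i < j) :
    ∀ p ∈ (y i).support, ∀ q ∈ (y j).support, p < q := by
  induction j, hij using Nat.le_induction with
  | base => exact hy.2 i
  | succ j _ ih =>
    intro p hp q hq
    -- Consecutive blocks are compared through a point of the intermediate, nonzero block.
    obtain ⟨r, hr⟩ := Finsupp.support_nonempty_iff.2 (hy.1 j)
    exact (ih p hp r hr).trans (hy.2 j r hr q hq)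

lemma IsBlockSeq.disjoint {y : ℕ → (ℕ →₀ ℝ)} (hy : IsBlockSeq y) {i j : ℕ} (hij : i < j)
    (p : ℕ) : y i p = 0 ∨ y j p = 0 := by
  by_contra! hne
  exact lt_irrefl p (hy.lt hij p (Finsupp.mem_support_iff.2 hne.1) p
    (Finsupp.mem_support_iff.2 hne.2))

lemma exists_close_pair {M : ℕ → ℝ} (hM : ∀ n, M n ∈ Set.Icc (0 : ℝ) 1) (n : ℕ) {δ : ℝ}
    (hδ : 0 < δ) : ∃ i j, n ≤ i ∧ i < j ∧ |M i - M j| < δ := by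
  obtain ⟨a, -, φ, hφ, hlim⟩ := isCompact_Icc.tendsto_subseq hM
  obtain ⟨N, hN⟩ := Metric.cauchySeq_iff.1 hlim.cauchySeq δ hδ
  refine ⟨φ (max N n), φ (max N n + 1), (le_max_right N n).trans (hφ.id_le _),
    hφ (Nat.lt_succ_self _), ?_⟩
  have := hN (max N n) (le_max_left _ _) (max N n + 1) ((le_max_left _ _).trans (Nat.le_succ _))
  rwa [Real.dist_eq] at this

/-- The defining estimate of a spreading model, restricted to sums of two vectors but with the
accuracy `ε n` for arbitrarily large `n`: it is applied to the coefficients `1, 1, 0, …, 0`. -/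
lemma spreading_pair {N : (ℕ →₀ ℝ) → ℝ} {S : Type*} [NormedAddCommGroup S] [NormedSpace ℝ S]
    {x : ℕ → (ℕ →₀ ℝ)} {s : ℕ → S} {ε : ℕ → ℝ}
    (h : ∀ (n : ℕ) (a : Fin n → ℝ), (∀ i, |a i| ≤ 1) →
      ∀ k : Fin n → ℕ, StrictMono k → (∀ i, n ≤ k i) →
        |N (∑ i, a i • x (k i)) - ‖∑ i, a i • s i‖| < ε n)
    (n i j : ℕ) (hi : n + 2 ≤ i) (hij : i < j) :
    |N (x i + x j) - ‖s 0 + s 1‖| < ε (n + 2) := by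
  -- The indices are `i, j, j + 1, …, j + n`.
  have key := h (n + 2) (fun l => if l.val < 2 then 1 else 0)
    (fun l => by split_ifs <;> simp)
    (fun l => if l.val = 0 then i else j + l.val - 1)
    (by
      intro l m hlm
      have : l.val < m.val := hlm
      dsimp only
      split_ifs <;> omega)
    (by
      intro l
      split_ifs <;> omega)
  simpa [Fin.sum_univ_succ] using key

lemma topVal_sum_single_le_iff {n : ℕ} (a : Fin n → ℝ) {k : Fin n → ℕ}
    (hk : Function.Injective k) (c : ℝ) :
    topVal (∑ i, a i • Finsupp.single (k i) (1 : ℝ)) ≤ c ↔ 0 ≤ c ∧ ∀ i, a i ≤ c := by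
  have hval (m : Fin n) : (∑ i, a i • Finsupp.single (k i) (1 : ℝ)) (k m) = a m := by
    simp [Finsupp.finsetSum_apply, Finsupp.single_apply, hk.eq_iff]
  constructor
  · intro h
    exact ⟨(topVal_nonneg _).trans h, fun m => hval m ▸ (le_topVal _ (k m)).trans h⟩
  · rintro ⟨h0, h⟩
    refine ciSup_le fun p => ?_
    by_cases hp : ∃ m, k m = p
    · obtain ⟨m, rfl⟩ := hp
      exact (hval m).trans_le (h m)
    · push Not at hp
      simpa [Finsupp.finsetSum_apply, Finsupp.single_apply, hp] using h0

lemma topVal_sum_single_congr {n : ℕ} (a : Fin n → ℝ) {k l : Fin n → ℕ}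
    (hk : Function.Injective k) (hl : Function.Injective l) :
    topVal (∑ i, a i • Finsupp.single (k i) (1 : ℝ)) =
      topVal (∑ i, a i • Finsupp.single (l i) (1 : ℝ)) :=
  eq_of_forall_ge_iff fun c => by
    rw [topVal_sum_single_le_iff a hk, topVal_sum_single_le_iff a hl]

lemma dNorm_sum_single_congr {n : ℕ} (a : Fin n → ℝ) {k l : Fin n → ℕ}
    (hk : Function.Injective k) (hl : Function.Injective l) :
    dNorm (∑ i, a i • Finsupp.single (k i) (1 : ℝ)) =
      dNorm (∑ i, a i • Finsupp.single (l i) (1 : ℝ)) := by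
  have hneg (k : Fin n → ℕ) : -(∑ i, a i • Finsupp.single (k i) (1 : ℝ)) =
      ∑ i, (-a i) • Finsupp.single (k i) (1 : ℝ) := by
    simp only [neg_smul, Finset.sum_neg_distrib]
  rw [dNorm_eq, dNorm_eq, hneg, hneg, topVal_sum_single_congr a hk hl,
    topVal_sum_single_congr (fun i => -a i) hk hl]

/-- For the space given by the norm `‖a‖ = sup_{i<j} |a i - a j|` on finitely
supported sequences (with unit vectors `(e_i)`):
(1) every spreading model of every normalized block basis of `(e_i)` satisfies
`‖s 0 + s 1‖ = 1`; (2) the basis `(e_i)` is `1`-spreading (it is its own spreading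
model); but (3) `(e_i)` is not `1`-equivalent to the unit vector basis of `c₀`. -/
theorem stmt8 :
    (∀ y : ℕ → (ℕ →₀ ℝ), IsBlockSeq y → (∀ n, dNorm (y n) = 1) →
      ∀ (S : Type) [NormedAddCommGroup S] [NormedSpace ℝ S] [CompleteSpace S]
        (s : ℕ → S), IsSpreadingModelWith dNorm y s → ‖s 0 + s 1‖ = 1) ∧
    (∀ (n : ℕ) (a : Fin n → ℝ) (k : Fin n → ℕ), StrictMono k →
      dNorm (∑ i, a i • Finsupp.single (k i) (1 : ℝ)) =
        dNorm (∑ i, a i • Finsupp.single i.val (1 : ℝ))) ∧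
    ¬ (∀ x : ℕ →₀ ℝ, dNorm x = ⨆ i, |x i|) := by
  refine ⟨?_, ?_, ?_⟩
  · intro y hy hnorm S _ _ _ s ⟨_, ε, _, _, hε, hs⟩
    have hM : ∀ n, topVal (y n) ∈ Set.Icc (0 : ℝ) 1 := fun n => by
      have h1 := hnorm n
      rw [dNorm_eq] at h1
      exact ⟨topVal_nonneg _, by linarith [topVal_nonneg (-y n)]⟩
    refine eq_of_forall_dist_le fun δ hδ => ?_
    obtain ⟨n, hn⟩ := ((Filter.tendsto_add_atTop_iff_nat 2).2 hε |>.eventually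
      (gt_mem_nhds (half_pos hδ))).exists
    obtain ⟨i, j, hi, hij, hclose⟩ := exists_close_pair hM (n + 2) (half_pos hδ)
    have h1 := spreading_pair hs n i j hi hij
    rw [dNorm_add (hy.disjoint hij) (hnorm i) (hnorm j), abs_lt] at h1
    have h2 := abs_nonneg (topVal (y i) - topVal (y j))
    rw [Real.dist_eq, abs_le]
    constructor <;> linarith [h1.1, h1.2]
  · intro n a k hk
    exact dNorm_sum_single_congr a hk.injective Fin.val_injective
  · intro h
    have h1 := sub_le_dNorm (Finsupp.single 0 1 - Finsupp.single 1 1) 0 1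
    rw [h] at h1
    have h2 : (⨆ i, |(Finsupp.single 0 1 - Finsupp.single 1 1 : ℕ →₀ ℝ) i|) ≤ 1 := by
      refine ciSup_le fun i => ?_
      rcases i with _ | _ | i <;> simp
    have h3 := h1.trans h2
    norm_num [Finsupp.single_apply] at h3
end
end

section
/- Let (e_i) be a normalized basic sequence in a Banach space having a spreading model (s_i) (in a Banach space S) which is K-equivalent to the unit vector basis of ℓ₁, i.e. (1/K)·Σ_i |a_i| ≤ ‖Σ_i a_i s_i‖_S ≤ Σ_i |a_i| for all finitely supported scalars. Suppose (x_i) is a normalized block basis of (s_i) such that lim_i ‖x_i‖_{ℓ₁} = K and (x_i) is Cauchy in distribution, i.e. for every ε > 0 there exists n₀ such that d(x_n, x_m) < ε whenever n, m ≥ n₀. Then there exists a block basis (y_i) of (e_i) having a spreading model 1-equivalent to the unit vector basis of ℓ₁ (i.e. a spreading model (t_i) with ‖Σ_i a_i t_i‖ = Σ_i |a_i| for all scalars). -/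
/-!
Why the theorem holds. Since `K` is the largest possible `ℓ₁` norm of a vector of norm `1` in
the span of `(s_i)`, the lower `ℓ₁` estimate forces any combination of far out `x_j` to have norm
almost `∑ |a_j|`. So `(x_j)` is already asymptotically isometric to the basis of `ℓ₁`, and the
task is to copy it into the span of `(e_i)`, where the spreading model only controls vectors
whose number of coordinates is bounded in terms of the minimum of their support.

The Cauchy condition removes this obstacle (`exists_decomposition`): for each `δ` there is a
bound `L` such that every late `x_m` is `u + v` with `u` supported on at most `L` coordinates and
`‖v‖_{ℓ₁} ≤ δ`. Indeed, the coordinates of `x_m` that a nearly optimal pair of spreads does not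
match with the support of a fixed `x_N` contribute to `ℓ₁` at most the norm of the difference of
the spreads times `K`.

The block `y_j` is the translate by `p j` of the coefficients of `x_{m j}`, with `m` and `p`
growing fast. Translating far enough makes `‖y_j‖` close to `1` (`norm_shift`), which gives the
upper estimate. For `n ≤ k_1 < ⋯ < k_n`, the vectors `y_{k_i}` are replaced by their parts with at
most `L n` coordinates; the combination has at most `n * L n` coordinates, all supported beyond
`M n ≥ n * L n`, so that `lower_estimate` gives `∑ |a_i|` up to an error `O(1 / n)`.
-/


noncomputable section

/-- The vector `∑ i, c i • s i` of a finitely supported coefficient sequence `c`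
with respect to the sequence `s`. -/
def toVec {S : Type*} [NormedAddCommGroup S] [NormedSpace ℝ S] (s : ℕ → S)
    (c : ℕ →₀ ℝ) : S :=
  c.sum fun i r => r • s i

/-- `ℓ₁` norm of the coefficients. -/
def l1Norm (c : ℕ →₀ ℝ) : ℝ := c.sum fun _ r => |r|

/-- Distance in distribution (w.r.t. the sequence `s`) between the vectors with
coefficient sequences `c` and `c'`:  the infimum of `‖x̃ - ỹ‖` over all spreads
`x̃` of `x` and `ỹ` of `y` (a spread is obtained by pushing the coefficients
forward along a strictly increasing map). -/
def distDistrib {S : Type*} [NormedAddCommGroup S] [NormedSpace ℝ S] (s : ℕ → S)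
    (c c' : ℕ →₀ ℝ) : ℝ :=
  sInf {r : ℝ | ∃ (f g : ℕ → ℕ) (hf : StrictMono f) (hg : StrictMono g),
    r = ‖toVec s (Finsupp.embDomain ⟨f, hf.injective⟩ c) -
          toVec s (Finsupp.embDomain ⟨g, hg.injective⟩ c')‖}

/-- A spreading model `1`-equivalent to the unit vector basis of `ℓ₁`. -/
def HasL1SpreadingModel {X : Type*} [NormedAddCommGroup X] [NormedSpace ℝ X]
    (x : ℕ → X) : Prop :=
  ∃ (S : Type) (_ : NormedAddCommGroup S), ∃ (_ : NormedSpace ℝ S) (_ : CompleteSpace S),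
    ∃ t : ℕ → S, IsSpreadingModel x t ∧
      ∀ (n : ℕ) (a : Fin n → ℝ), ‖∑ i, a i • t i‖ = ∑ i, |a i|

/-! ### Coefficient sequences and their vectors -/

lemma toVec_eq {S : Type*} [NormedAddCommGroup S] [NormedSpace ℝ S] (s : ℕ → S) (d : ℕ →₀ ℝ) :
    toVec s d = Finsupp.linearCombination ℝ s d := rfl

lemma toVec_of_subset {S : Type*} [NormedAddCommGroup S] [NormedSpace ℝ S] (s : ℕ → S)
    (d : ℕ →₀ ℝ) {T : Finset ℕ} (h : d.support ⊆ T) : toVec s d = ∑ i ∈ T, d i • s i :=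
  Finsupp.sum_of_support_subset _ h _ (by simp)

lemma l1Norm_of_subset (d : ℕ →₀ ℝ) {T : Finset ℕ} (h : d.support ⊆ T) :
    l1Norm d = ∑ i ∈ T, |d i| :=
  Finsupp.sum_of_support_subset _ h _ (by simp)

lemma l1Norm_nonneg (d : ℕ →₀ ℝ) : 0 ≤ l1Norm d :=
  Finset.sum_nonneg fun _ _ => abs_nonneg _

lemma l1Norm_add_le (u v : ℕ →₀ ℝ) : l1Norm (u + v) ≤ l1Norm u + l1Norm v := by
  rw [l1Norm_of_subset (u + v) Finsupp.support_add,
    l1Norm_of_subset u Finset.subset_union_left, l1Norm_of_subset v Finset.subset_union_right,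
    ← Finset.sum_add_distrib]
  exact Finset.sum_le_sum fun i _ => abs_add_le _ _

lemma sum_abs_le_l1Norm (d : ℕ →₀ ℝ) (T : Finset ℕ) : ∑ i ∈ T, |d i| ≤ l1Norm d := by
  rw [l1Norm_of_subset d (Finset.subset_union_left (s₂ := T))]
  exact Finset.sum_le_sum_of_subset_of_nonneg Finset.subset_union_right
    fun _ _ _ => abs_nonneg _

lemma abs_le_l1Norm (d : ℕ →₀ ℝ) (i : ℕ) : |d i| ≤ l1Norm d := by
  simpa using sum_abs_le_l1Norm d {i}

lemma l1Norm_embDomain (f : ℕ ↪ ℕ) (d : ℕ →₀ ℝ) : l1Norm (Finsupp.embDomain f d) = l1Norm d :=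
  Finsupp.sum_embDomain

lemma norm_toVec_le {X : Type*} [NormedAddCommGroup X] [NormedSpace ℝ X]
    (e : ℕ → X) (hnorm : ∀ i, ‖e i‖ = 1) (d : ℕ →₀ ℝ) : ‖toVec e d‖ ≤ l1Norm d := by
  refine (norm_sum_le _ _).trans (Finset.sum_le_sum fun i _ => ?_)
  simp [norm_smul, hnorm]

lemma support_subset_range_sup (d : ℕ →₀ ℝ) :
    d.support ⊆ Finset.range (d.support.sup id + 1) := by
  intro i hi
  have := Finset.le_sup (f := id) hi
  simp only [id] at this
  exact Finset.mem_range.2 (by omega)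

lemma l1Norm_le_mul_norm {S : Type*} [NormedAddCommGroup S] [NormedSpace ℝ S] (s : ℕ → S)
    (K : ℝ) (hK : 1 ≤ K)
    (hKeq : ∀ (n : ℕ) (a : Fin n → ℝ), (1 / K) * ∑ i, |a i| ≤ ‖∑ i, a i • s i‖)
    (d : ℕ →₀ ℝ) : l1Norm d ≤ K * ‖toVec s d‖ := by
  have h := support_subset_range_sup d
  have h1 := hKeq (d.support.sup id + 1) (fun i => d i)
  rw [Fin.sum_univ_eq_sum_range (fun i => |d i|), Fin.sum_univ_eq_sum_range (fun i => d i • s i),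
    ← l1Norm_of_subset d h, ← toVec_of_subset s d h] at h1
  rw [one_div, inv_mul_le_iff₀ (by linarith)] at h1
  exact h1

/-- The `ℓ₁` norm is additive over disjointly supported vectors, and each nonzero coordinate of
their combination comes from a single one of them. -/
lemma l1Norm_sum_disjoint {n : ℕ} (a : Fin n → ℝ) (u : Fin n → ℕ →₀ ℝ)
    (hd : ∀ i j, i ≠ j → Disjoint (u i).support (u j).support) :
    l1Norm (∑ i, a i • u i) = ∑ i, |a i| * l1Norm (u i) ∧
    (∀ t, (∑ i, a i • u i) t = 0 ∨ ∃ i, t ∈ (u i).support ∧ (∑ i, a i • u i) t = a i * u i t) := by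
  have key : ∀ i, ∀ t ∈ (u i).support, (∑ i, a i • u i) t = a i * u i t := by
    intro i t ht
    rw [Finsupp.finsetSum_apply, Finset.sum_eq_single i]
    · simp
    · intro j _ hj
      have : t ∉ (u j).support := Finset.disjoint_left.1 (hd i j hj.symm) ht
      simp [Finsupp.notMem_support_iff.1 this]
    · simp
  have out : ∀ t, (∀ i, t ∉ (u i).support) → (∑ i, a i • u i) t = 0 := by
    intro t ht
    rw [Finsupp.finsetSum_apply]
    exact Finset.sum_eq_zero fun i _ => by simp [Finsupp.notMem_support_iff.1 (ht i)]
  constructor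
  · have hsub : (∑ i, a i • u i).support ⊆ Finset.univ.biUnion fun i => (u i).support := by
      intro t ht
      by_contra hc
      exact Finsupp.mem_support_iff.1 ht (out t (by simpa using hc))
    rw [l1Norm_of_subset _ hsub, Finset.sum_biUnion (fun i _ j _ h => hd i j h)]
    refine Finset.sum_congr rfl fun i _ => ?_
    rw [l1Norm, Finsupp.sum, Finset.mul_sum]
    exact Finset.sum_congr rfl fun t ht => by rw [key i t ht, abs_mul]
  · intro t
    by_cases h : ∃ i, t ∈ (u i).support
    · obtain ⟨i, hi⟩ := h
      exact Or.inr ⟨i, hi, key i t hi⟩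
    · exact Or.inl (out t (by simpa using h))

/-! ### Transfer between the basic sequence and its spreading model -/

/-- A vector of `e` with at most `M` coordinates, all indexed beyond `M` and bounded
by `K`, inherits the lower `ℓ₁` estimate of the spreading model up to `K * ε M`. -/
lemma lower_estimate {X : Type*} [NormedAddCommGroup X] [NormedSpace ℝ X]
    {S : Type*} [NormedAddCommGroup S] [NormedSpace ℝ S] (e : ℕ → X) (s : ℕ → S)
    (K : ℝ) (hK : 1 ≤ K)
    (hKeq : ∀ (n : ℕ) (a : Fin n → ℝ), (1 / K) * ∑ i, |a i| ≤ ‖∑ i, a i • s i‖)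
    (ε : ℕ → ℝ)
    (hε : ∀ (n : ℕ) (a : Fin n → ℝ), (∀ i, |a i| ≤ 1) →
      ∀ k : Fin n → ℕ, StrictMono k → (∀ i, n ≤ k i) →
        |‖∑ i, a i • e (k i)‖ - ‖∑ i, a i • s i‖| < ε n)
    (M : ℕ) (d : ℕ →₀ ℝ) (hcard : d.support.card ≤ M) (hmin : ∀ i ∈ d.support, M ≤ i)
    (hb : ∀ i, |d i| ≤ K) :
    (1 / K) * l1Norm d - K * ε M ≤ ‖toVec e d‖ := by
  have hK0 : 0 < K := by linarith
  -- The support is enlarged to exactly `M` indices, since the estimate for `M` terms is used.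
  obtain ⟨F, hF1, hF2, hF3⟩ := Finset.exists_subsuperset_card_eq
    (Finset.subset_union_left (s₁ := d.support) (s₂ := Finset.Ico M (M + M))) hcard
    (by
      calc M = (Finset.Ico M (M + M)).card := by simp
        _ ≤ _ := Finset.card_le_card Finset.subset_union_right)
  have hFM : ∀ i ∈ F, M ≤ i := by
    intro i hi
    rcases Finset.mem_union.1 (hF2 hi) with h | h
    · exact hmin i h
    · exact (Finset.mem_Ico.1 h).1
  set k := F.orderEmbOfFin hF3 with hk
  have h1 := hε M (fun i => d (k i) / K)
    (fun i => by rw [abs_div, abs_of_pos hK0, div_le_one hK0]; exact hb _)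
    k k.strictMono (fun i => hFM _ (Finset.orderEmbOfFin_mem F hF3 i))
  have h2 := hKeq M (fun i => d (k i) / K)
  have e1 : ∑ i, |d (k i) / K| = l1Norm d / K := by
    rw [l1Norm_of_subset d hF1, ← Finset.map_orderEmbOfFin_univ F hF3, Finset.sum_map,
      Finset.sum_div]
    exact Finset.sum_congr rfl fun i _ => by rw [abs_div, abs_of_pos hK0]; rfl
  have e2 : ∑ i, (d (k i) / K) • e (k i) = K⁻¹ • toVec e d := by
    rw [toVec_of_subset e d hF1, ← Finset.map_orderEmbOfFin_univ F hF3, Finset.sum_map,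
      Finset.smul_sum]
    exact Finset.sum_congr rfl fun i _ => by rw [smul_smul, div_eq_inv_mul]; rfl
  rw [e1] at h2
  rw [e2, norm_smul, Real.norm_of_nonneg (by positivity)] at h1
  have h3 := (abs_lt.1 h1).1
  have h4 : 1 / K * (l1Norm d / K) - ε M ≤ K⁻¹ * ‖toVec e d‖ := by linarith
  have h5 := mul_le_mul_of_nonneg_left h4 hK0.le
  rw [← mul_assoc, mul_inv_cancel₀ hK0.ne', one_mul] at h5
  calc _ = K * (1 / K * (l1Norm d / K) - ε M) := by field_simp
    _ ≤ _ := h5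

/-- Far out translates of a fixed vector along `e` have nearly the norm of that vector in the
spreading model. -/
lemma norm_shift {X : Type*} [NormedAddCommGroup X] [NormedSpace ℝ X]
    {S : Type*} [NormedAddCommGroup S] [NormedSpace ℝ S] (e : ℕ → X) (s : ℕ → S)
    (K : ℝ) (hK : 1 ≤ K) (ε : ℕ → ℝ) (hε0 : Filter.Tendsto ε Filter.atTop (nhds 0))
    (hε : ∀ (n : ℕ) (a : Fin n → ℝ), (∀ i, |a i| ≤ 1) →
      ∀ k : Fin n → ℕ, StrictMono k → (∀ i, n ≤ k i) →
        |‖∑ i, a i • e (k i)‖ - ‖∑ i, a i • s i‖| < ε n)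
    (d : ℕ →₀ ℝ) (hb : ∀ i, |d i| ≤ K) (η : ℝ) (hη : 0 < η) :
    ∃ Q : ℕ, ∀ p, Q ≤ p →
      |‖toVec e (Finsupp.embDomain (addLeftEmbedding p) d)‖ - ‖toVec s d‖| < η := by
  have hK0 : 0 < K := by linarith
  obtain ⟨N, hN1, hN2⟩ := ((hε0.eventually_lt_const (show 0 < η / K by positivity)).and
    (Filter.eventually_ge_atTop (d.support.sup id + 1))).exists
  refine ⟨N, fun p hp => ?_⟩
  have hsub : d.support ⊆ Finset.range N :=
    (support_subset_range_sup d).trans (Finset.range_mono hN2)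
  have h1 := hε N (fun i => d i / K)
    (fun i => by rw [abs_div, abs_of_pos hK0, div_le_one hK0]; exact hb _)
    (fun i => p + i) (fun i j h => by simpa using h) (fun i => by omega)
  have e1 : ∑ i : Fin N, (d i / K) • e (p + i) =
      K⁻¹ • toVec e (Finsupp.embDomain (addLeftEmbedding p) d) := by
    rw [toVec_eq, Finsupp.linearCombination_embDomain, ← toVec_eq, toVec_of_subset _ d hsub,
      Fin.sum_univ_eq_sum_range (fun i => (d i / K) • e (p + i)), Finset.smul_sum]
    exact Finset.sum_congr rfl fun i _ => by rw [smul_smul, div_eq_inv_mul]; rfl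
  have e2 : ∑ i : Fin N, (d i / K) • s i = K⁻¹ • toVec s d := by
    rw [toVec_of_subset _ d hsub,
      Fin.sum_univ_eq_sum_range (fun i => (d i / K) • s i), Finset.smul_sum]
    exact Finset.sum_congr rfl fun i _ => by rw [smul_smul, div_eq_inv_mul]
  rw [e1, e2, norm_smul, norm_smul, ← mul_sub, abs_mul, norm_inv, abs_inv, abs_norm,
    Real.norm_of_nonneg hK0.le, inv_mul_lt_iff₀ hK0] at h1
  refine h1.trans ?_
  rwa [lt_div_iff₀' hK0] at hN1

/-! ### Uniform essential support -/

/-- A sequence that is Cauchy in distribution is tight: up to a small `ℓ₁` error, all its late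
terms live on a bounded number of coordinates, namely those matched with the support of one
fixed term. -/
lemma exists_decomposition {S : Type*} [NormedAddCommGroup S] [NormedSpace ℝ S] (s : ℕ → S)
    (K : ℝ) (hK : 1 ≤ K)
    (hKeq : ∀ (n : ℕ) (a : Fin n → ℝ), (1 / K) * ∑ i, |a i| ≤ ‖∑ i, a i • s i‖)
    (c : ℕ → (ℕ →₀ ℝ))
    (hcauchy : ∀ ε : ℝ, 0 < ε → ∃ n₀ : ℕ, ∀ n m : ℕ, n₀ ≤ n → n₀ ≤ m →
      distDistrib s (c n) (c m) < ε) (δ : ℝ) (hδ : 0 < δ) :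
    ∃ N L : ℕ, ∀ m, N ≤ m → ∃ u v : ℕ →₀ ℝ, c m = u + v ∧ u.support ⊆ (c m).support ∧
      u.support.card ≤ L ∧ l1Norm v ≤ δ ∧ l1Norm u ≤ l1Norm (c m) := by
  have hK0 : 0 < K := by linarith
  obtain ⟨N, hN⟩ := hcauchy (δ / K) (by positivity)
  refine ⟨N, (c N).support.card, fun m hm => ?_⟩
  have h := hN N m le_rfl hm
  unfold distDistrib at h
  obtain ⟨r, ⟨f, g, hf, hg, rfl⟩, hr⟩ := exists_lt_of_csInf_lt
    (by exact ⟨_, id, id, strictMono_id, strictMono_id, rfl⟩) h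
  set P := Finsupp.embDomain ⟨f, hf.injective⟩ (c N) with hP
  set R := Finsupp.embDomain ⟨g, hg.injective⟩ (c m) with hR
  have hD : l1Norm (P - R) ≤ δ := by
    refine (l1Norm_le_mul_norm s K hK hKeq _).trans ?_
    rw [toVec_eq, map_sub, ← toVec_eq, ← toVec_eq]
    rw [lt_div_iff₀' hK0] at hr
    exact hr.le
  classical
  refine ⟨(c m).filter (fun i => g i ∈ P.support), (c m).filter (fun i => ¬ g i ∈ P.support),
    (Finsupp.filter_add_filter_not _ _).symm, ?_, ?_, ?_, ?_⟩
  · rw [Finsupp.support_filter]; exact Finset.filter_subset _ _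
  · calc _ ≤ P.support.card := by
          refine Finset.card_le_card_of_injOn g ?_ hg.injective.injOn
          intro i hi
          rw [Finsupp.support_filter, Finset.mem_coe, Finset.mem_filter] at hi
          exact hi.2
      _ = _ := by rw [hP, Finsupp.support_embDomain, Finset.card_map]
  · refine le_trans ?_ ((sum_abs_le_l1Norm (P - R)
      (((c m).filter (fun i => ¬ g i ∈ P.support)).support.map ⟨g, hg.injective⟩)).trans hD)
    rw [Finset.sum_map, l1Norm, Finsupp.sum]
    refine le_of_eq (Finset.sum_congr rfl fun i hi => ?_)
    rw [Finsupp.support_filter, Finset.mem_filter] at hi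
    rw [Finsupp.filter_apply_pos (fun i => ¬ g i ∈ P.support) _ hi.2, Finsupp.sub_apply, Function.Embedding.coeFn_mk,
      Finsupp.notMem_support_iff.1 hi.2, zero_sub, abs_neg, hR]
    congr 1
    exact (Finsupp.embDomain_apply_self ⟨g, hg.injective⟩ (c m) i).symm
  · refine le_trans (le_of_eq ?_) (sum_abs_le_l1Norm (c m)
      ((c m).filter (fun i => g i ∈ P.support)).support)
    refine Finset.sum_congr rfl fun i hi => ?_
    rw [Finsupp.support_filter, Finset.mem_filter] at hi
    rw [Finsupp.filter_apply_pos (fun i => g i ∈ P.support) _ hi.2]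

/-! ### The criterion for an isometric `ℓ₁` spreading model -/

/-- The spreading model is the unit vector basis of `ℓ₁`; the strict bound required of it is
`ε n = 5 / (n + 1)`. -/
lemma hasL1SpreadingModel_of_estimate {X : Type*} [NormedAddCommGroup X] [NormedSpace ℝ X]
    (y : ℕ → X)
    (hy : ∀ (n : ℕ) (a : Fin n → ℝ), (∀ i, |a i| ≤ 1) →
      ∀ k : Fin n → ℕ, StrictMono k → (∀ i, n ≤ k i) →
        |‖∑ i, a i • y (k i)‖ - (∑ i, |a i|)| ≤ 4 / ((n : ℝ) + 1)) :
    HasL1SpreadingModel y := by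
  let t : ℕ → lp (fun _ : ℕ => ℝ) 1 := fun i => lp.single 1 i (1 : ℝ)
  have ht : ∀ (F : Finset ℕ) (a : ℕ → ℝ), ‖∑ i ∈ F, a i • t i‖ = ∑ i ∈ F, |a i| := by
    intro F a
    have h := lp.norm_sum_single (E := fun _ : ℕ => ℝ) (p := 1) (by simp) a F
    simp only [ENNReal.toReal_one, Real.rpow_one, Real.norm_eq_abs] at h
    rw [← h]
    congr 1
    refine Finset.sum_congr rfl fun i _ => ?_
    simp only [t]
    rw [← lp.single_smul]
    simp
  have ht' : ∀ (n : ℕ) (a : Fin n → ℝ), ‖∑ i, a i • t i‖ = ∑ i, |a i| := by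
    intro n a
    have h := ht (Finset.range n) (fun i => if h : i < n then a ⟨i, h⟩ else 0)
    rw [← Fin.sum_univ_eq_sum_range (fun i => (if h : i < n then a ⟨i, h⟩ else 0) • t i),
      ← Fin.sum_univ_eq_sum_range (fun i => |if h : i < n then a ⟨i, h⟩ else 0|)] at h
    simpa using h
  refine ⟨lp (fun _ : ℕ => ℝ) 1, inferInstance, inferInstance, inferInstance, t,
    ⟨⟨1, fun m n hmn a => ?_⟩, fun n => 5 / ((n : ℝ) + 1), fun n => by positivity, ?_, ?_, ?_⟩, ht'⟩
  · rw [ht, ht, one_mul]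
    exact Finset.sum_le_sum_of_subset_of_nonneg (Finset.range_mono hmn)
      fun _ _ _ => abs_nonneg _
  · intro m n hmn
    simp only
    gcongr
  · exact Filter.Tendsto.div_atTop tendsto_const_nhds
      (Filter.tendsto_atTop_add_const_right _ _ tendsto_natCast_atTop_atTop)
  · intro n a ha k hk hkn
    rw [ht']
    exact (hy n a ha k hk hkn).trans_lt
      (div_lt_div_of_pos_right (by norm_num) (by positivity))

/-- A sequence of coefficient sequences with successive supports gives a block basis. -/
lemma isBlockBasis_of_successive {X : Type*} [NormedAddCommGroup X] [NormedSpace ℝ X]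
    (e : ℕ → X) (w : ℕ → ℕ →₀ ℝ)
    (hw : ∀ i j, i < j → ∀ p ∈ (w i).support, ∀ q ∈ (w j).support, p < q)
    (hne : ∀ j, toVec e (w j) ≠ 0) : IsBlockBasis e fun j => toVec e (w j) := by
  classical
  refine ⟨fun j => (w j).support,
    fun t => if h : ∃ j, t ∈ (w j).support then w h.choose t else 0, ?_, ?_, ?_, hne⟩
  · intro j
    rw [Finsupp.support_nonempty_iff]
    intro h
    exact hne j (by simp [h, toVec_eq])
  · exact fun j => hw j (j + 1) (Nat.lt_succ_self j)
  · intro j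
    refine Finset.sum_congr rfl fun t ht => ?_
    have h : ∃ j, t ∈ (w j).support := ⟨j, ht⟩
    have hj : h.choose = j := by
      rcases lt_trichotomy h.choose j with hl | hl | hl
      · exact absurd (hw _ _ hl t h.choose_spec t ht) (lt_irrefl _)
      · exact hl
      · exact absurd (hw _ _ hl t ht t h.choose_spec) (lt_irrefl _)
    simp only [dif_pos h, hj]

/-- Let `(e_i)` be a normalized basic sequence in a Banach space `X` with a spreading
model `(s_i)` (in a Banach space `S`) which is `K`-equivalent to the unit vector basis
of `ℓ₁`.  Suppose `(x_j)` (given through its coefficient sequences `c j`, so that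
`x_j = toVec s (c j)`) is a normalized block basis of `(s_i)` with
`lim_j ‖x_j‖_{ℓ₁} = K` which is Cauchy in distribution.  Then some block basis of
`(e_i)` has a spreading model `1`-equivalent to the unit vector basis of `ℓ₁`. -/
theorem stmt9 {X : Type*} [NormedAddCommGroup X] [NormedSpace ℝ X] [CompleteSpace X]
    (e : ℕ → X) (hnorm : ∀ i, ‖e i‖ = 1) (hbasic : IsBasicSeq e)
    (S : Type) [NormedAddCommGroup S] [NormedSpace ℝ S] [CompleteSpace S]
    (s : ℕ → S) (hs : IsSpreadingModel e s)
    (K : ℝ) (hK : 1 ≤ K)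
    (hKeq : ∀ (n : ℕ) (a : Fin n → ℝ),
      (1 / K) * ∑ i, |a i| ≤ ‖∑ i, a i • s i‖ ∧ ‖∑ i, a i • s i‖ ≤ ∑ i, |a i|)
    (c : ℕ → (ℕ →₀ ℝ))
    (hcne : ∀ j, c j ≠ 0)
    (hcblock : ∀ j, ∀ p ∈ (c j).support, ∀ q ∈ (c (j + 1)).support, p < q)
    (hcnorm : ∀ j, ‖toVec s (c j)‖ = 1)
    (hl1 : Filter.Tendsto (fun j => l1Norm (c j)) Filter.atTop (nhds K))
    (hcauchy : ∀ ε : ℝ, 0 < ε → ∃ n₀ : ℕ, ∀ n m : ℕ, n₀ ≤ n → n₀ ≤ m →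
      distDistrib s (c n) (c m) < ε) :
    ∃ y : ℕ → X, IsBlockBasis e y ∧ HasL1SpreadingModel y := by
  have hKlow : ∀ (n : ℕ) (a : Fin n → ℝ), (1 / K) * ∑ i, |a i| ≤ ‖∑ i, a i • s i‖ :=
    fun n a => (hKeq n a).1
  have hK0 : 0 < K := by linarith
  obtain ⟨-, ε, -, -, hε0, hε⟩ := hs
  have hcl1 : ∀ j, l1Norm (c j) ≤ K := fun j => by
    simpa [hcnorm j] using l1Norm_le_mul_norm s K hK hKlow (c j)
  -- The errors `δ n` are summed over `n` terms, hence the quadratic decay.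
  let δ : ℕ → ℝ := fun n => 1 / ((n : ℝ) + 1) ^ 2
  have hδ : ∀ n, 0 < δ n := fun n => by positivity
  have hδanti : Antitone δ := fun m n h => by simp only [δ]; gcongr
  have hδ1 : ∀ n, δ n ≤ 1 := fun n => by simpa [δ] using hδanti (Nat.zero_le n)
  choose N₁ L hL using fun n => exists_decomposition s K hK hKlow c hcauchy (δ n) (hδ n)
  choose N₂ hN₂ using fun n => Filter.eventually_atTop.1
    (hl1.eventually_const_lt (show K - δ n < K by linarith [hδ n]))
  choose M hM using fun n : ℕ => (((hε0.const_mul K).eventually_lt_const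
    (show K * 0 < 1 / ((n : ℝ) + 1) by rw [mul_zero]; positivity)).and
    (Filter.eventually_ge_atTop (n * L n))).exists
  -- The term `c (m j)` satisfies the estimates of every index `n ≤ j`.
  let m : ℕ → ℕ := fun j => ∑ n ∈ Finset.range (j + 1), (N₁ n + N₂ n)
  have hm : ∀ n j, n ≤ j → N₁ n + N₂ n ≤ m j := fun n j h =>
    Finset.single_le_sum (f := fun n => N₁ n + N₂ n) (fun _ _ => Nat.zero_le _)
      (Finset.mem_range.2 (by omega))
  choose Q hQ using fun j => norm_shift e s K hK ε hε0 hε (c (m j))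
    (fun i => (abs_le_l1Norm _ i).trans (hcl1 _)) (δ j) (hδ j)
  let p : ℕ → ℕ := fun j => ∑ i ∈ Finset.range (j + 1), (Q i + M i) +
    ∑ i ∈ Finset.range j, ((c (m i)).support.sup id + 1)
  have hp : ∀ n j, n ≤ j → Q n + M n ≤ p j := fun n j h =>
    (Finset.single_le_sum (f := fun n => Q n + M n) (fun _ _ => Nat.zero_le _)
      (Finset.mem_range.2 (show n < j + 1 by omega))).trans (Nat.le_add_right _ _)
  have hpsucc : ∀ i j, i < j → p i + ((c (m i)).support.sup id + 1) ≤ p j := by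
    intro i j hij
    have h1 : ∑ i ∈ Finset.range (i + 1), (Q i + M i) ≤ ∑ i ∈ Finset.range (j + 1), (Q i + M i) :=
      Finset.sum_le_sum_of_subset (Finset.range_mono (by omega))
    have h2 : ∑ i ∈ Finset.range (i + 1), ((c (m i)).support.sup id + 1) ≤
        ∑ i ∈ Finset.range j, ((c (m i)).support.sup id + 1) :=
      Finset.sum_le_sum_of_subset (Finset.range_mono (by omega))
    rw [Finset.sum_range_succ] at h2
    simp only [p]
    omega
  let w : ℕ → ℕ →₀ ℝ := fun j => Finsupp.embDomain (addLeftEmbedding (p j)) (c (m j))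
  have hwsupp : ∀ j, ∀ t ∈ (w j).support,
      p j ≤ t ∧ t < p j + ((c (m j)).support.sup id + 1) := by
    intro j t ht
    simp only [w, Finsupp.support_embDomain, Finset.mem_map, addLeftEmbedding_apply] at ht
    obtain ⟨i, hi, rfl⟩ := ht
    have := Finset.mem_range.1 (support_subset_range_sup _ hi)
    omega
  have hwsucc : ∀ i j, i < j → ∀ a ∈ (w i).support, ∀ b ∈ (w j).support, a < b := by
    intro i j hij a ha b hb
    have := hwsupp i a ha
    have := hwsupp j b hb
    have := hpsucc i j hij
    omega
  have hwnorm : ∀ j, |‖toVec e (w j)‖ - 1| < δ j := by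
    intro j
    have h := hQ j (p j) ((Nat.le_add_right _ _).trans (hp j j le_rfl))
    rwa [hcnorm] at h
  refine ⟨fun j => toVec e (w j), isBlockBasis_of_successive e w hwsucc ?_,
    hasL1SpreadingModel_of_estimate _ ?_⟩
  · intro j h0
    have h := (abs_lt.1 (hwnorm j)).1
    rw [h0, norm_zero] at h
    linarith [hδ1 j]
  intro n a ha k hk hkn
  have hdec : ∀ i, ∃ u v : ℕ →₀ ℝ, w (k i) = u + v ∧ u.support ⊆ (w (k i)).support ∧
      u.support.card ≤ L n ∧ l1Norm v ≤ δ n ∧ l1Norm u ≤ K := by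
    intro i
    obtain ⟨u, v, h1, h2, h3, h4, h5⟩ := hL n (m (k i)) (by have := hm n (k i) (hkn i); omega)
    refine ⟨Finsupp.embDomain (addLeftEmbedding (p (k i))) u,
      Finsupp.embDomain (addLeftEmbedding (p (k i))) v, ?_, ?_, ?_, ?_, ?_⟩
    · rw [← Finsupp.embDomain_add, ← h1]
    · simp only [w, Finsupp.support_embDomain]
      exact Finset.map_subset_map.2 h2
    · rwa [Finsupp.support_embDomain, Finset.card_map]
    · rwa [l1Norm_embDomain]
    · rw [l1Norm_embDomain]
      exact h5.trans (hcl1 _)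
  choose u v huv husub hucard hv huK using hdec
  have hwl1 : ∀ i, K - δ n ≤ l1Norm (w (k i)) := by
    intro i
    simp only [w, l1Norm_embDomain]
    exact (hN₂ n (m (k i)) (by have := hm n (k i) (hkn i); omega)).le
  have hul1 : ∀ i, K - 2 * δ n ≤ l1Norm (u i) := by
    intro i
    have h := l1Norm_add_le (u i) (v i)
    rw [← huv i] at h
    linarith [hwl1 i, hv i]
  have hubd : ∀ i, ∀ t, |u i t| ≤ K :=
    fun i t => (abs_le_l1Norm _ t).trans (huK i)
  have hdisj : ∀ i j, i ≠ j → Disjoint (u i).support (u j).support := by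
    intro i j hij
    rw [Finset.disjoint_left]
    intro t hi hj
    rcases lt_or_gt_of_ne hij with h | h
    · exact lt_irrefl _ (hwsucc _ _ (hk h) t (husub i hi) t (husub j hj))
    · exact lt_irrefl _ (hwsucc _ _ (hk h) t (husub j hj) t (husub i hi))
  obtain ⟨hU1, hU2⟩ := l1Norm_sum_disjoint a u hdisj
  set U := ∑ i, a i • u i with hU
  have hUlow := lower_estimate e s K hK hKlow ε hε (M n) U
    (by
      classical
      have hsub : U.support ⊆ Finset.univ.biUnion fun i => (u i).support := by
        intro t ht
        rcases hU2 t with h | ⟨i, hi, -⟩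
        · exact absurd h (Finsupp.mem_support_iff.1 ht)
        · exact Finset.mem_biUnion.2 ⟨i, Finset.mem_univ _, hi⟩
      refine (Finset.card_le_card hsub).trans (Finset.card_biUnion_le.trans ?_)
      refine (Finset.sum_le_sum fun i _ => hucard i).trans ?_
      simpa using (hM n).2)
    (by
      intro t ht
      rcases hU2 t with h | ⟨i, hi, -⟩
      · exact absurd h (Finsupp.mem_support_iff.1 ht)
      · have := (hwsupp _ t (husub i hi)).1
        have := hp n (k i) (hkn i)
        omega)
    (by
      intro t
      rcases hU2 t with h | ⟨i, -, h⟩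
      · rw [h, abs_zero]; exact hK0.le
      · rw [h, abs_mul]
        exact (mul_le_of_le_one_left (abs_nonneg _) (ha i)).trans (hubd i t))
  have hsum : ∑ i, a i • toVec e (w (k i)) = toVec e U + ∑ i, a i • toVec e (v i) := by
    rw [hU, toVec_eq, map_sum, ← Finset.sum_add_distrib]
    refine Finset.sum_congr rfl fun i _ => ?_
    rw [map_smul, huv i, toVec_eq, map_add, smul_add]
    rfl
  have hV : ‖∑ i, a i • toVec e (v i)‖ ≤ n * δ n := by
    refine (norm_sum_le _ _).trans ((Finset.sum_le_sum (g := fun _ => δ n) fun i _ => ?_).trans ?_)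
    · rw [norm_smul, Real.norm_eq_abs]
      exact (mul_le_of_le_one_left (norm_nonneg _) (ha i)).trans
        ((norm_toVec_le e hnorm _).trans (hv i))
    · simp
  have hA : ∑ i, |a i| ≤ n := by
    simpa using Finset.sum_le_sum (s := Finset.univ) fun i _ => ha i
  have hnδ : n * δ n ≤ 1 / ((n : ℝ) + 1) := by
    simp only [δ]
    rw [mul_one_div, div_le_div_iff₀ (by positivity) (by positivity)]
    nlinarith [(Nat.cast_nonneg n : (0 : ℝ) ≤ n)]
  have hδA : (∑ i, |a i|) * δ n ≤ 1 / ((n : ℝ) + 1) :=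
    (mul_le_mul_of_nonneg_right hA (hδ n).le).trans hnδ
  have hlow1 : ∑ i, |a i| - 2 * ((∑ i, |a i|) * δ n) ≤ 1 / K * l1Norm U := by
    rw [hU1, one_div, ← div_eq_inv_mul, le_div_iff₀ hK0]
    calc _ ≤ (∑ i, |a i|) * (K - 2 * δ n) := by
          have : 0 ≤ (∑ i, |a i|) * δ n :=
            mul_nonneg (Finset.sum_nonneg fun _ _ => abs_nonneg _) (hδ n).le
          nlinarith
      _ = ∑ i, |a i| * (K - 2 * δ n) := Finset.sum_mul _ _ _
      _ ≤ _ := Finset.sum_le_sum fun i _ => mul_le_mul_of_nonneg_left (hul1 i) (abs_nonneg _)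
  rw [show (4 : ℝ) / (n + 1) = 4 * (1 / (n + 1)) by ring, abs_le]
  constructor
  · have h := norm_sub_norm_le (toVec e U) (-∑ i, a i • toVec e (v i))
    rw [sub_neg_eq_add, norm_neg, ← hsum] at h
    have := (hM n).1
    linarith
  · have h : ‖∑ i, a i • toVec e (w (k i))‖ ≤ ∑ i, |a i| * (1 + δ n) := by
      refine (norm_sum_le _ _).trans (Finset.sum_le_sum fun i _ => ?_)
      rw [norm_smul, Real.norm_eq_abs]
      refine mul_le_mul_of_nonneg_left ?_ (abs_nonneg _)
      linarith [(abs_lt.1 (hwnorm (k i))).2, hδanti (hkn i)]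
    rw [← Finset.sum_mul] at h
    have : (0 : ℝ) < 1 / (n + 1) := by positivity
    linarith
end
end
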